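/- arXiv:1607.08058 — 2 statements merged into one kernel-verified Lean document; each statement's English description precedes it below -/
import Mathlib

section
/- Every finite connected string graph has cop number at most 15. -/
/-!
Fifteen cops, in three teams of five, win on every connected string graph.

The plane is first discretised. Finitely many strings are compact, so for a fine square grid two
strings meet exactly if some closed grid square meets both (`exists_fine_grid`), and the squares
meeting one string form a finite connected set in the grid graph (`connSet_cells`). So `G` is
represented by finite connected subsets `S v` of a graph `H` of which only one property of planar
graphs is used: `H` has no `K₃,₃` minor. For the grid this is `noK33_grid`, proved with mod 2 chains
following MacLane: a mod 2 cycle of the grid bounds a set of squares (`exists_bd`), so a `K₃,₃` minor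
would provide a 2-basis of the cycle space of `K₃,₃`, which does not exist (`no_two_basis`).

The robber is confined to a connected territory `C` of points of `H`, that is, `S r ⊆ C`. Let the
level of a point of `C` be its distance from a fixed point `x₀`, where a step moves within a connected
piece of some `S v`. The levels within one `S v` differ by at most one. Along a geodesic sequence of
steps one draws a path of `H`, and five cops standing on the consecutive vertices of the geodesic
close to the level of the robber catch him as soon as he touches this path (`exists_guard`,
`Guard.catch`). A free team can move to these positions while the others keep the robber in `C`
(`advance`).

The neighbours of the territory lie either on a path guarded by one team, or on a cycle which
consists of two arcs guarded by two teams (`PathState`, `CycleState`). In both cases a free team starts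
guarding a new path through `C` between two neighbours of `C`, and the robber is left with a component
`C'` of the rest. In the case of a cycle the new path divides it into a theta graph. By the absence of a
`K₃,₃` minor, `C'` has no neighbour in the interior of one of the three arcs of the theta graph
(`exists_missed_arc`), and the endpoints of the new path are chosen so that the remaining two arcs are
guarded by two teams only (`CycleState.loses`). So the third team is free again, and the territory has
become smaller; the claim follows by induction (`states_lose`).
-/

/-!  The game of cops and robber on a graph.

The cops first choose starting vertices, then the robber chooses a starting vertex;
the players then alternate turns, the cops moving first; each piece either stays or
moves to an adjacent vertex.  A cop strategy chooses, at each cop turn, the new cop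
positions as a function of the full history of robber positions (which, together with
the strategy itself, determines the full history of the play).  The robber, having
full information, is modelled as an arbitrary legal trajectory.  -/

/-- The sequence of cop positions determined by the initial placement `init`, the cop
strategy `F` (a function of the history of robber positions), and the robber trajectory
`rob`; `copSeq init F rob n` is the position of the cops before the robber's `n`-th move,
i.e. the cops' `(n+1)`-st positions respond to the robber positions `rob 0, …, rob n`. -/
def copSeq {V : Type*} {k : ℕ} (init : Fin k → V) (F : List V → Fin k → V)
    (rob : ℕ → V) : ℕ → Fin k → V
  | 0 => init
  | n + 1 => F ((List.range (n + 1)).map rob)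

/-- A robber trajectory is legal if at each turn the robber stays or moves along an edge. -/
def RobberLegal {V : Type*} (G : SimpleGraph V) (rob : ℕ → V) : Prop :=
  ∀ n, rob (n + 1) = rob n ∨ G.Adj (rob n) (rob (n + 1))

/-- A sequence of cop positions is legal if at each turn every cop stays or moves along an edge. -/
def CopsLegal {V : Type*} {k : ℕ} (G : SimpleGraph V) (c : ℕ → Fin k → V) : Prop :=
  ∀ n i, c (n + 1) i = c n i ∨ G.Adj (c n i) (c (n + 1) i)

/-- `k` cops have a winning strategy on `G`: there are initial positions and a legal
strategy capturing every legal robber trajectory in finitely many turns (a cop occupies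
the robber's vertex, either after the cops' move or after the robber's move). -/
def CopWin {V : Type*} (G : SimpleGraph V) (k : ℕ) : Prop :=
  ∃ (init : Fin k → V) (F : List V → Fin k → V),
    ∀ rob : ℕ → V, RobberLegal G rob →
      CopsLegal G (copSeq init F rob) ∧
      ∃ n i, copSeq init F rob n i = rob n ∨ copSeq init F rob (n + 1) i = rob n

/-- The cop number of `G`: the least `k` such that `k` cops have a winning strategy. -/
noncomputable def copNumber {V : Type*} (G : SimpleGraph V) : ℕ :=
  sInf { k | CopWin G k }

/-- A string: the image of a continuous map `[0,1] → ℝ²`. -/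
def IsString (s : Set (ℝ × ℝ)) : Prop :=
  ∃ f : ℝ → ℝ × ℝ, ContinuousOn f (Set.Icc 0 1) ∧ s = f '' Set.Icc 0 1

/-- An outer-string: a string contained in the closed upper half-plane, meeting the
`x`-axis in exactly one point, which is an endpoint of the string. -/
def IsOuterString (s : Set (ℝ × ℝ)) : Prop :=
  ∃ f : ℝ → ℝ × ℝ, ContinuousOn f (Set.Icc 0 1) ∧ s = f '' Set.Icc 0 1 ∧
    (∀ p ∈ s, 0 ≤ p.2) ∧
    ∃ e : ℝ × ℝ, (e = f 0 ∨ e = f 1) ∧ {p : ℝ × ℝ | p ∈ s ∧ p.2 = 0} = {e}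

/-- An interval filament: the graph of a continuous function `f : [a,b] → ℝ` with
`f a = f b = 0` and `f x > 0` on `(a,b)`. -/
def IsIntervalFilament (s : Set (ℝ × ℝ)) : Prop :=
  ∃ (a b : ℝ) (f : ℝ → ℝ), a < b ∧ ContinuousOn f (Set.Icc a b) ∧
    f a = 0 ∧ f b = 0 ∧ (∀ x ∈ Set.Ioo a b, 0 < f x) ∧
    s = (fun x => (x, f x)) '' Set.Icc a b

namespace StringCops

/-! ### The game as a reachability problem -/

/-- One move of a piece: stay or follow an edge. -/
def Step {V : Type*} (G : SimpleGraph V) (u v : V) : Prop := v = u ∨ G.Adj u v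

theorem Step.symm {V : Type*} {G : SimpleGraph V} {u v : V} (h : Step G u v) : Step G v u := by
  rcases h with h | h
  · exact Or.inl h.symm
  · exact Or.inr h.symm

/-- With the cops (at `c`) to move and the robber at `r`, the cops can force a capture within
`n` rounds. -/
def WinIn {V ι : Type*} (G : SimpleGraph V) : ℕ → (ι → V) → V → Prop
  | 0, _, _ => False
  | n + 1, c, r => ∃ d : ι → V, (∀ i, Step G (c i) (d i)) ∧
      ∀ q, Step G r q → (∃ i, d i = r ∨ d i = q) ∨ WinIn G n d q

/-- The robber, to move at `r` against cops at `c`, will be captured. -/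
def RobberLoses {V ι : Type*} (G : SimpleGraph V) (c : ι → V) (r : V) : Prop :=
  ∀ r', Step G r r' → (∃ i, c i = r') ∨ ∃ n, WinIn G n c r'

theorem WinIn.succ {V ι : Type*} {G : SimpleGraph V} {n : ℕ} : ∀ {c : ι → V} {r : V},
    WinIn G n c r → WinIn G (n + 1) c r := by
  induction n with
  | zero => intro c r h; exact h.elim
  | succ n ih =>
    rintro c r ⟨c', h1, h2⟩
    exact ⟨c', h1, fun r' hr' => (h2 r' hr').imp_right ih⟩

theorem WinIn.mono {V ι : Type*} {G : SimpleGraph V} {m n : ℕ} (hmn : m ≤ n) {c : ι → V} {r : V}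
    (h : WinIn G m c r) : WinIn G n c r := by
  induction hmn with
  | refl => exact h
  | step _ ih => exact ih.succ

/-- Since the robber has only finitely many moves, the number of rounds needed is bounded. -/
theorem RobberLoses.win {V ι : Type*} [Finite V] {G : SimpleGraph V} {c c' : ι → V} {r : V}
    (hc : ∀ i, Step G (c i) (c' i)) (h : RobberLoses G c' r) : ∃ n, WinIn G n c r := by
  classical
  cases nonempty_fintype V
  have h' : ∀ r', ∃ n, Step G r r' → (∃ i, c' i = r') ∨ WinIn G n c' r' := by
    intro r'
    by_cases hr : Step G r r'
    · rcases h r' hr with h | ⟨n, h⟩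
      · exact ⟨0, fun _ => Or.inl h⟩
      · exact ⟨n, fun _ => Or.inr h⟩
    · exact ⟨0, fun h => (hr h).elim⟩
  choose N hN using h'
  refine ⟨Finset.univ.sup N + 1, c', hc, fun q hq => ?_⟩
  rcases hN q hq with ⟨i, hi⟩ | h
  · exact Or.inl ⟨i, Or.inr hi⟩
  · exact Or.inr (h.mono (Finset.le_sup (Finset.mem_univ q)))

/-- The robber loses if each of his moves can be answered by a capture or by a move of the cops to
another position in which he loses. -/
theorem robberLoses_of {V ι : Type*} [Finite V] {G : SimpleGraph V} {c : ι → V} {r : V}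
    (h : ∀ r', Step G r r' → (∃ i, Step G (c i) r') ∨
      ∃ c' : ι → V, (∀ i, Step G (c i) (c' i)) ∧ RobberLoses G c' r') :
    RobberLoses G c r := by
  classical
  intro r' hr'
  right
  rcases h r' hr' with ⟨i, hi⟩ | ⟨c', hc, hl⟩
  · refine ⟨1, Function.update c i r', fun k => ?_, fun r'' _ => Or.inl ⟨i, Or.inl (by simp)⟩⟩
    by_cases hk : k = i
    · subst hk; simpa using hi
    · simp [Function.update_of_ne hk, Step]
  · exact hl.win hc

/-- A starting placement from which every robber position loses gives a winning strategy in the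
sense of `CopWin`: the cops always play a move which decreases the number of rounds needed. -/
theorem copWin_of_robberLoses {V ι : Type*} [Finite V] {G : SimpleGraph V} {k : ℕ}
    (e : Fin k ≃ ι) (c₀ : ι → V) (h : ∀ r, RobberLoses G c₀ r) : CopWin G k := by
  classical
  have hσ : ∀ (c : ι → V) (r : V), ∃ c' : ι → V, (∀ i, Step G (c i) (c' i)) ∧
      ∀ n, WinIn G n c r →
        ∃ m < n, ∀ r', Step G r r' → (∃ i, c' i = r ∨ c' i = r') ∨ WinIn G m c' r' := by
    intro c r
    by_cases hw : ∃ n, WinIn G n c r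
    · have hf := Nat.find_spec hw
      have hmin := fun n (hn : WinIn G n c r) => Nat.find_min' hw hn
      generalize Nat.find hw = n₀ at hf hmin
      cases n₀ with
      | zero => exact hf.elim
      | succ m =>
        obtain ⟨c', h1, h2⟩ := hf
        exact ⟨c', h1, fun n hn => ⟨m, hmin n hn, h2⟩⟩
    · exact ⟨c, fun _ => Or.inl rfl, fun n hn => (hw ⟨n, hn⟩).elim⟩
  choose σ hσ1 hσ2 using hσ
  let F : List V → Fin k → V := fun l i => l.foldl σ c₀ (e i)
  refine ⟨c₀ ∘ e, F, fun rob hrob => ?_⟩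
  let s : ℕ → ι → V := fun n => ((List.range n).map rob).foldl σ c₀
  have hs : ∀ n, s (n + 1) = σ (s n) (rob n) := by
    intro n; simp [s, List.range_succ]
  have hcs : ∀ n i, copSeq (c₀ ∘ e) F rob n i = s n (e i) := by
    intro n i
    cases n with
    | zero => simp [copSeq, s]
    | succ n => rfl
  refine ⟨fun n i => ?_, ?_⟩
  · rw [hcs, hcs, hs]; exact hσ1 _ _ _
  · have key : ∀ n t, WinIn G n (s t) (rob t) → ∃ t i, s t i = rob t ∨ s (t + 1) i = rob t := by
      intro n
      induction n using Nat.strong_induction_on with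
      | _ n ih =>
        intro t ht
        obtain ⟨m, hm, h2⟩ := hσ2 _ _ _ ht
        rcases h2 (rob (t + 1)) (hrob t) with ⟨i, hi | hi⟩ | hw
        · exact ⟨t, i, Or.inr (by rw [hs]; exact hi)⟩
        · exact ⟨t + 1, i, Or.inl (by rw [hs]; exact hi)⟩
        · exact ih m hm (t + 1) (by rw [hs]; exact hw)
    obtain ⟨n, hn⟩ := (h (rob 0)).win (c := c₀) (fun _ => Or.inl rfl)
    obtain ⟨t, i, hi⟩ := key n 0 hn
    exact ⟨t, e.symm i, by rw [hcs, hcs]; simpa using hi⟩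

/-! ### The square grid has no `K₃,₃` minor -/

/-- `A` is connected in the graph `H`: any two points of `A` are joined by a path inside `A`
(the empty set is allowed). -/
def ConnSet {α : Type*} (H : SimpleGraph α) (A : Set α) : Prop :=
  ∀ x ∈ A, ∀ y ∈ A, Relation.ReflTransGen (fun a b => H.Adj a b ∧ b ∈ A) x y

/-- `H` has no `K₃,₃` minor with finite branch sets: there are no six disjoint finite connected sets
`P 0, P 1, P 2, Q 0, Q 1, Q 2` with an edge between each `P i` and each `Q j`. -/
def NoK33 {α : Type*} (H : SimpleGraph α) : Prop :=
  ∀ P Q : Fin 3 → Set α, (∀ i, ConnSet H (P i)) → (∀ j, ConnSet H (Q j)) →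
    (∀ i, (P i).Finite) → (∀ j, (Q j).Finite) →
    (∀ i i', i ≠ i' → Disjoint (P i) (P i')) → (∀ j j', j ≠ j' → Disjoint (Q j) (Q j')) →
    (∀ i j, Disjoint (P i) (Q j)) → (∀ i j, ∃ a ∈ P i, ∃ b ∈ Q j, H.Adj a b) → False

theorem rtg_mono {α : Type*} {r r' : α → α → Prop} {x y : α} (h : Relation.ReflTransGen r x y)
    (hr : ∀ a b, r a b → r' a b) : Relation.ReflTransGen r' x y := by
  induction h with
  | refl => exact .refl
  | tail _ h ih => exact ih.tail (hr _ _ h)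

theorem NoK33.mono {α : Type*} {H H' : SimpleGraph α} (hle : H ≤ H') (h : NoK33 H') : NoK33 H := by
  intro P Q hP hQ hPf hQf h1 h2 h3 h4
  refine h P Q (fun i x hx y hy => ?_) (fun i x hx y hy => ?_) hPf hQf h1 h2 h3 (fun i j => ?_)
  · exact rtg_mono (hP i x hx y hy) fun a b hab => ⟨hle hab.1, hab.2⟩
  · exact rtg_mono (hQ i x hx y hy) fun a b hab => ⟨hle hab.1, hab.2⟩
  · obtain ⟨a, ha, b, hb, hab⟩ := h4 i j
    exact ⟨a, ha, b, hb, hle hab⟩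

/-- The square grid graph on `ℤ × ℤ`. -/
def grid : SimpleGraph (ℤ × ℤ) where
  Adj u v := v = (u.1 + 1, u.2) ∨ u = (v.1 + 1, v.2) ∨ v = (u.1, u.2 + 1) ∨ u = (v.1, v.2 + 1)
  symm := ⟨fun u v h => by tauto⟩
  loopless := ⟨fun u h => by rcases h with h | h | h | h <;> simp [Prod.ext_iff] at h⟩

/-- The degree at `x` of a chain `c` of grid edges, given by its values on ordered pairs of points. In
all applications the coefficient group `W` has exponent 2. -/
def dg {W : Type*} [AddCommGroup W] (c : ℤ × ℤ → ℤ × ℤ → W) (x : ℤ × ℤ) : W :=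
  c x (x.1 + 1, x.2) + c x (x.1 - 1, x.2) + c x (x.1, x.2 + 1) + c x (x.1, x.2 - 1)

/-- The boundary of a (possibly infinite) chain `φ` of unit cells; a cell is indexed by its lower
left corner. The value on a grid edge is the sum of `φ` over the two cells next to it, with no signs, as
the coefficient groups used have exponent 2. -/
def bd {W : Type*} [AddCommGroup W] (φ : ℤ × ℤ → W) (u v : ℤ × ℤ) : W :=
  open Classical in
  if v = (u.1 + 1, u.2) then φ u + φ (u.1, u.2 - 1)
  else if u = (v.1 + 1, v.2) then φ v + φ (v.1, v.2 - 1)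
  else if v = (u.1, u.2 + 1) then φ u + φ (u.1 - 1, u.2)
  else if u = (v.1, v.2 + 1) then φ v + φ (v.1 - 1, v.2)
  else 0

theorem bd_right {W : Type*} [AddCommGroup W] (φ : ℤ × ℤ → W) (a b : ℤ) :
    bd φ (a, b) (a + 1, b) = φ (a, b) + φ (a, b - 1) := by simp [bd]
theorem bd_left {W : Type*} [AddCommGroup W] (φ : ℤ × ℤ → W) (a b : ℤ) :
    bd φ (a, b) (a - 1, b) = φ (a - 1, b) + φ (a - 1, b - 1) := by
  have : ¬ a - 1 = a + 1 := by omega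
  simp [bd, this]
theorem bd_up {W : Type*} [AddCommGroup W] (φ : ℤ × ℤ → W) (a b : ℤ) :
    bd φ (a, b) (a, b + 1) = φ (a, b) + φ (a - 1, b) := by simp [bd]
theorem bd_down {W : Type*} [AddCommGroup W] (φ : ℤ × ℤ → W) (a b : ℤ) :
    bd φ (a, b) (a, b - 1) = φ (a, b - 1) + φ (a - 1, b - 1) := by
  have : ¬ b - 1 = b + 1 := by omega
  simp [bd, this]

/-- Every grid edge separates two cells. -/
theorem exists_cells {u v : ℤ × ℤ} (h : grid.Adj u v) :
    ∃ s t : ℤ × ℤ, ∀ (W : Type) [AddCommGroup W] (φ : ℤ × ℤ → W), bd φ u v = φ s + φ t := by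
  obtain ⟨u1, u2⟩ := u
  obtain ⟨v1, v2⟩ := v
  rcases h with h | h | h | h <;> simp only [Prod.mk.injEq] at h <;> obtain ⟨rfl, rfl⟩ := h
  · exact ⟨_, _, fun W _ φ => bd_right φ _ _⟩
  · exact ⟨(v1, u2), (v1, u2 - 1), fun W _ φ => by simpa using bd_left φ (v1 + 1) u2⟩
  · exact ⟨_, _, fun W _ φ => bd_up φ _ _⟩
  · exact ⟨(u1, v2), (u1 - 1, v2), fun W _ φ => by simpa using bd_down φ u1 (v2 + 1)⟩

/-- Boundaries are cycles. -/
theorem dg_bd {W : Type*} [AddCommGroup W] (h2 : ∀ w : W, w + w = 0) (φ : ℤ × ℤ → W) (x : ℤ × ℤ) :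
    dg (bd φ) x = 0 := by
  obtain ⟨a, b⟩ := x
  simp only [dg, bd_right, bd_left, bd_up, bd_down]
  have e1 := h2 (φ (a, b)); have e2 := h2 (φ (a - 1, b))
  have e3 := h2 (φ (a, b - 1)); have e4 := h2 (φ (a - 1, b - 1))
  calc _ = (φ (a, b) + φ (a, b)) + (φ (a - 1, b) + φ (a - 1, b)) + (φ (a, b - 1) + φ (a, b - 1))
        + (φ (a - 1, b - 1) + φ (a - 1, b - 1)) := by abel
    _ = 0 := by simp [e1, e2, e3, e4]

theorem bd_symm {W : Type*} [AddCommGroup W] (φ : ℤ × ℤ → W) (u v : ℤ × ℤ) :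
    bd φ u v = bd φ v u := by
  obtain ⟨u1, u2⟩ := u
  obtain ⟨v1, v2⟩ := v
  simp only [bd, Prod.mk.injEq]
  split_ifs <;> first | rfl | (exfalso; omega)

theorem bd_eq_zero {W : Type*} [AddCommGroup W] (φ : ℤ × ℤ → W) {u v : ℤ × ℤ}
    (h : ¬ grid.Adj u v) : bd φ u v = 0 := by
  simp only [grid, not_or] at h
  simp [bd, h]

/-- A sequence indexed by `ℤ` is the difference sequence of another one, with prescribed value at 0. -/
theorem exists_primitive (u : ℤ → ZMod 2) (w : ZMod 2) :
    ∃ g : ℤ → ZMod 2, g 0 = w ∧ ∀ n, u n = g n + g (n - 1) := by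
  have e2 : ∀ z : ZMod 2, z + z = 0 := by decide
  refine ⟨fun n => w + ∑ i ∈ Finset.range n.toNat, u (i + 1)
    + ∑ i ∈ Finset.range (-n).toNat, u (-(i : ℤ)), by simp, fun n => ?_⟩
  rcases lt_or_ge 0 n with hn | hn
  · obtain ⟨m, rfl⟩ : ∃ m : ℕ, n = m + 1 := ⟨(n - 1).toNat, by omega⟩
    have h1 : ((m : ℤ) + 1).toNat = m + 1 := by omega
    have h2 : (-((m : ℤ) + 1)).toNat = 0 := by omega
    have h3 : ((m : ℤ) + 1 - 1).toNat = m := by omega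
    have h4 : (-((m : ℤ) + 1 - 1)).toNat = 0 := by omega
    simp only [h1, h2, h3, h4, Finset.sum_range_succ, Finset.sum_range_zero, add_zero]
    generalize ∑ i ∈ Finset.range m, u (i + 1) = s
    generalize u (m + 1) = t
    revert w s t; decide
  · obtain ⟨m, rfl⟩ : ∃ m : ℕ, n = -m := ⟨(-n).toNat, by omega⟩
    have h1 : (-(m : ℤ)).toNat = 0 := by omega
    have h2 : (- -(m : ℤ)).toNat = m := by omega
    have h3 : (-(m : ℤ) - 1).toNat = 0 := by omega
    have h4 : (-(-(m : ℤ) - 1)).toNat = m + 1 := by omega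
    simp only [h1, h2, h3, h4, Finset.sum_range_succ, Finset.sum_range_zero, add_zero]
    generalize ∑ i ∈ Finset.range m, u (-(i : ℤ)) = s
    generalize u (-(m : ℤ)) = t
    revert w s t; decide

/-- Every mod 2 cycle of the grid bounds a set of cells. -/
theorem exists_bd {c : ℤ × ℤ → ℤ × ℤ → ZMod 2} (hs : ∀ u v, c u v = c v u)
    (hz : ∀ u v, ¬ grid.Adj u v → c u v = 0) (hd : ∀ x, dg c x = 0) :
    ∃ φ : ℤ × ℤ → ZMod 2, c = bd φ := by
  -- the cells of the column `a = 0` are filled so that `key` holds for `a = 0`, then each row is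
  -- filled so that the vertical edges come out right; the cycle condition propagates `key` to all `a`
  obtain ⟨g, -, hg⟩ := exists_primitive (fun b => c (0, b) (1, b)) 0
  have hrow := fun b => exists_primitive (fun a => c (a, b) (a, b + 1)) (g b)
  choose f hf0 hf using hrow
  have key : ∀ a b, c (a, b) (a + 1, b) = f b a + f (b - 1) a := by
    have hrec : ∀ a b, c (a, b) (a + 1, b) + c (a - 1, b) (a, b) =
        f b a + f (b - 1) a + (f b (a - 1) + f (b - 1) (a - 1)) := by
      intro a b
      have h := hd (a, b)
      have e1 := hf b a
      have e2 := hf (b - 1) a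
      simp only [dg, sub_add_cancel] at h e2
      rw [hs (a, b) (a - 1, b), hs (a, b) (a, b - 1), e1, e2] at h
      generalize c (a, b) (a + 1, b) = t1 at *
      generalize c (a - 1, b) (a, b) = t2 at *
      generalize f b a = t3 at *
      generalize f b (a - 1) = t4 at *
      generalize f (b - 1) a = t5 at *
      generalize f (b - 1) (a - 1) = t6 at *
      clear e1 e2
      revert t1 t2 t3 t4 t5 t6; decide
    intro a b
    induction a using Int.induction_on with
    | zero => rw [hf0, hf0]; simpa using hg b
    | succ n ih =>
      have h := hrec (n + 1) b
      simp only [add_sub_cancel_right] at h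
      rw [ih, add_left_inj] at h
      exact h
    | pred n ih =>
      have h := hrec (-n) b
      rw [ih, add_right_inj] at h
      simpa using h
  refine ⟨fun x => f x.2 x.1, ?_⟩
  funext u v
  by_cases h : grid.Adj u v
  · have h' := h
    obtain ⟨u1, u2⟩ := u
    obtain ⟨v1, v2⟩ := v
    rcases h' with h' | h' | h' | h' <;> simp only [Prod.mk.injEq] at h' <;> obtain ⟨rfl, rfl⟩ := h'
    · rw [bd_right, key]
    · rw [bd_symm, bd_right, hs, key]
    · rw [bd_up, hf]
    · rw [bd_symm, bd_up, hs, hf]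
  · rw [hz _ _ h, bd_eq_zero _ h]

/-- The chain consisting of the single edge `uv`. -/
def edgeChain (u v : ℤ × ℤ) (a b : ℤ × ℤ) : ZMod 2 :=
  if (a = u ∧ b = v) ∨ (a = v ∧ b = u) then 1 else 0

theorem dg_edgeChain {u v : ℤ × ℤ} (h : grid.Adj u v) (z : ℤ × ℤ) :
    dg (edgeChain u v) z = (if z = u then 1 else 0) + (if z = v then 1 else 0) := by
  obtain ⟨u1, u2⟩ := u
  obtain ⟨v1, v2⟩ := v
  obtain ⟨z1, z2⟩ := z
  by_cases hu : ((z1, z2) : ℤ × ℤ) = (u1, u2)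
  · rw [Prod.mk.injEq] at hu
    obtain ⟨rfl, rfl⟩ := hu
    rcases h with h | h | h | h <;> simp only [Prod.mk.injEq] at h <;> obtain ⟨h1, h2⟩ := h <;>
      subst h1 <;> subst h2 <;>
      simp [dg, edgeChain, Prod.ext_iff] <;> omega
  · by_cases hv : ((z1, z2) : ℤ × ℤ) = (v1, v2)
    · rw [Prod.mk.injEq] at hv
      obtain ⟨rfl, rfl⟩ := hv
      rcases h with h | h | h | h <;> simp only [Prod.mk.injEq] at h <;> obtain ⟨h1, h2⟩ := h <;>
        subst h1 <;> subst h2 <;>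
        simp [dg, edgeChain, Prod.ext_iff] <;> omega
    · simp [dg, edgeChain, hu, hv]

theorem dg_add {W : Type*} [AddCommGroup W] (c c' : ℤ × ℤ → ℤ × ℤ → W) (x : ℤ × ℤ) :
    dg (fun u v => c u v + c' u v) x = dg c x + dg c' x := by
  simp only [dg]; abel

/-- Two points of a connected set of grid points are joined by a chain inside that set. -/
theorem exists_chain {A : Set (ℤ × ℤ)} (hA : ConnSet grid A) {x y : ℤ × ℤ} (hx : x ∈ A)
    (hy : y ∈ A) : ∃ c : ℤ × ℤ → ℤ × ℤ → ZMod 2, (∀ u v, c u v = c v u) ∧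
      (∀ u v, c u v ≠ 0 → grid.Adj u v ∧ u ∈ A ∧ v ∈ A) ∧
      ∀ z, dg c z = (if z = x then 1 else 0) + (if z = y then 1 else 0) := by
  have h := hA x hx y hy
  clear hy
  suffices H : y ∈ A ∧ ∃ c : ℤ × ℤ → ℤ × ℤ → ZMod 2, (∀ u v, c u v = c v u) ∧
      (∀ u v, c u v ≠ 0 → grid.Adj u v ∧ u ∈ A ∧ v ∈ A) ∧
      ∀ z, dg c z = (if z = x then 1 else 0) + (if z = y then 1 else 0) from H.2
  have e2 : ∀ z : ZMod 2, z + z = 0 := by decide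
  induction h with
  | refl => exact ⟨hx, fun _ _ => 0, by simp, by simp, fun z => by rw [e2]; simp [dg]⟩
  | @tail y y' _ hyy ih =>
    obtain ⟨hyA, c, h1, h2, h3⟩ := ih
    refine ⟨hyy.2, fun u v => c u v + edgeChain y y' u v, fun u v => ?_, fun u v huv => ?_,
      fun z => ?_⟩
    · simp only [edgeChain]; rw [h1 u v]; congr 1; congr 1; grind
    · by_cases hc : c u v = 0
      · simp only [hc, zero_add] at huv
        simp only [edgeChain, ne_eq, ite_eq_right_iff, one_ne_zero, imp_false, not_not] at huv
        rcases huv with ⟨rfl, rfl⟩ | ⟨rfl, rfl⟩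
        · exact ⟨hyy.1, hyA, hyy.2⟩
        · exact ⟨hyy.1.symm, hyy.2, hyA⟩
      · exact h2 u v hc
    · rw [dg_add, h3, dg_edgeChain hyy.1]
      generalize (if z = x then (1 : ZMod 2) else 0) = s
      generalize (if z = y then (1 : ZMod 2) else 0) = t
      generalize (if z = y' then (1 : ZMod 2) else 0) = r
      revert s t r; decide

theorem zmod2_add_self (z : ZMod 2) : z + z = 0 := by revert z; decide

/-- A nonempty even subgraph of `K₃,₃` has at least four edges. -/
theorem four_le_card_even (D : Fin 3 → Fin 3 → ZMod 2) (hr : ∀ i, D i 0 + D i 1 + D i 2 = 0)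
    (hc : ∀ j, D 0 j + D 1 j + D 2 j = 0) (hne : ∃ i j, D i j ≠ 0) :
    4 ≤ (Finset.univ.filter fun p : Fin 3 × Fin 3 => D p.1 p.2 ≠ 0).card := by
  have e : ∀ x y z : ZMod 2, x + y + z = 0 → z = x + y := by decide
  have r0 := e _ _ _ (hr 0)
  have r1 := e _ _ _ (hr 1)
  have c0 := e _ _ _ (hc 0)
  have c1 := e _ _ _ (hc 1)
  have c2 := e _ _ _ (hc 2)
  have hne' : ¬ (D 0 0 = 0 ∧ D 0 1 = 0 ∧ D 1 0 = 0 ∧ D 1 1 = 0) := by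
    rintro ⟨h1, h2, h3, h4⟩
    simp only [h1, h2, h3, h4, add_zero] at r0 r1 c0 c1
    simp only [r0, r1, add_zero] at c2
    obtain ⟨i, j, hij⟩ := hne
    apply hij
    clear hij
    fin_cases i <;> fin_cases j <;> assumption
  rw [Finset.card_filter, Fintype.sum_prod_type]
  simp only [Fin.sum_univ_three]
  rw [c2, r0, r1, c0, c1]
  clear hr hc hne r0 r1 c0 c1 c2
  generalize D 0 0 = a at *
  generalize D 0 1 = b at *
  generalize D 1 0 = c at *
  generalize D 1 1 = d at *
  revert a b c d
  decide

/-- The coordinates, in the basis of the cycle space of `K₃,₃` formed by the 4-cycles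
through the edge `(0, 0)`, of the functional which says
whether the edge `(i, j)` is contained. -/
def edgeFun (i j : Fin 3) (w : Fin 2 × Fin 2) : ZMod 2 :=
  (if i = 0 ∧ j = 0 then 1 else 0) + (if i = 0 ∧ j = w.2.succ then 1 else 0)
    + (if i = w.1.succ ∧ j = w.2.succ then 1 else 0) + (if i = w.1.succ ∧ j = 0 then 1 else 0)

theorem edgeFun_ne_zero : ∀ i j, edgeFun i j ≠ 0 := by
  have : ∀ i j, ∃ w, edgeFun i j w ≠ 0 := by decide
  intro i j h
  obtain ⟨w, hw⟩ := this i j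
  exact hw (by rw [h]; rfl)

theorem edgeFun_succ : ∀ w : Fin 2 × Fin 2, edgeFun w.1.succ w.2.succ = Pi.single w 1 := by
  have : ∀ w w' : Fin 2 × Fin 2, edgeFun w.1.succ w.2.succ w' = Pi.single (M := fun _ => ZMod 2) w 1 w' := by
    decide
  exact fun w => funext (this w)

/-- `K₃,₃` has no 2-basis: it is impossible to label the two sides `L i j`, `R i j` of every edge with
vectors differing by the functional of the edge so that every label borders an even subgraph. Indeed
each of the labels occurring borders at least 4 edges and each of the 9 edges has 2 labels, so at most
4 labels occur; but their differences span a space of dimension 4. -/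
theorem no_two_basis (L R : Fin 3 → Fin 3 → Fin 2 × Fin 2 → ZMod 2)
    (hLR : ∀ i j, L i j + R i j = edgeFun i j)
    (hr : ∀ w i, ∑ j, ((if L i j = w then (1 : ZMod 2) else 0) + if R i j = w then 1 else 0) = 0)
    (hc : ∀ w j, ∑ i, ((if L i j = w then (1 : ZMod 2) else 0) + if R i j = w then 1 else 0) = 0) :
    False := by
  classical
  have hadd : ∀ w : Fin 2 × Fin 2 → ZMod 2, w + w = 0 := fun w => by
    funext x; exact zmod2_add_self _
  have hne : ∀ i j, L i j ≠ R i j := fun i j h => by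
    apply edgeFun_ne_zero i j
    rw [← hLR, h, hadd]
  let D : (Fin 2 × Fin 2 → ZMod 2) → Fin 3 → Fin 3 → ZMod 2 := fun w i j =>
    (if L i j = w then 1 else 0) + if R i j = w then 1 else 0
  let A : Finset (Fin 2 × Fin 2 → ZMod 2) := Finset.univ.filter fun w => ∃ i j, D w i j ≠ 0
  have hL : ∀ i j, L i j ∈ A := fun i j => by
    simp only [A, Finset.mem_filter_univ]
    exact ⟨i, j, by simp [D, (hne i j).symm]⟩
  have hR : ∀ i j, R i j ∈ A := fun i j => by
    simp only [A, Finset.mem_filter_univ]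
    exact ⟨i, j, by simp [D, hne i j]⟩
  have h4 : A.card ≤ 4 := by
    have h1 : A.card • 4 ≤ ∑ w ∈ A,
        (Finset.univ.filter fun p : Fin 3 × Fin 3 => D w p.1 p.2 ≠ 0).card := by
      refine Finset.card_nsmul_le_sum _ _ _ fun w hw => ?_
      refine four_le_card_even (D w) (fun i => ?_) (fun j => ?_) (by simpa [A] using hw)
      · have := hr w i; rwa [Fin.sum_univ_three] at this
      · have := hc w j; rwa [Fin.sum_univ_three] at this
    have h2 : ∑ w ∈ A, (Finset.univ.filter fun p : Fin 3 × Fin 3 => D w p.1 p.2 ≠ 0).card ≤ 18 := by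
      calc _ ≤ ∑ w, (Finset.univ.filter fun p : Fin 3 × Fin 3 => D w p.1 p.2 ≠ 0).card :=
            Finset.sum_le_sum_of_subset (Finset.subset_univ _)
        _ = ∑ p : Fin 3 × Fin 3, (Finset.univ.filter fun w => D w p.1 p.2 ≠ 0).card := by
            simp only [Finset.card_filter]; exact Finset.sum_comm
        _ ≤ ∑ _p : Fin 3 × Fin 3, 2 := by
            refine Finset.sum_le_sum fun p _ => ?_
            refine (Finset.card_le_card (t := {L p.1 p.2, R p.1 p.2}) fun w hw => ?_).trans
              Finset.card_le_two
            simp only [Finset.mem_filter_univ, D] at hw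
            simp only [Finset.mem_insert, Finset.mem_singleton]
            by_contra hcon
            push Not at hcon
            simp [hcon.1.symm, hcon.2.symm] at hw
        _ = 18 := by simp
    simp only [smul_eq_mul] at h1
    omega
  let B : Finset (Fin 2 × Fin 2 → ZMod 2) := (A.erase (L 0 0)).image fun w => w - L 0 0
  have hB : B.card ≤ 3 := by
    refine Finset.card_image_le.trans ?_
    rw [Finset.card_erase_of_mem (hL 0 0)]; omega
  have hmem : ∀ w ∈ A, w - L 0 0 ∈ Submodule.span (ZMod 2) (B : Set (Fin 2 × Fin 2 → ZMod 2)) := by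
    intro w hw
    by_cases h : w = L 0 0
    · simp [h]
    · exact Submodule.subset_span (Finset.mem_coe.2
        (Finset.mem_image_of_mem _ (Finset.mem_erase.2 ⟨h, hw⟩)))
  have htop : Submodule.span (ZMod 2) (B : Set (Fin 2 × Fin 2 → ZMod 2)) = ⊤ := by
    rw [eq_top_iff]
    rintro f -
    rw [← Finset.univ_sum_single f]
    refine Submodule.sum_mem _ fun w _ => ?_
    have hw : Pi.single w (f w) = f w • (Pi.single w 1 : Fin 2 × Fin 2 → ZMod 2) := by
      rw [← Pi.single_smul]; simp
    rw [hw]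
    refine Submodule.smul_mem _ _ ?_
    rw [← edgeFun_succ, ← hLR]
    have h := Submodule.add_mem _ (hmem _ (hL w.1.succ w.2.succ)) (hmem _ (hR w.1.succ w.2.succ))
    have h' : L w.1.succ w.2.succ - L 0 0 + (R w.1.succ w.2.succ - L 0 0)
        = L w.1.succ w.2.succ + R w.1.succ w.2.succ - (L 0 0 + L 0 0) := by abel
    rwa [h', hadd, sub_zero] at h
  have hfin := finrank_span_finset_le_card (R := ZMod 2) B
  rw [Set.finrank, htop, finrank_top, Module.finrank_fintype_fun_eq_card] at hfin
  simp at hfin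
  omega

/-- The handshake lemma for a mod 2 cycle `c`: if the edges of `c` leaving the finite set `A` are
among the edges `(a j, b j)`, then evenly many of these belong to `c`. -/
theorem handshake {c : ℤ × ℤ → ℤ × ℤ → ZMod 2} (hs : ∀ u v, c u v = c v u)
    (hz : ∀ u v, ¬ grid.Adj u v → c u v = 0) (hd : ∀ x, dg c x = 0)
    {A : Set (ℤ × ℤ)} (hA : A.Finite) {a b : Fin 3 → ℤ × ℤ} (ha : ∀ j, a j ∈ A)
    (hb : ∀ j, b j ∉ A) (hinj : Function.Injective b)
    (hout : ∀ u ∈ A, ∀ v ∉ A, c u v ≠ 0 → ∃ j, u = a j ∧ v = b j) : ∑ j, c (a j) (b j) = 0 := by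
  classical
  obtain ⟨A, rfl⟩ := hA.exists_finset_coe
  simp only [Finset.mem_coe] at *
  let nb : ℤ × ℤ → Finset (ℤ × ℤ) := fun x =>
    {(x.1 + 1, x.2), (x.1 - 1, x.2), (x.1, x.2 + 1), (x.1, x.2 - 1)}
  have hnb : ∀ u v, grid.Adj u v → v ∈ nb u := by
    rintro ⟨u1, u2⟩ ⟨v1, v2⟩ h
    simp only [grid, Prod.mk.injEq] at h
    simp only [nb, Finset.mem_insert, Finset.mem_singleton, Prod.mk.injEq]
    omega
  have hsum : ∀ u, ∑ v ∈ nb u, c u v = 0 := by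
    intro u
    rw [← hd u]
    simp only [nb, dg]
    rw [Finset.sum_insert, Finset.sum_insert, Finset.sum_insert, Finset.sum_singleton]
    · ring
    all_goals simp [Prod.ext_iff] <;> omega
  let N : Finset (ℤ × ℤ) := A ∪ A.biUnion nb
  have hsumN : ∀ u ∈ A, ∑ v ∈ N, c u v = 0 := by
    intro u hu
    rw [← hsum u]
    symm
    refine Finset.sum_subset (fun v hv => Finset.mem_union_right _
      (Finset.mem_biUnion.2 ⟨u, hu, hv⟩)) fun v _ hv => hz _ _ fun h => hv (hnb _ _ h)
  have h0 : ∑ u ∈ A, ∑ v ∈ N, c u v = 0 := Finset.sum_eq_zero hsumN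
  have hsplit : ∀ u, ∑ v ∈ N, c u v = ∑ v ∈ A, c u v + ∑ v ∈ N \ A, c u v := fun u => by
    rw [add_comm, Finset.sum_sdiff Finset.subset_union_left]
  simp only [hsplit, Finset.sum_add_distrib] at h0
  have hin : ∑ u ∈ A, ∑ v ∈ A, c u v = 0 := by
    rw [← Finset.sum_product']
    refine Finset.sum_involution (fun p _ => (p.2, p.1)) ?_ ?_ ?_ ?_
    · rintro ⟨u, v⟩ _
      dsimp only
      rw [hs v u, zmod2_add_self]
    · rintro ⟨u, v⟩ _ hne heq
      dsimp only at hne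
      have h' : v = u := (Prod.ext_iff.1 heq).1
      subst h'
      exact hne (hz _ _ (grid.loopless.irrefl _))
    · rintro ⟨u, v⟩ h
      simp only [Finset.mem_product] at h ⊢
      exact ⟨h.2, h.1⟩
    · rintro ⟨u, v⟩ _; rfl
  rw [hin, zero_add, ← Finset.sum_product'] at h0
  rw [← h0]
  have himg : ∑ j, c (a j) (b j) = ∑ p ∈ Finset.univ.image fun j => (a j, b j), c p.1 p.2 := by
    rw [Finset.sum_image]
    intro i _ j _ hij
    exact hinj (Prod.ext_iff.1 hij).2
  have hcom : ∀ p ∈ A ×ˢ (N \ A), c p.1 p.2 ≠ 0 → p ∈ Finset.univ.image fun j => (a j, b j) := by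
    rintro ⟨u, v⟩ hp hne
    simp only [Finset.mem_product, Finset.mem_sdiff] at hp
    obtain ⟨j, rfl, rfl⟩ := hout u hp.1 v hp.2.2 hne
    exact Finset.mem_image_of_mem _ (Finset.mem_univ j)
  rw [himg]
  refine Finset.sum_congr_of_eq_on_inter ?_ ?_ ?_
  · intro p hp hp'
    obtain ⟨j, -, rfl⟩ := Finset.mem_image.1 hp
    by_contra hne
    apply hp'
    simp only [Finset.mem_product, Finset.mem_sdiff]
    refine ⟨ha j, Finset.mem_union_right _ (Finset.mem_biUnion.2 ⟨a j, ha j, hnb _ _ ?_⟩), hb j⟩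
    by_contra h
    exact hne (hz _ _ h)
  · intro p hp hp'
    by_contra hne
    exact hp' (hcom p hp hne)
  · intros; rfl

/-- In a `K₃,₃` minor of the grid, choose an edge between any two branch sets on opposite sides. The
fundamental 4-cycles of `K₃,₃` give four mod 2 cycles of the grid, bounding four sets of cells. Label
each cell by its four memberships: the labels next to the nine chosen edges contradict `no_two_basis`,
because by the handshake lemma each label borders evenly many of the chosen edges at each branch set. -/
theorem noK33_grid : NoK33 grid := by
  classical
  intro P Q hP hQ hPf hQf hPP hQQ hPQ hadj
  choose a ha b hb hab using hadj
  have hPP' : ∀ {i i' x}, x ∈ P i → x ∈ P i' → i = i' := fun {i i' x} h h' => by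
    by_contra hne
    exact Set.disjoint_left.1 (hPP i i' hne) h h'
  have hQQ' : ∀ {j j' x}, x ∈ Q j → x ∈ Q j' → j = j' := fun {i i' x} h h' => by
    by_contra hne
    exact Set.disjoint_left.1 (hQQ i i' hne) h h'
  have hPQ' : ∀ {i j x}, x ∈ P i → x ∈ Q j → False := fun {i j x} hp hq =>
    Set.disjoint_left.1 (hPQ i j) hp hq
  -- `X i j` is a path from the root `a i 0` of `P i` to the root `b 0 j` of `Q j`
  have hX : ∀ i j, ∃ X : ℤ × ℤ → ℤ × ℤ → ZMod 2, (∀ u v, X u v = X v u) ∧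
      (∀ u v, X u v ≠ 0 → grid.Adj u v ∧ ((u ∈ P i ∧ v ∈ P i) ∨ (u ∈ Q j ∧ v ∈ Q j) ∨
        (u = a i j ∧ v = b i j) ∨ (u = b i j ∧ v = a i j))) ∧
      (∀ z, dg X z = (if z = a i 0 then 1 else 0) + (if z = b 0 j then 1 else 0)) ∧
      X (a i j) (b i j) = 1 := by
    intro i j
    obtain ⟨c1, s1, z1, d1⟩ := exists_chain (hP i) (ha i 0) (ha i j)
    obtain ⟨c2, s2, z2, d2⟩ := exists_chain (hQ j) (hb i j) (hb 0 j)
    refine ⟨fun u v => (c1 u v + c2 u v) + edgeChain (a i j) (b i j) u v, fun u v => ?_,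
      fun u v h => ?_, fun z => ?_, ?_⟩
    · simp only [edgeChain]; rw [s1 u v, s2 u v]; congr 1; congr 1; grind
    · by_cases h1 : c1 u v = 0
      · by_cases h2 : c2 u v = 0
        · simp only [h1, h2, zero_add, edgeChain, ne_eq, ite_eq_right_iff, one_ne_zero, imp_false,
            not_not] at h
          rcases h with ⟨rfl, rfl⟩ | ⟨rfl, rfl⟩
          · exact ⟨hab i j, by simp⟩
          · exact ⟨(hab i j).symm, by simp⟩
        · exact ⟨(z2 _ _ h2).1, Or.inr (Or.inl (z2 _ _ h2).2)⟩
      · exact ⟨(z1 _ _ h1).1, Or.inl (z1 _ _ h1).2⟩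
    · rw [dg_add, dg_add, d1, d2, dg_edgeChain (hab i j)]
      generalize (if z = a i 0 then (1 : ZMod 2) else 0) = s
      generalize (if z = b 0 j then (1 : ZMod 2) else 0) = t
      generalize (if z = a i j then (1 : ZMod 2) else 0) = r
      generalize (if z = b i j then (1 : ZMod 2) else 0) = q
      revert s t r q; decide
    · have h1 : c1 (a i j) (b i j) = 0 := by
        by_contra h; exact hPQ' (z1 _ _ h).2.2 (hb i j)
      have h2 : c2 (a i j) (b i j) = 0 := by
        by_contra h; exact hPQ' (ha i j) (z2 _ _ h).2.1
      simp [h1, h2, edgeChain]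
  choose X sX zX dX oX using hX
  have hXe : ∀ i j i' j', X i j (a i' j') (b i' j') = if i' = i ∧ j' = j then 1 else 0 := by
    intro i j i' j'
    split_ifs with h
    · obtain ⟨rfl, rfl⟩ := h; exact oX _ _
    · by_contra hne
      rcases (zX _ _ _ _ hne).2 with h' | h' | h' | h'
      · exact hPQ' h'.2 (hb i' j')
      · exact hPQ' (ha i' j') h'.1
      · exact h ⟨hPP' (ha i' j') (h'.1 ▸ ha i j), hQQ' (hb i' j') (h'.2 ▸ hb i j)⟩
      · exact hPQ' (ha i' j') (h'.1 ▸ hb i j)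
  -- the four fundamental cycles, and below the sets of cells bounded by them
  let C : Fin 2 × Fin 2 → ℤ × ℤ → ℤ × ℤ → ZMod 2 := fun w u v =>
    ((X 0 0 u v + X 0 w.2.succ u v) + X w.1.succ w.2.succ u v) + X w.1.succ 0 u v
  have hCX : ∀ w u v, C w u v ≠ 0 → ∃ i j, X i j u v ≠ 0 := by
    intro w u v h
    by_contra hcon
    push Not at hcon
    exact h (by simp [C, hcon])
  have hC : ∀ w, ∃ φ : ℤ × ℤ → ZMod 2, C w = bd φ := by
    intro w
    apply exists_bd
    · intro u v
      simp only [C]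
      rw [sX _ _ u v, sX _ _ u v, sX _ _ u v, sX _ _ u v]
    · intro u v h
      by_contra hne
      obtain ⟨i, j, hij⟩ := hCX w u v hne
      exact h (zX _ _ _ _ hij).1
    · intro x
      simp only [C]
      rw [dg_add, dg_add, dg_add, dX, dX, dX, dX]
      generalize (if x = a 0 0 then (1 : ZMod 2) else 0) = t1
      generalize (if x = b 0 0 then (1 : ZMod 2) else 0) = t2
      generalize (if x = b 0 w.2.succ then (1 : ZMod 2) else 0) = t3
      generalize (if x = a w.1.succ 0 then (1 : ZMod 2) else 0) = t4
      revert t1 t2 t3 t4; decide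
  choose f hf using hC
  let φ : ℤ × ℤ → Fin 2 × Fin 2 → ZMod 2 := fun x w => f w x
  have hcell := fun i j => exists_cells (hab i j)
  choose s t hst using hcell
  -- the edges along which `φ` jumps are the chosen edges and the edges inside branch sets
  have hjump : ∀ w u v, bd (fun x => if φ x = w then (1 : ZMod 2) else 0) u v ≠ 0 →
      ∃ i j, (u ∈ P i ∧ v ∈ P i) ∨ (u ∈ Q j ∧ v ∈ Q j) ∨
        (u = a i j ∧ v = b i j) ∨ (u = b i j ∧ v = a i j) := by
    intro w u v h
    have huv : grid.Adj u v := by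
      by_contra h'; exact h (bd_eq_zero _ h')
    obtain ⟨x, y, hxy⟩ := exists_cells huv
    rw [hxy] at h
    have hne : φ x ≠ φ y := by
      intro h'; apply h; simp only [h']; exact zmod2_add_self _
    obtain ⟨w', hw'⟩ := Function.ne_iff.1 hne
    have hCne : C w' u v ≠ 0 := by
      rw [hf, hxy]
      intro h0
      apply hw'
      simp only [φ]
      generalize f w' x = p at *
      generalize f w' y = q at *
      clear hw'
      revert p q; decide
    obtain ⟨i, j, hij⟩ := hCX w' u v hCne
    exact ⟨i, j, (zX _ _ _ _ hij).2⟩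
  refine no_two_basis (fun i j => φ (s i j)) (fun i j => φ (t i j)) (fun i j => ?_)
    (fun w i => ?_) (fun w j => ?_)
  · funext w
    have h : C w (a i j) (b i j) = edgeFun i j w := by
      simp only [C, hXe, edgeFun]
    rw [← h, hf, hst]
    rfl
  · have h := handshake (bd_symm _) (fun u v => bd_eq_zero _)
      (dg_bd zmod2_add_self (fun x => if φ x = w then (1 : ZMod 2) else 0)) (hPf i)
      (a := fun j => a i j) (b := fun j => b i j) (ha i) (fun j h => hPQ' h (hb i j))
      (fun j j' h => hQQ' (hb i j) (by rw [show b i j = b i j' from h]; exact hb i j')) ?_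
    · simpa only [hst] using h
    · intro u hu v hv hne
      obtain ⟨i', j', h | h | h | h⟩ := hjump w u v hne
      · obtain rfl := hPP' hu h.1
        exact (hv h.2).elim
      · exact (hPQ' hu h.1).elim
      · obtain rfl := hPP' hu (h.1 ▸ ha i' j')
        exact ⟨j', h⟩
      · exact (hPQ' hu (h.1 ▸ hb i' j')).elim
  · have h := handshake (bd_symm _) (fun u v => bd_eq_zero _)
      (dg_bd zmod2_add_self (fun x => if φ x = w then (1 : ZMod 2) else 0)) (hQf j)
      (a := fun i => b i j) (b := fun i => a i j) (fun i => hb i j)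
      (fun i h => hPQ' (ha i j) h)
      (fun i i' h => hPP' (ha i j) (by rw [show a i j = a i' j from h]; exact ha i' j)) ?_
    · simpa only [bd_symm _ (b _ j), hst] using h
    · intro u hu v hv hne
      obtain ⟨i', j', h | h | h | h⟩ := hjump w u v hne
      · exact (hPQ' h.1 hu).elim
      · obtain rfl := hQQ' hu h.1
        exact (hv h.2).elim
      · exact (hPQ' (h.1 ▸ ha i' j') hu).elim
      · obtain rfl := hQQ' hu (h.1 ▸ hb i' j')
        exact Exists.intro _ h

/-! ### Guarding a path with five cops -/

/-- A representation of `G` by finite connected subsets `S v` of a graph `H`, each of whose edges lies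
inside one of these subsets. As `Step G` is reflexive, `step_iff` says that the sets `S v` are nonempty
and that distinct vertices are adjacent exactly if their sets meet. -/
structure Rep {V α : Type*} (G : SimpleGraph V) (H : SimpleGraph α) (S : V → Set α) : Prop where
  step_iff : ∀ u v, Step G u v ↔ (S u ∩ S v).Nonempty
  conn : ∀ v, ConnSet H (S v)
  finite : ∀ v, (S v).Finite
  edge : ∀ x y, H.Adj x y → ∃ v, x ∈ S v ∧ y ∈ S v

/-- There is a path from `x` to `y` inside `A`, all of whose vertices except possibly
the last one lie in `C` (the starting point is not required to be in `A`). -/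
def Trace {α : Type*} (H : SimpleGraph α) (A C : Set α) : α → α → Prop :=
  Relation.ReflTransGen fun a b => H.Adj a b ∧ a ∈ C ∧ b ∈ A

/-- The data of a guard for the robber territory `C`: a level function `lv` on the points and a walk
`p` in `G`. The levels on a connected piece of a set `S v` differ by at most one, and a
set `S v` which leads through `C` from a point `x` to a point `q` of the guarded set `B` meets `S (p j)`
at `q`, with `j` close to the level of `x`. Thus five cops on the walk close to the level of
the robber catch a robber touching `B`. -/
structure Guard {V α : Type*} (G : SimpleGraph V) (H : SimpleGraph α) (S : V → Set α) (C B : Set α)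
    (lv : α → ℕ) (p : ℕ → V) : Prop where
  walk : ∀ j, Step G (p j) (p (j + 1))
  lip : ∀ v x y, x ∈ C → x ∈ S v → y ∈ C → Trace H (S v) C x y → lv y ≤ lv x + 1
  catch_near : ∀ v x q, x ∈ C → x ∈ S v → q ∈ B → Trace H (S v) C x q →
    ∃ j, q ∈ S (p j) ∧ lv x ≤ j + 2 ∧ j ≤ lv x + 1

theorem Guard.mono {V α : Type*} {G : SimpleGraph V} {H : SimpleGraph α} {S : V → Set α}
    {C B C' B' : Set α} {lv : α → ℕ} {p : ℕ → V} (h : Guard G H S C B lv p) (hC : C' ⊆ C)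
    (hB : B' ⊆ B) : Guard G H S C' B' lv p where
  walk := h.walk
  lip v x y hx hxv hy ht := h.lip v x y (hC hx) hxv (hC hy)
    (rtg_mono ht fun _ _ hab => ⟨hab.1, hC hab.2.1, hab.2.2⟩)
  catch_near v x q hx hxv hq ht := h.catch_near v x q (hC hx) hxv (hB hq)
    (rtg_mono ht fun _ _ hab => ⟨hab.1, hC hab.2.1, hab.2.2⟩)

theorem isChain_mid {α : Type*} {R : α → α → Prop} {L l : List α} (h : L.IsChain R)
    (hl : l <:+: L) : l.IsChain R := by
  obtain ⟨a, b, rfl⟩ := hl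
  exact h.left_of_append.right_of_append

theorem rtg_reverse {α : Type*} {E : α → α → Prop} (hE : ∀ a b, E a b → E b a) {A : Set α}
    {x y : α} (hx : x ∈ A) (h : Relation.ReflTransGen (fun a b => E a b ∧ b ∈ A) x y) :
    y ∈ A ∧ Relation.ReflTransGen (fun a b => E a b ∧ b ∈ A) y x := by
  induction h with
  | refl => exact ⟨hx, .refl⟩
  | tail _ h ih => exact ⟨h.2, .head ⟨hE _ _ h.1, ih.1⟩ ih.2⟩

theorem walk_support_subset {α : Type*} {K : SimpleGraph α} {Q : Set α}
    (hK : ∀ a b, K.Adj a b → b ∈ Q) {x y : α} (w : K.Walk x y) (hx : x ∈ Q) :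
    ∀ a ∈ w.support, a ∈ Q := by
  induction w with
  | nil => simpa using hx
  | cons h w ih =>
    intro a ha
    rw [SimpleGraph.Walk.support_cons, List.mem_cons] at ha
    rcases ha with rfl | ha
    · exact hx
    · exact ih (hK _ _ h) a ha

/-- Two points `x₀`, `y₀` in or next to a connected territory `C` are joined through `C` by a path
which can be guarded. The levels are the distances from `x₀`, where a step is a move inside a connected
piece of some `S v`, and the path is drawn along a geodesic for this distance. -/
theorem exists_guard {V α : Type*} {G : SimpleGraph V} {H : SimpleGraph α} {S : V → Set α}
    (rep : Rep G H S) {C : Set α} (hC : ConnSet H C) {x₀ y₀ : α}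
    (hx₀ : x₀ ∈ C ∨ ∃ c ∈ C, H.Adj x₀ c) (hy₀ : y₀ ∈ C ∨ ∃ c ∈ C, H.Adj y₀ c)
    (hcov : ∃ v, y₀ ∈ S v) :
    ∃ l : List α, l.Nodup ∧ l.IsChain (fun a b => H.Adj a b ∧ (a ∈ C ∨ b ∈ C)) ∧
      l.head? = some x₀ ∧ l.getLast? = some y₀ ∧ (∀ a ∈ l, a ∈ C ∨ a = x₀ ∨ a = y₀) ∧
      ∃ lv p, Guard G H S C {a | a ∈ l} lv p := by
  classical
  let D : Set α := {a | a ∈ C ∨ a = x₀ ∨ a = y₀}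
  have hCD : ∀ a ∈ C, a ∈ D := fun a h => Or.inl h
  have hxD : x₀ ∈ D := Or.inr (Or.inl rfl)
  -- the edges with at least one end in `C`
  let E : α → α → Prop := fun a b => H.Adj a b ∧ (a ∈ C ∨ b ∈ C) ∧ a ∈ D ∧ b ∈ D
  have hE : ∀ a b, E a b → E b a := fun a b h => ⟨h.1.symm, h.2.1.symm, h.2.2.2, h.2.2.1⟩
  -- every point of `D` is joined to `x₀` through `C`
  have hconn : ∀ d ∈ D, Relation.ReflTransGen E x₀ d := by
    have hCC : ∀ c ∈ C, ∀ d ∈ C, Relation.ReflTransGen E c d := by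
      intro c hc d hd
      have h := hC c hc d hd
      suffices H : d ∈ C ∧ Relation.ReflTransGen E c d from H.2
      clear hd
      induction h with
      | refl => exact ⟨hc, .refl⟩
      | tail _ h ih =>
        exact ⟨h.2, ih.2.tail ⟨h.1, Or.inl ih.1, hCD _ ih.1, hCD _ h.2⟩⟩
    have hnear : ∀ d ∈ D, d ∈ C ∨ ∃ c ∈ C, H.Adj d c := by
      rintro d (h | rfl | rfl)
      exacts [Or.inl h, hx₀, hy₀]
    obtain ⟨c, hc, hxc⟩ : ∃ c ∈ C, Relation.ReflTransGen E x₀ c := by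
      rcases hx₀ with h | ⟨c, hc, h⟩
      · exact ⟨x₀, h, .refl⟩
      · exact ⟨c, hc, .single ⟨h, Or.inr hc, hxD, hCD _ hc⟩⟩
    intro d hd
    rcases hnear d hd with h | ⟨c', hc', h⟩
    · exact hxc.trans (hCC c hc d h)
    · exact (hxc.trans (hCC c hc c' hc')).tail ⟨h.symm, Or.inl hc', hCD _ hc', hd⟩
  have hstay : ∀ {A : Set α} {a b}, a ∈ D →
      Relation.ReflTransGen (fun a b => E a b ∧ b ∈ A) a b → b ∈ D := by
    intro A a b ha h
    induction h with
    | refl => exact ha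
    | tail _ h _ => exact h.1.2.2.2
  -- the distance in `Γ` is the level; an edge of `Γ` is a move inside a piece of some `S v`
  let Γ : SimpleGraph α :=
    { Adj := fun a b => a ≠ b ∧ ∃ v, a ∈ S v ∧
        Relation.ReflTransGen (fun a b => E a b ∧ b ∈ S v) a b
      symm := ⟨fun a b ⟨hne, v, hv, h⟩ =>
        ⟨hne.symm, v, (rtg_reverse hE hv h).1, (rtg_reverse hE hv h).2⟩⟩
      loopless := ⟨fun a h => h.1 rfl⟩ }
  have hEΓ : ∀ a b, E a b → Γ.Adj a b := by
    intro a b h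
    obtain ⟨v, ha, hb⟩ := rep.edge a b h.1
    exact ⟨h.1.ne, v, ha, .single ⟨h, hb⟩⟩
  have hreach : ∀ d ∈ D, Γ.Reachable x₀ d := by
    intro d hd
    have h := hconn d hd
    clear hd
    induction h with
    | refl => exact .refl _
    | tail _ h ih => exact ih.trans (hEΓ _ _ h).reachable
  let lv : α → ℕ := fun y => Γ.dist x₀ y
  have hlip1 : ∀ v y y', y ∈ D → y ∈ S v →
      Relation.ReflTransGen (fun a b => E a b ∧ b ∈ S v) y y' → lv y' ≤ lv y + 1 := by
    intro v y y' hy hyv h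
    by_cases hyy : y = y'
    · subst hyy; omega
    · obtain ⟨w, hw⟩ := (hreach y hy).exists_walk_length_eq_dist
      have hadj : Γ.Adj y y' := ⟨hyy, v, hyv, h⟩
      have := SimpleGraph.dist_le (w.concat hadj)
      rw [SimpleGraph.Walk.length_concat, hw] at this
      exact this
  have hlip2 : ∀ v y y', y ∈ D → y ∈ S v →
      Relation.ReflTransGen (fun a b => E a b ∧ b ∈ S v) y y' → lv y ≤ lv y' + 1 := by
    intro v y y' hy hyv h
    have hback := rtg_reverse hE hyv h
    exact hlip1 v y' y (hstay hy h) hback.1 hback.2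
  -- a geodesic from `x₀` to `y₀`
  obtain ⟨w, hw⟩ := (hreach y₀ (Or.inr (Or.inr rfl))).exists_walk_length_eq_dist
  let z : ℕ → α := w.getVert
  have hp : ∀ j, ∃ v, z j ∈ S v ∧
      Relation.ReflTransGen (fun a b => E a b ∧ b ∈ S v) (z j) (z (j + 1)) := by
    intro j
    rcases lt_or_ge j w.length with h | h
    · exact (w.adj_getVert_succ h).2
    · obtain ⟨v, hv⟩ := hcov
      have e1 : z j = y₀ := w.getVert_of_length_le h
      have e2 : z (j + 1) = y₀ := w.getVert_of_length_le (by omega)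
      rw [e1, e2]
      exact ⟨v, hv, .refl⟩
  choose p hp1 hp2 using hp
  have hz0 : z 0 = x₀ := w.getVert_zero
  have hzD : ∀ j, z j ∈ D := by
    intro j
    induction j with
    | zero => rw [hz0]; exact hxD
    | succ j ih => exact hstay ih (hp2 j)
  have hzl : ∀ j k, lv (z (j + k)) ≤ lv (z j) + k := by
    intro j k
    induction k with
    | zero => simp
    | succ k ih =>
      have := hlip1 _ _ _ (hzD (j + k)) (hp1 _) (hp2 (j + k))
      rw [← add_assoc]; omega
  have hlv0 : lv x₀ = 0 := by simp [lv]
  have hzlv : ∀ j ≤ w.length, lv (z j) = j := by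
    intro j hj
    have h1 := hzl 0 j
    have h2 := hzl j (w.length - j)
    have h3 : lv (z w.length) = w.length := by
      have : z w.length = y₀ := w.getVert_length
      rw [this, hw]
    rw [zero_add, hz0, hlv0] at h1
    rw [Nat.add_sub_cancel' hj, h3] at h2
    omega
  -- the points of the geodesic's sets at the right level; a path to be guarded is found inside `Q`
  let Q : Set α := {q | q ∈ D ∧ ∃ j, q ∈ S (p j) ∧ (lv q = j ∨ lv q = j + 1)}
  have hxQ : x₀ ∈ Q := ⟨hxD, 0, hz0 ▸ hp1 0, Or.inl hlv0⟩
  let K : SimpleGraph α :=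
    { Adj := fun a b => E a b ∧ a ∈ Q ∧ b ∈ Q
      symm := ⟨fun a b h => ⟨hE _ _ h.1, h.2.2, h.2.1⟩⟩
      loopless := ⟨fun a h => H.loopless.irrefl a h.1.1⟩ }
  have hK : ∀ j ≤ w.length, K.Reachable x₀ (z j) := by
    intro j
    induction j with
    | zero => intro _; rw [hz0]
    | succ j ih =>
      intro hj
      refine (ih (by omega)).trans ?_
      -- all points between `z j` and `z (j + 1)` have level `j` or `j + 1`
      have hlev : ∀ y, Relation.ReflTransGen (fun a b => E a b ∧ b ∈ S (p j)) (z j) y → y ∈ S (p j) →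
          Relation.ReflTransGen (fun a b => E a b ∧ b ∈ S (p j)) y (z (j + 1)) → y ∈ Q := by
        intro y h1 hy h2
        have hyD := hstay (hzD j) h1
        have e1 := hlip1 _ _ _ (hzD j) (hp1 j) h1
        have e2 := hlip1 _ _ _ hyD hy h2
        rw [hzlv j (by omega)] at e1
        rw [hzlv _ hj] at e2
        exact ⟨hyD, j, hy, by omega⟩
      have main : ∀ y, Relation.ReflTransGen (fun a b => E a b ∧ b ∈ S (p j)) (z j) y →
          y ∈ S (p j) ∧ y ∈ Q ∧ K.Reachable (z j) y := by
        intro y h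
        have hback : ∀ {y}, Relation.ReflTransGen (fun a b => E a b ∧ b ∈ S (p j)) (z j) y →
            Relation.ReflTransGen (fun a b => E a b ∧ b ∈ S (p j)) y (z (j + 1)) :=
          fun h => (rtg_reverse hE (hp1 j) h).2.trans (hp2 j)
        induction h with
        | refl => exact ⟨hp1 j, hlev _ .refl (hp1 j) (hp2 j), .refl _⟩
        | tail h1 h ih =>
          have hq := hlev _ (h1.tail h) h.2 (hback (h1.tail h))
          exact ⟨h.2, hq, ih.2.2.trans (SimpleGraph.Adj.reachable (G := K) ⟨h.1, ih.2.1, hq⟩)⟩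
      exact (main _ (hp2 j)).2.2
  have hKy : K.Reachable x₀ y₀ := by
    have := hK w.length le_rfl
    rwa [show z w.length = y₀ from w.getVert_length] at this
  have hQ : Guard G H S C Q lv p := by
    have htr : ∀ v x q, x ∈ D → q ∈ D → Trace H (S v) C x q →
        Relation.ReflTransGen (fun a b => E a b ∧ b ∈ S v) x q := by
      intro v x q hx hq h
      induction h with
      | refl => exact .refl
      | tail _ h ih =>
        exact (ih (hCD _ h.2.1)).tail ⟨⟨h.1, Or.inl h.2.1, hCD _ h.2.1, hq⟩, h.2.2⟩
    refine ⟨fun j => ?_, fun v x y hx hxv hy ht => ?_, fun v x q hx hxv hq ht => ?_⟩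
    · rw [rep.step_iff]
      exact ⟨z (j + 1), (rtg_reverse hE (hp1 j) (hp2 j)).1, hp1 (j + 1)⟩
    · exact hlip1 v x y (hCD _ hx) hxv (htr v x y (hCD _ hx) (hCD _ hy) ht)
    · obtain ⟨hqD, j, hj, hjl⟩ := hq
      have h := htr v x q (hCD _ hx) hqD ht
      have e1 := hlip1 v x q (hCD _ hx) hxv h
      have e2 := hlip2 v x q (hCD _ hx) hxv h
      exact ⟨j, hj, by omega, by omega⟩
  obtain ⟨P, hP⟩ := hKy.exists_isPath
  have hPQ := walk_support_subset (Q := Q) (fun a b (h : K.Adj a b) => h.2.2) P hxQ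
  refine ⟨P.support, hP.support_nodup, ?_, ?_, ?_, fun a ha => (hPQ a ha).1, lv, p,
    hQ.mono subset_rfl hPQ⟩
  · exact P.isChain_adj_support.imp fun a b (h : K.Adj a b) => ⟨h.1.1, h.1.2.1⟩
  · rw [List.head?_eq_some_head P.support_ne_nil, P.head_support]
  · rw [List.getLast?_eq_some_getLast P.support_ne_nil, P.getLast_support]

/-! ### Moving teams of five cops -/

section Teams

variable {V α : Type*} {G : SimpleGraph V} {H : SimpleGraph α} {S : V → Set α}

/-- The points outside `C` which are adjacent to a point of `C`. -/
def Nb (H : SimpleGraph α) (C : Set α) : Set α := {b | b ∉ C ∧ ∃ a ∈ C, H.Adj a b}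

/-- The least level of a point of `S r`. -/
noncomputable def minLv (S : V → Set α) (lv : α → ℕ) (r : V) : ℕ := sInf (lv '' S r)

/-- The index on the walk of a guard of the `i`-th cop of the team: the five cops occupy the
indices from `t - 2` to `t + 2`, where `t` is the least level of the robber. Indices below `0` are
replaced by `0`. -/
noncomputable def idx (S : V → Set α) (lv : α → ℕ) (r : V) (i : Fin 5) : ℕ :=
  minLv S lv r + i - 2

/-- For the robber at `r`, the team `g` of five cops guards `B` within the territory `C`. Nothing is
required of a team whose set `B` is empty: it is free for other tasks. -/
def Has (G : SimpleGraph V) (H : SimpleGraph α) (S : V → Set α) (C : Set α)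
    (c : Fin 3 × Fin 5 → V) (r : V) (g : Fin 3) (B : Set α) : Prop :=
  B.Nonempty → ∃ lv p, Guard G H S C B lv p ∧ ∀ i, c (g, i) = p (idx S lv r i)

theorem Has.mono {C C' B B' : Set α} {c : Fin 3 × Fin 5 → V} {r : V} {g : Fin 3}
    (h : Has G H S C c r g B) (hC : C' ⊆ C) (hB : B' ⊆ B) : Has G H S C' c r g B' := by
  intro hne
  obtain ⟨lv, p, hg, hp⟩ := h (hne.mono hB)
  exact ⟨lv, p, hg.mono hC hB, hp⟩

theorem Rep.nonempty (rep : Rep G H S) (r : V) : (S r).Nonempty := by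
  have := (rep.step_iff r r).1 (Or.inl rfl)
  rwa [Set.inter_self] at this

theorem Rep.trace (rep : Rep G H S) {C : Set α} {r : V} (hr : S r ⊆ C) {x y : α} (hx : x ∈ S r)
    (hy : y ∈ S r) : Trace H (S r) C x y := by
  have h := rep.conn r x hx y hy
  suffices h' : y ∈ S r ∧ Trace H (S r) C x y from h'.2
  clear hy
  induction h with
  | refl => exact ⟨hx, .refl⟩
  | tail _ h ih => exact ⟨h.2, ih.2.tail ⟨h.1, hr ih.1, h.2⟩⟩

theorem Guard.minLv_spec (rep : Rep G H S) {C B : Set α} {lv : α → ℕ} {p : ℕ → V}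
    (hG : Guard G H S C B lv p) {r : V} (hr : S r ⊆ C) {x : α} (hx : x ∈ S r) :
    minLv S lv r ≤ lv x ∧ lv x ≤ minLv S lv r + 1 := by
  refine ⟨Nat.sInf_le ⟨x, hx, rfl⟩, ?_⟩
  obtain ⟨y, hy, hyl⟩ := Nat.sInf_mem ((rep.nonempty r).image lv)
  have := hG.lip r y x (hr hy) hy (hr hx) (rep.trace hr hy hx)
  unfold minLv
  omega

theorem Guard.minLv_step (rep : Rep G H S) {C B : Set α} {lv : α → ℕ} {p : ℕ → V}
    (hG : Guard G H S C B lv p) {r r' : V} (hr : S r ⊆ C) (hr' : S r' ⊆ C) (h : Step G r r') :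
    minLv S lv r ≤ minLv S lv r' + 1 ∧ minLv S lv r' ≤ minLv S lv r + 1 := by
  obtain ⟨x, hx, hx'⟩ := (rep.step_iff r r').1 h
  have h1 := hG.minLv_spec rep hr hx
  have h2 := hG.minLv_spec rep hr' hx'
  omega

theorem step_of_close {q : ℕ → V} (hq : ∀ j, Step G (q j) (q (j + 1))) {a b : ℕ} (h1 : a ≤ b + 1)
    (h2 : b ≤ a + 1) : Step G (q a) (q b) := by
  obtain rfl | rfl | rfl : a = b ∨ a = b + 1 ∨ b = a + 1 := by omega
  · exact Or.inl rfl
  · exact (hq b).symm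
  · exact hq a

theorem Guard.pos_step (rep : Rep G H S) {C B : Set α} {lv : α → ℕ} {p : ℕ → V}
    (hG : Guard G H S C B lv p) {r r' : V} (hr : S r ⊆ C) (hr' : S r' ⊆ C) (h : Step G r r')
    (i : Fin 5) : Step G (p (idx S lv r i)) (p (idx S lv r' i)) := by
  have := hG.minLv_step rep hr hr' h
  apply step_of_close hG.walk <;> · unfold idx; omega

/-- A robber who moves to a vertex leading to the guarded set is caught. -/
theorem Guard.catch (rep : Rep G H S) {C B : Set α} {lv : α → ℕ} {p : ℕ → V}
    (hG : Guard G H S C B lv p) {r r' : V} (hr : S r ⊆ C) {x q : α} (hx : x ∈ S r) (hx' : x ∈ S r')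
    (hq : q ∈ B) (ht : Trace H (S r') C x q) : ∃ i, Step G (p (idx S lv r i)) r' := by
  obtain ⟨j, hj, h1, h2⟩ := hG.catch_near r' x q (hr hx) hx' hq ht
  have h3 := hG.minLv_spec rep hr hx
  refine ⟨⟨j + 2 - minLv S lv r, by omega⟩, ?_⟩
  have : idx S lv r ⟨j + 2 - minLv S lv r, by omega⟩ = j := by
    simp only [idx]; omega
  rw [this, rep.step_iff]
  refine ⟨q, hj, ?_⟩
  cases ht with
  | refl => exact hx'
  | tail _ h => exact h.2.2

/-- A connected set which meets the territory `C` either leads through `C` to a point of a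
set `B` containing the neighbours of `C`, or is contained in `C` and avoids `B`. -/
theorem trace_or_subset {C B A : Set α} (hA : ConnSet H A) (hB : Nb H C ⊆ B) {x : α}
    (hx : x ∈ A) (hxC : x ∈ C) :
    (∃ q ∈ B, Trace H A C x q) ∨ (A ⊆ C ∧ Disjoint A B) := by
  by_cases h : ∃ q ∈ B, Trace H A C x q
  · exact Or.inl h
  · push Not at h
    have key : ∀ y ∈ A, y ∈ C ∧ Trace H A C x y := by
      intro y hy
      have hxy := hA x hx y hy
      clear hy
      induction hxy with
      | refl => exact ⟨hxC, .refl⟩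
      | @tail b c _ hbc ih =>
        have ht : Trace H A C x c := ih.2.tail ⟨hbc.1, ih.1, hbc.2⟩
        refine ⟨?_, ht⟩
        by_contra hc
        exact h c (hB ⟨hc, b, ih.1, hbc.1⟩) ht
    refine Or.inr ⟨fun y hy => (key y hy).1, Set.disjoint_left.2 fun y hy hyB => ?_⟩
    exact h y hyB (key y hy).2

/-- While the teams guard all neighbours of the robber territory, the robber has to stay in the territory
and the teams can follow. Free teams can make arbitrary moves `d` meanwhile. -/
theorem hold (rep : Rep G H S) {C : Set α} {Bf : Fin 3 → Set α}
    (hcov : Nb H C ⊆ ⋃ g, Bf g) {c : Fin 3 × Fin 5 → V} {r r' : V} (hr : S r ⊆ C)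
    (has : ∀ g, Has G H S C c r g (Bf g)) (hrr : Step G r r') (d : Fin 3 × Fin 5 → V)
    (hd : S r' ⊆ C → ∀ i, Step G (c i) (d i)) :
    (∃ i, Step G (c i) r') ∨ S r' ⊆ C ∧ (∀ g, Disjoint (S r') (Bf g)) ∧
      ∃ c', (∀ i, Step G (c i) (c' i)) ∧ (∀ g, Has G H S C c' r' g (Bf g)) ∧
        ∀ g, Bf g = ∅ → ∀ i, c' (g, i) = d (g, i) := by
  classical
  have : Nonempty V := ⟨r⟩
  choose! lv p hG hp using fun g (h : (Bf g).Nonempty) => has g h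
  obtain ⟨x, hx, hx'⟩ := (rep.step_iff r r').1 hrr
  rcases trace_or_subset (rep.conn r') hcov hx' (hr hx) with ⟨q, hq, ht⟩ | ⟨hr', hdis⟩
  · obtain ⟨g, hg⟩ := Set.mem_iUnion.1 hq
    obtain ⟨i, hi⟩ := (hG g ⟨q, hg⟩).catch rep hr hx hx' hg ht
    exact Or.inl ⟨(g, i), by rwa [hp g ⟨q, hg⟩]⟩
  · refine Or.inr ⟨hr', fun g => hdis.mono_right (Set.subset_iUnion Bf g),
      fun i => if (Bf i.1).Nonempty then p i.1 (idx S (lv i.1) r' i.2) else d i, ?_, ?_, ?_⟩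
    · rintro ⟨g, i⟩
      by_cases h : (Bf g).Nonempty
      · simp only [h, if_true]
        rw [hp g h]
        exact (hG g h).pos_step rep hr hr' hrr i
      · simp only [h, if_false]
        exact hd hr' _
    · intro g h
      exact ⟨lv g, p g, hG g h, fun i => by simp [h]⟩
    · intro g h i
      simp [h]

/-- A walk from `u` which after finitely many steps continues along a given walk `p`. -/
theorem exists_approach (hconn : G.Preconnected) {p : ℕ → V}
    (hp : ∀ j, Step G (p j) (p (j + 1))) (u : V) :
    ∃ (q : ℕ → V) (L : ℕ), q 0 = u ∧ (∀ j, Step G (q j) (q (j + 1))) ∧ ∀ k, q (L + k) = p k := by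
  obtain ⟨w⟩ := hconn u (p 0)
  refine ⟨fun n => if n < w.length then w.getVert n else p (n - w.length), w.length, ?_, ?_, ?_⟩
  · cases w <;> simp
  · intro j
    rcases lt_trichotomy (j + 1) w.length with h | h | h
    · simp only [h, if_true, show j < w.length by omega]
      exact Or.inr (w.adj_getVert_succ (by omega))
    · have hj : j < w.length := by omega
      have := w.adj_getVert_succ hj
      rw [h, w.getVert_length] at this
      simp only [hj, if_true, h, lt_irrefl, if_false, Nat.sub_self]
      exact Or.inr this
    · have e : j + 1 - w.length = (j - w.length) + 1 := by omega
      simp only [show ¬ j < w.length by omega, show ¬ j + 1 < w.length by omega, if_false, e]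
      exact hp _
  · intro k; simp

/-- A free team takes up a new guard of a set `m` within the territory `C`, while the others hold the
robber inside `C`. Afterwards the robber is confined to a component `C'` of `C \ m`. -/
theorem advance [Finite V] (rep : Rep G H S) (hconn : G.Preconnected) {C : Set α}
    {Bf : Fin 3 → Set α} {g₃ : Fin 3} (hg₃ : Bf g₃ = ∅) (hcov : Nb H C ⊆ ⋃ g, Bf g)
    {m : Set α} (hG : ∃ lv p, Guard G H S C m lv p)
    {c : Fin 3 × Fin 5 → V} {r : V} (hr : S r ⊆ C) (has : ∀ g, Has G H S C c r g (Bf g))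
    (cont : ∀ C' c' r', ConnSet H C' → C'.Nonempty → C' ⊆ C → Disjoint C' m →
      Nb H C' ⊆ m ∪ Nb H C → S r' ⊆ C' → Has G H S C' c' r' g₃ m →
      (∀ g, Has G H S C' c' r' g (Bf g)) → RobberLoses G c' r') :
    RobberLoses G c r := by
  classical
  obtain ⟨lv, p, hG⟩ := hG
  -- the last step, with the new team in position
  have last : ∀ c r, S r ⊆ C → (∀ g, Has G H S C c r g (Bf g)) →
      (∀ i, c (g₃, i) = p (idx S lv r i)) → RobberLoses G c r := by
    intro c r hr has hpos
    refine robberLoses_of fun r' hrr => ?_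
    let Bf' := Function.update Bf g₃ m
    have hle : ∀ g, Bf g ⊆ Bf' g := by
      intro g
      by_cases h : g = g₃
      · subst h; rw [hg₃]; exact Set.empty_subset _
      · simp [Bf', h]
    have hm' : Bf' g₃ = m := by simp [Bf']
    have has' : ∀ g, Has G H S C c r g (Bf' g) := by
      intro g
      by_cases h : g = g₃
      · subst h; rw [hm']; exact fun _ => ⟨lv, p, hG, hpos⟩
      · simpa [Bf', h] using has g
    rcases hold rep (hcov.trans (Set.iUnion_mono hle)) hr has' hrr c (fun _ _ => Or.inl rfl) with
      h | ⟨hr', hdis, c', hcc, hc', -⟩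
    · exact Or.inl h
    · refine Or.inr ⟨c', hcc, ?_⟩
      obtain ⟨x, hx⟩ := rep.nonempty r'
      have hsub : S r' ⊆ C \ m := fun y hy =>
        ⟨hr' hy, fun hym => Set.disjoint_left.1 (hdis g₃) hy (by rwa [hm'])⟩
      let R : α → α → Prop := Relation.ReflTransGen fun a b => H.Adj a b ∧ b ∈ C \ m
      let C' : Set α := {y | R x y}
      have hin : ∀ {a b}, a ∈ C \ m → R a b → b ∈ C \ m := by
        intro a b ha h
        cases h with
        | refl => exact ha
        | tail _ h => exact h.2
      have hC'C : C' ⊆ C \ m := fun y hy => hin (hsub hx) hy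
      have hstep : ∀ {a b}, a ∈ C' → R a b →
          Relation.ReflTransGen (fun a b => H.Adj a b ∧ b ∈ C') a b := by
        intro a b ha h
        induction h with
        | refl => exact .refl
        | tail h1 h2 ih =>
          exact ih.tail ⟨h2.1, (Relation.ReflTransGen.trans (show R x a from ha) h1).tail h2⟩
      refine cont C' c' r' ?_ ⟨x, .refl⟩ (fun y hy => (hC'C hy).1)
        (Set.disjoint_left.2 fun y hy => (hC'C hy).2) ?_ ?_ ?_ ?_
      · intro y hy z hz
        exact hstep hy
          (((rtg_reverse (fun _ _ h => h.symm) (hsub hx) (show R x y from hy)).2).trans hz)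
      · rintro b ⟨hb, a, ha, hab⟩
        by_cases hbm : b ∈ m
        · exact Or.inl hbm
        · refine Or.inr ⟨fun hbC => hb ?_, a, (hC'C ha).1, hab⟩
          exact Relation.ReflTransGen.tail (show R x a from ha) ⟨hab, hbC, hbm⟩
      · intro y hy
        exact rtg_mono (rep.conn r' x hx y hy) fun a b h => ⟨h.1, hsub h.2⟩
      · have := hc' g₃
        rw [hm'] at this
        exact this.mono (fun y hy => (hC'C hy).1) subset_rfl
      · intro g
        exact (hc' g).mono (fun y hy => (hC'C hy).1) (hle g)
  -- the approach: at time `n` the `i`-th cop is at `q i (min n (L i + idx S lv r i))`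
  choose q L hq0 hq hqp using fun i => exists_approach hconn hG.walk (c (g₃, i))
  obtain ⟨N, hN⟩ : ∃ N, ∀ r i, L i + idx S lv r i ≤ N := by
    obtain ⟨N, hN⟩ := (Set.finite_range fun x : V × Fin 5 => L x.2 + idx S lv x.1 x.2).bddAbove
    exact ⟨N, fun r i => hN ⟨(r, i), rfl⟩⟩
  have main : ∀ k n, n + k = N → ∀ c r, S r ⊆ C → (∀ g, Has G H S C c r g (Bf g)) →
      (∀ i, c (g₃, i) = q i (min n (L i + idx S lv r i))) → RobberLoses G c r := by
    intro k
    induction k with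
    | zero =>
      intro n hn c r hr has hpos
      refine last c r hr has fun i => ?_
      rw [hpos, min_eq_right (by have := hN r i; omega), hqp]
    | succ k ih =>
      intro n hn c r hr has hpos
      refine robberLoses_of fun r' hrr => ?_
      let d : Fin 3 × Fin 5 → V := fun x =>
        if x.1 = g₃ then q x.2 (min (n + 1) (L x.2 + idx S lv r' x.2)) else c x
      have hd : S r' ⊆ C → ∀ i, Step G (c i) (d i) := by
        rintro hr' ⟨g, i⟩
        by_cases h : g = g₃
        · subst h
          simp only [d, if_true]
          rw [hpos]
          have := hG.minLv_step rep hr hr' hrr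
          apply step_of_close (hq i) <;> · unfold idx; omega
        · simp only [d, h, if_false]; exact Or.inl rfl
      rcases hold rep hcov hr has hrr d hd with h | ⟨hr', -, c', hcc, hc', hd⟩
      · exact Or.inl h
      · refine Or.inr ⟨c', hcc, ih (n + 1) (by omega) c' r' hr' hc' fun i => ?_⟩
        rw [hd g₃ hg₃]; simp [d]
  refine main N 0 (by omega) c r hr has fun i => ?_
  rw [Nat.zero_min, hq0]

end Teams

/-! ### Confining the robber by guarded paths -/

theorem exists_first {α : Type*} {N : Set α} {L : List α} (h : ∃ z ∈ L, z ∈ N) :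
    ∃ a x b, L = a ++ x :: b ∧ x ∈ N ∧ ∀ z ∈ a, z ∉ N := by
  classical
  induction L with
  | nil => simp at h
  | cons u L ih =>
    by_cases hu : u ∈ N
    · exact ⟨[], u, L, rfl, hu, by simp⟩
    · obtain ⟨a, x, b, rfl, hx, ha⟩ := ih (by
        obtain ⟨z, hz, hzN⟩ := h
        rcases List.mem_cons.1 hz with rfl | hz
        exacts [(hu hzN).elim, ⟨z, hz, hzN⟩])
      refine ⟨u :: a, x, b, rfl, hx, fun z hz => ?_⟩
      rcases List.mem_cons.1 hz with rfl | hz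
      exacts [hu, ha z hz]

theorem exists_last {α : Type*} {N : Set α} {L : List α} (h : ∃ z ∈ L, z ∈ N) :
    ∃ a x b, L = a ++ x :: b ∧ x ∈ N ∧ ∀ z ∈ b, z ∉ N := by
  obtain ⟨a, x, b, hL, hx, ha⟩ := exists_first (N := N) (L := L.reverse) (by simpa using h)
  refine ⟨b.reverse, x, a.reverse, ?_, hx, by simpa using ha⟩
  rw [← List.reverse_reverse L, hL]; simp

theorem connSet_of_isChain {α : Type*} {H : SimpleGraph α} {l : List α} (h : l.IsChain H.Adj) :
    ConnSet H {a | a ∈ l} := by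
  induction l with
  | nil => intro x hx; simp at hx
  | cons u l ih =>
    cases l with
    | nil =>
      intro x hx y hy
      simp only [List.mem_singleton, Set.mem_ofPred_eq] at hx hy
      subst hx; subst hy; exact .refl
    | cons v l =>
      rw [List.isChain_cons_cons] at h
      have ih := ih h.2
      have hup : ∀ {x y}, Relation.ReflTransGen (fun a b => H.Adj a b ∧ b ∈ {a | a ∈ v :: l}) x y →
          Relation.ReflTransGen (fun a b => H.Adj a b ∧ b ∈ {a | a ∈ u :: v :: l}) x y :=
        fun hxy => rtg_mono hxy fun a b hab => ⟨hab.1, List.mem_cons_of_mem _ hab.2⟩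
      intro x hx y hy
      have hv : v ∈ {a | a ∈ v :: l} := List.mem_cons_self
      rcases List.mem_cons.1 hx with rfl | hx' <;> rcases List.mem_cons.1 hy with rfl | hy'
      · exact .refl
      · exact .head ⟨h.1, List.mem_cons_of_mem _ hv⟩ (hup (ih v hv y hy'))
      · exact (hup (ih x hx' v hv)).tail ⟨h.1.symm, List.mem_cons_self⟩
      · exact hup (ih _ hx' _ ‹_›)

/-- If `H` has no `K₃,₃` minor then a connected set `C` disjoint from three internally disjoint paths with
common ends misses the interior of one of these paths: otherwise the two ends and `C` are one side of
a `K₃,₃` minor, and the three interiors the other. -/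
theorem exists_missed_arc {α : Type*} {H : SimpleGraph α} (hK : NoK33 H) {C : Set α}
    (hfin : C.Finite) (hC : ConnSet H C) {x y : α} {A : Fin 3 → List α} (hxy : x ≠ y)
    (hA : ∀ i, (x :: A i ++ [y]).IsChain H.Adj) (hdis : ∀ i j, i ≠ j → ∀ a ∈ A i, a ∉ A j)
    (hx : ∀ i, x ∉ A i) (hy : ∀ i, y ∉ A i) (hxC : x ∉ C) (hyC : y ∉ C)
    (hAC : ∀ i, ∀ a ∈ A i, a ∉ C) : ∃ i, ∀ a ∈ A i, a ∉ Nb H C := by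
  by_contra! hcon
  have hchain : ∀ i, (A i).IsChain H.Adj := fun i =>
    isChain_mid (hA i) ⟨[x], [y], by simp⟩
  have hends : ∀ i, (∃ b ∈ A i, H.Adj x b) ∧ ∃ b ∈ A i, H.Adj y b := by
    intro i
    have hA' := hA i
    obtain ⟨z, hz, -⟩ := hcon i
    constructor
    · cases hl : A i with
      | nil => simp [hl] at hz
      | cons u l =>
        rw [hl, List.cons_append, List.cons_append, List.isChain_cons_cons] at hA'
        exact ⟨u, List.mem_cons_self, hA'.1⟩
    · rcases List.eq_nil_or_concat (A i) with hl | ⟨l, u, hl⟩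
      · simp [hl] at hz
      · refine ⟨u, by simp [hl], ?_⟩
        have h2 : [u, y].IsChain H.Adj := isChain_mid hA' ⟨x :: l, [], by simp [hl]⟩
        rw [List.isChain_cons_cons] at h2
        exact h2.1.symm
  refine hK ![{x}, {y}, C] (fun i => {a | a ∈ A i}) ?_ ?_ ?_ ?_ ?_ ?_ ?_ ?_
  · intro i
    fin_cases i
    · rintro a rfl b rfl; exact .refl
    · rintro a rfl b rfl; exact .refl
    · exact hC
  · exact fun j => connSet_of_isChain (hchain j)
  · intro i
    fin_cases i
    · exact Set.finite_singleton _
    · exact Set.finite_singleton _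
    · exact hfin
  · exact fun j => (A j).finite_toSet
  · intro i i' hii
    have hyx := hxy.symm
    fin_cases i <;> fin_cases i' <;> simp_all
  · exact fun j j' hjj => Set.disjoint_left.2 (hdis j j' hjj)
  · intro i j
    fin_cases i
    · simpa using hx j
    · simpa using hy j
    · exact Set.disjoint_right.2 (hAC j)
  · intro i j
    fin_cases i
    · simpa using (hends j).1
    · simpa using (hends j).2
    · obtain ⟨b, hb, -, a, ha, hab⟩ := hcon j
      exact ⟨a, ha, b, hb, hab⟩

/-- Two different points `x`, `y` outside a connected territory `C` but next to it are the ends of a path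
whose interior lies in `C`, and which can be guarded. -/
theorem exists_guarded_path {V α : Type*} {G : SimpleGraph V} {H : SimpleGraph α} {S : V → Set α}
    (rep : Rep G H S) {C : Set α} (hC : ConnSet H C) {x y : α} (hx : x ∈ Nb H C) (hy : y ∈ Nb H C)
    (hxy : x ≠ y) :
    ∃ m : List α, (x :: m ++ [y]).Nodup ∧ (x :: m ++ [y]).IsChain H.Adj ∧ (∃ z, z ∈ m) ∧
      (∀ z ∈ m, z ∈ C) ∧ ∃ lv p, Guard G H S C {a | a ∈ x :: m ++ [y]} lv p := by
  have hnear : ∀ {z}, z ∈ Nb H C → ∃ c ∈ C, H.Adj z c := by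
    rintro z ⟨-, c, hc, h⟩
    exact ⟨c, hc, h.symm⟩
  have hcov : ∃ v, y ∈ S v := by
    obtain ⟨c, -, h⟩ := hnear hy
    obtain ⟨v, hv, -⟩ := rep.edge _ _ h
    exact ⟨v, hv⟩
  obtain ⟨l, hnd, hch, hhd, hlast, hmem, lv, p, hG⟩ :=
    exists_guard rep hC (Or.inr (hnear hx)) (Or.inr (hnear hy)) hcov
  cases l with
  | nil => simp at hhd
  | cons u l =>
    obtain rfl : u = x := by simpa using hhd
    rcases List.eq_nil_or_concat l with rfl | ⟨m, w, rfl⟩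
    · simp at hlast; exact (hxy hlast).elim
    · obtain rfl : w = y := by simpa [List.getLast?_cons] using hlast
      rw [List.concat_eq_append, ← List.cons_append] at hnd hch hmem hG
      refine ⟨m, hnd, hch.imp fun a b h => h.1, ?_, ?_, lv, p, hG⟩
      · cases m with
        | nil =>
          simp only [List.cons_append, List.nil_append, List.isChain_cons_cons] at hch
          rcases hch.1.2 with h | h
          exacts [(hx.1 h).elim, (hy.1 h).elim]
        | cons z m => exact ⟨z, List.mem_cons_self⟩
      · intro z hz
        rcases hmem z (by simp [hz]) with h | rfl | rfl
        · exact h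
        · simp [hz] at hnd
        · rw [List.nodup_append] at hnd
          exact (hnd.2.2 z (List.mem_cons_of_mem _ hz) z (by simp) rfl).elim

section States

variable {V α : Type*} {G : SimpleGraph V} {H : SimpleGraph α} {S : V → Set α}

/-- One team guards all neighbours of the territory `C`, and these lie on a path `M` of `H`. -/
def PathState (G : SimpleGraph V) (H : SimpleGraph α) (S : V → Set α) (C : Set α)
    (c : Fin 3 × Fin 5 → V) (r : V) : Prop :=
  ∃ (g : Fin 3) (M : List α), M.Nodup ∧ M.IsChain H.Adj ∧ (∀ z ∈ M, z ∉ C) ∧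
    Nb H C ⊆ {z | z ∈ M} ∧ Has G H S C c r g (Nb H C)

/-- The neighbours of the territory `C` lie on a cycle `x, m, y, A` of `H`; one team
guards those on the path from `x` over `m` to `y`, another one those on `A`. -/
def CycleState (G : SimpleGraph V) (H : SimpleGraph α) (S : V → Set α) (C : Set α)
    (c : Fin 3 × Fin 5 → V) (r : V) : Prop :=
  ∃ (g₁ g₂ : Fin 3) (x y : α) (m A : List α), g₁ ≠ g₂ ∧ (x :: m ++ [y]).IsChain H.Adj ∧
    (y :: A ++ [x]).IsChain H.Adj ∧ (x :: m ++ y :: A).Nodup ∧ (∀ z ∈ x :: m ++ y :: A, z ∉ C) ∧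
    Nb H C ⊆ {z | z ∈ x :: m ++ y :: A} ∧ Has G H S C c r g₁ (Nb H C ∩ {z | z ∈ x :: m ++ [y]}) ∧
    Has G H S C c r g₂ (Nb H C ∩ {z | z ∈ A})

/-- If the guarded path carries two neighbours of `C`, a second team guards a path through `C` between
the outermost two, which gives a cycle. Otherwise a second team guards a path from the only neighbour to
a point of the robber, and the new territory has neighbours on this path only. -/
theorem PathState.loses [Finite V] (rep : Rep G H S) (hconn : G.Preconnected) {C : Set α}
    (hC : ConnSet H C)
    (ih : ∀ C', C' ⊂ C → ConnSet H C' → ∀ c r, S r ⊆ C' →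
      PathState G H S C' c r ∨ CycleState G H S C' c r → RobberLoses G c r)
    {c : Fin 3 × Fin 5 → V} {r : V} (hr : S r ⊆ C) (h : PathState G H S C c r) :
    RobberLoses G c r := by
  obtain ⟨g, M, hnd, hch, hMC, hNM, hg⟩ := h
  obtain ⟨g₃, hg₃⟩ : ∃ g₃, g₃ ≠ g := (show ∀ g : Fin 3, ∃ g₃, g₃ ≠ g by decide) g
  let Bf : Fin 3 → Set α := fun k => if k = g then Nb H C else ∅
  have hBg : Bf g = Nb H C := by simp [Bf]
  have hBg₃ : Bf g₃ = ∅ := by simp [Bf, hg₃]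
  have has : ∀ k, Has G H S C c r k (Bf k) := by
    intro k
    by_cases hk : k = g
    · subst hk; rwa [hBg]
    · intro hne; simp [Bf, hk] at hne
  have hcov : Nb H C ⊆ ⋃ k, Bf k := fun z hz => Set.mem_iUnion.2 ⟨g, by rwa [hBg]⟩
  by_cases h2 : ∃ x ∈ Nb H C, ∃ y ∈ Nb H C, x ≠ y
  · -- `x` and `y` are the first and the last neighbour of `C` on `M`
    obtain ⟨u, hu, v, hv, huv⟩ := h2
    obtain ⟨a, x, b, rfl, hx, ha⟩ := exists_first (N := Nb H C) (L := M) ⟨u, hNM hu, hu⟩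
    obtain ⟨b, y, e, rfl, hy, he⟩ := exists_last (N := Nb H C) (L := b) (by
      by_contra! hb
      have hall : ∀ z ∈ Nb H C, z = x := by
        intro z hz
        have := hNM hz
        simp only [Set.mem_ofPred_eq, List.mem_append, List.mem_cons] at this
        rcases this with h | h | h
        exacts [(ha z h hz).elim, h, (hb z h hz).elim]
      exact huv ((hall u hu).trans (hall v hv).symm))
    have hyx : y ≠ x := by grind
    obtain ⟨m, hmnd, hmch, ⟨z, hz⟩, hmC, hG⟩ := exists_guarded_path rep hC hy hx hyx
    refine advance rep hconn hBg₃ hcov hG hr has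
      fun C' c' r' hC' _ hC'C hdis hNC' hr' h3 has' => ?_
    refine ih C' ⟨hC'C, fun h => ?_⟩ hC' c' r' hr' (Or.inr ⟨g₃, g, y, x, m, b, hg₃, hmch, ?_, ?_, ?_,
      ?_, h3.mono subset_rfl Set.inter_subset_right, ?_⟩)
    · exact Set.disjoint_left.1 hdis (h (hmC z hz)) (by simp [hz])
    · exact isChain_mid hch ⟨a, e, by simp⟩
    · grind
    · intro z hz hzC'
      have h1 := hMC z
      have h2 := Set.disjoint_left.1 hdis hzC'
      have h3 := hC'C hzC'
      grind
    · intro z hz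
      have h1 := hNC' hz
      have h2 := ha z
      have h3 := he z
      have h4 := @hNM z
      grind
    · refine (hBg ▸ has' g).mono subset_rfl ?_
      rintro z ⟨hz, hzb⟩
      have h1 := hNC' hz
      have h2 := hmC z
      have h3 := hMC z
      grind
  · -- at most one neighbour
    obtain ⟨z, hz⟩ := rep.nonempty r
    obtain ⟨x, hxC, hNx⟩ : ∃ x, (x ∈ C ∨ ∃ c ∈ C, H.Adj x c) ∧ Nb H C ⊆ {x} := by
      push Not at h2
      rcases (Nb H C).eq_empty_or_nonempty with h | ⟨x, hx⟩
      · exact ⟨z, Or.inl (hr hz), by simp [h]⟩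
      · obtain ⟨-, c, hc, hxc⟩ := id hx
        exact ⟨x, Or.inr ⟨c, hc, hxc.symm⟩, fun y hy => h2 y hy x hx⟩
    obtain ⟨l, hlnd, hlch, hhd, hlast, -, hG⟩ :=
      exists_guard rep hC hxC (Or.inl (hr hz)) ⟨r, hz⟩
    have hxl : x ∈ l := List.mem_of_mem_head? hhd
    have hzl : z ∈ l := List.mem_of_mem_getLast? hlast
    refine advance rep hconn hBg₃ hcov hG hr has
      fun C' c' r' hC' _ hC'C hdis hNC' hr' h3 has' => ?_
    have hN' : Nb H C' ⊆ {z | z ∈ l} := hNC'.trans (Set.union_subset subset_rfl (hNx.trans (by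
      rintro _ rfl; exact hxl)))
    exact ih C' ⟨hC'C, fun h => Set.disjoint_left.1 hdis (h (hr hz)) hzl⟩ hC' c' r' hr'
      (Or.inl ⟨g₃, l, hlnd, hlch.imp fun a b h => h.1, fun a ha haC => Set.disjoint_left.1 hdis haC ha,
        hN', h3.mono subset_rfl hN'⟩)

theorem isChain_glue {α : Type*} {R : α → α → Prop} {l₁ l₂ : List α} {z : α}
    (h₁ : (l₁ ++ [z]).IsChain R) (h₂ : (z :: l₂).IsChain R) : (l₁ ++ z :: l₂).IsChain R :=
  List.isChain_split.2 ⟨h₁, h₂⟩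

/-! In the next lemmas the cycle `a, x, b, a', y, b'` is cut at `x` and `y` into the arcs
`b, a'` and `b', a`, and `k` is a chord from `x` to `y` through the territory. -/

section

variable {a b a' b' k : List α} {x y : α}

theorem arcs_disjoint (hnd : (a ++ x :: (b ++ a') ++ y :: b').Nodup) :
    (x ∉ b ++ a' ∧ x ∉ b' ++ a) ∧ (y ∉ b ++ a' ∧ y ∉ b' ++ a) ∧ ∀ w ∈ b ++ a', w ∉ b' ++ a := by
  grind

theorem nodup_cycle₁ (hnd : (a ++ x :: (b ++ a') ++ y :: b').Nodup) (hk : (x :: k ++ [y]).Nodup)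
    (hkL : ∀ w ∈ k, w ∉ a ++ x :: (b ++ a') ++ y :: b') : (x :: k ++ y :: (b' ++ a)).Nodup := by
  have h1 : (b' ++ a).Nodup := by grind
  grind

theorem nodup_cycle₂ (hnd : (a ++ x :: (b ++ a') ++ y :: b').Nodup) (hk : (x :: k ++ [y]).Nodup)
    (hkL : ∀ w ∈ k, w ∉ a ++ x :: (b ++ a') ++ y :: b') :
    (y :: k.reverse ++ x :: (b ++ a')).Nodup := by
  have h1 : (b ++ a').Nodup := by grind
  have h2 : k.reverse.Nodup := List.nodup_reverse.2 (by grind)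
  obtain ⟨⟨hx, -⟩, ⟨hy, -⟩, -⟩ := arcs_disjoint hnd
  have h3 : x ∉ k ∧ y ∉ k ∧ x ≠ y := by grind
  have h4 : ∀ w ∈ k, w ∉ b ++ a' := fun w hw hwb => hkL w hw (by simp at hwb ⊢; tauto)
  rw [List.cons_append, List.nodup_cons, List.nodup_append, List.nodup_cons]
  refine ⟨?_, h2, ⟨hx, h1⟩, ?_⟩
  · simp only [List.mem_append, List.mem_reverse, List.mem_cons] at hy ⊢
    tauto
  · intro w hw v hv hwv
    subst hwv
    rw [List.mem_reverse] at hw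
    rcases List.mem_cons.1 hv with rfl | hv
    exacts [h3.1 hw, h4 w hw hv]

end

set_option maxHeartbeats 1000000 in
/-- Let the arc `L` of the cycle be guarded by `g₁` and the arc `A` by `g₂`, and let `x'`, `y'` be the first
neighbours of `C` on these arcs. The parts of `L` before `x'` and of `A` before `y'` carry no neighbours.
So if the third team guards a path from `x'` to `y'` through `C`, then each of the two arcs between `x'`
and `y'` of the old cycle is effectively guarded by one team. -/
theorem CycleState.loses [Finite V] (rep : Rep G H S) (hconn : G.Preconnected) (hK : NoK33 H)
    {C : Set α} (hfin : C.Finite) (hC : ConnSet H C)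
    (ih : ∀ C', C' ⊂ C → ConnSet H C' → ∀ c r, S r ⊆ C' →
      PathState G H S C' c r ∨ CycleState G H S C' c r → RobberLoses G c r)
    {c : Fin 3 × Fin 5 → V} {r : V} (hr : S r ⊆ C) (h : CycleState G H S C c r) :
    RobberLoses G c r := by
  obtain ⟨g₁, g₂, x, y, m, A, hg, hch₁, hch₂, hnd, hLC, hNL, has₁, has₂⟩ := h
  by_cases hN₁ : ∃ z ∈ x :: m ++ [y], z ∈ Nb H C
  swap
  · push Not at hN₁
    have hNA : Nb H C ⊆ {z | z ∈ A} := by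
      intro z hz
      have h1 := hNL hz
      have h2 := hN₁ z
      grind
    exact PathState.loses rep hconn hC ih hr ⟨g₂, A, by grind,
      isChain_mid hch₂ ⟨[y], [x], by simp⟩, fun z hz => hLC z (by simp [hz]), hNA,
      has₂.mono subset_rfl (Set.subset_inter subset_rfl hNA)⟩
  by_cases hN₂ : ∃ z ∈ A, z ∈ Nb H C
  swap
  · push Not at hN₂
    have hNA : Nb H C ⊆ {z | z ∈ x :: m ++ [y]} := by
      intro z hz
      have h1 := hNL hz
      have h2 := hN₂ z
      grind
    exact PathState.loses rep hconn hC ih hr ⟨g₁, x :: m ++ [y], by grind,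
      hch₁, fun z hz => hLC z (by grind), hNA,
      has₁.mono subset_rfl (Set.subset_inter subset_rfl hNA)⟩
  -- the cycle, traversed twice
  have hcyc : (x :: m ++ y :: A ++ (x :: m ++ y :: A)).IsChain H.Adj := by
    have h1 : (x :: m ++ y :: (A ++ [x])).IsChain H.Adj := isChain_glue hch₁ hch₂
    have h2 : (x :: m ++ y :: A ++ [x]).IsChain H.Adj := by simpa using h1
    have h3 : (x :: (m ++ y :: A)).IsChain H.Adj := isChain_mid h1 ⟨[], [x], by simp⟩
    exact isChain_glue h2 h3
  -- `x'` and `y'` are the first neighbours of `C` on the two guarded paths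
  obtain ⟨a, x', b, hL, hx', ha⟩ := exists_first hN₁
  obtain ⟨a', y', b', rfl, hy', ha'⟩ := exists_first hN₂
  have hL' : x :: m ++ y :: (a' ++ y' :: b') = a ++ x' :: (b ++ a') ++ y' :: b' := by
    have : x :: m ++ y :: (a' ++ y' :: b') = (x :: m ++ [y]) ++ (a' ++ y' :: b') := by simp
    rw [this, hL]; simp
  rw [hL'] at hcyc hnd hLC hNL
  have hxy' : x' ≠ y' := by grind
  obtain ⟨k, hknd, hkch, ⟨z, hz⟩, hkC, hG⟩ := exists_guarded_path rep hC hx' hy' hxy'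
  have hA₁ : (x' :: (b ++ a') ++ [y']).IsChain H.Adj :=
    isChain_mid hcyc ⟨a, b' ++ (a ++ x' :: (b ++ a') ++ y' :: b'), by simp⟩
  have hA₂ : (y' :: (b' ++ a) ++ [x']).IsChain H.Adj :=
    isChain_mid hcyc ⟨a ++ x' :: (b ++ a'), b ++ a' ++ y' :: b', by simp⟩
  obtain ⟨g₃, hg₃₁, hg₃₂⟩ : ∃ g₃, g₃ ≠ g₁ ∧ g₃ ≠ g₂ :=
    (show ∀ g₁ g₂ : Fin 3, ∃ g₃, g₃ ≠ g₁ ∧ g₃ ≠ g₂ by decide) g₁ g₂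
  let Bf : Fin 3 → Set α := fun k => if k = g₁ then Nb H C ∩ {z | z ∈ x :: m ++ [y]} else
    if k = g₂ then Nb H C ∩ {z | z ∈ a' ++ y' :: b'} else ∅
  have hB₁ : Bf g₁ = Nb H C ∩ {z | z ∈ x :: m ++ [y]} := by simp [Bf]
  have hB₂ : Bf g₂ = Nb H C ∩ {z | z ∈ a' ++ y' :: b'} := by simp [Bf, hg.symm]
  have hB₃ : Bf g₃ = ∅ := by simp [Bf, hg₃₁, hg₃₂]
  have has : ∀ k, Has G H S C c r k (Bf k) := by
    intro k
    by_cases hk : k = g₁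
    · subst hk; rwa [hB₁]
    · by_cases hk' : k = g₂
      · subst hk'; rwa [hB₂]
      · intro hne; simp [Bf, hk, hk'] at hne
  have hcov : Nb H C ⊆ ⋃ k, Bf k := by
    intro z hz
    have h1 := hNL hz
    by_cases hzL : z ∈ x :: m ++ [y]
    · exact Set.mem_iUnion.2 ⟨g₁, hB₁ ▸ ⟨hz, hzL⟩⟩
    · exact Set.mem_iUnion.2 ⟨g₂, hB₂ ▸ ⟨hz, by grind⟩⟩
  refine advance rep hconn hB₃ hcov hG hr has fun C' c' r' hC' _ hC'C hdis hNC' hr' h3 has' => ?_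
  have h1 := has' g₁
  have h2 := has' g₂
  rw [hB₁] at h1
  rw [hB₂] at h2
  have hkC' : ∀ w ∈ x' :: k ++ [y'], w ∉ C' := fun w hw hwC => Set.disjoint_left.1 hdis hwC hw
  have hLC' : ∀ w ∈ a ++ x' :: (b ++ a') ++ y' :: b', w ∉ C' := fun w hw hwC => hLC w hw (hC'C hwC)
  have hkL : ∀ w ∈ k, w ∉ a ++ x' :: (b ++ a') ++ y' :: b' := fun w hw hwL => hLC w hwL (hkC w hw)
  have hNN : ∀ w ∈ Nb H C', w ∈ a ++ x' :: (b ++ a') ++ y' :: b' → w ∈ Nb H C := by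
    intro w hw hwL
    rcases hNC' hw with h | h
    · have := hkL w
      grind
    · exact h
  have hN' : ∀ w ∈ Nb H C', w ∈ k ∨ w ∈ a ++ x' :: (b ++ a') ++ y' :: b' := by
    intro w hw
    rcases hNC' hw with h | h
    · grind
    · exact Or.inr (hNL h)
  have hlt : C' ⊂ C := ⟨hC'C, fun h => hkC' z (by simp [hz]) (h (hkC z hz))⟩
  refine ih C' hlt hC' c' r' hr' (Or.inr ?_)
  have hrev : ∀ l : List α, l.IsChain H.Adj → l.reverse.IsChain H.Adj := fun l hl =>
    List.isChain_reverse.2 (hl.imp fun _ _ h => h.symm)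
  obtain ⟨hx, hy, hbb⟩ := arcs_disjoint hnd
  have hkL₀ := hkL
  simp only [List.mem_append, List.mem_cons, List.not_mem_nil] at hkC' hLC' hkL hx hy hbb hNN hN'
  obtain ⟨i, hi⟩ := exists_missed_arc hK (hfin.subset hC'C) hC' (A := ![b ++ a', (b' ++ a).reverse, k])
    hxy' (by
      intro i
      fin_cases i
      · exact hA₁
      · simpa using hrev _ hA₂
      · exact hkch) (by
      intro i j hij w
      have e1 := hkL w
      have e2 := hbb w
      revert e1 e2 hij
      clear * -
      intro e1 e2 hij
      fin_cases i <;> fin_cases j <;> simp at hij ⊢ <;> tauto) (by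
      intro i
      have e1 := hkL x'
      revert e1 hx
      clear * -
      intro e1 hx
      fin_cases i <;> simp <;> tauto) (by
      intro i
      have e1 := hkL y'
      revert e1 hy
      clear * -
      intro e1 hy
      fin_cases i <;> simp <;> tauto) (hLC' _ (by simp)) (hLC' _ (by simp)) (by
      intro i w
      have e1 := hLC' w
      have e2 := hkC' w
      revert e1 e2
      clear * -
      intro e1 e2
      fin_cases i <;> simp <;> tauto)
  fin_cases i
  -- the new cycle consists of the new path and the arc `b', a`, guarded by `g₂` alone
  · have hi : ∀ w ∈ b ++ a', w ∉ Nb H C' := hi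
    refine ⟨g₃, g₂, x', y', k, b' ++ a, hg₃₂, hkch, hA₂, nodup_cycle₁ hnd hknd hkL₀,
      ?_, ?_, h3.mono subset_rfl Set.inter_subset_right, h2.mono subset_rfl ?_⟩
    · intro w
      have e1 := hLC' w
      have e2 := hkC' w
      simp only [List.mem_append, List.mem_cons]
      revert e1 e2
      clear * -
      tauto
    · intro w hw
      have e1 := hN' w hw
      have e2 := hi w
      simp only [List.mem_append, List.mem_cons, Set.mem_ofPred_eq] at e2 ⊢
      revert hw e1 e2
      clear * -
      tauto
    · rintro w ⟨hw, hwA⟩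
      have e1 := hNN w hw
      have e2 := ha w
      simp only [List.mem_append, List.mem_cons, Set.mem_ofPred_eq, Set.mem_inter_iff] at hwA ⊢
      revert e1 e2 hwA
      clear * -
      tauto
  -- the new cycle consists of the new path and the arc `b, a'`, guarded by `g₁` alone
  · have hi : ∀ w ∈ (b' ++ a).reverse, w ∉ Nb H C' := hi
    refine ⟨g₃, g₁, y', x', k.reverse, b ++ a', hg₃₁, by simpa using hrev _ hkch, hA₁,
      nodup_cycle₂ hnd hknd hkL₀, ?_, ?_,
      h3.mono subset_rfl ?_, h1.mono subset_rfl ?_⟩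
    · intro w
      have e1 := hLC' w
      have e2 := hkC' w
      simp only [List.mem_append, List.mem_cons, List.mem_reverse]
      revert e1 e2
      clear * -
      tauto
    · intro w hw
      have e1 := hN' w hw
      have e2 := hi w
      simp only [List.mem_append, List.mem_cons, List.mem_reverse, Set.mem_ofPred_eq] at e2 ⊢
      revert hw e1 e2
      clear * -
      tauto
    · rintro w ⟨-, hwA⟩
      simp only [List.mem_append, List.mem_cons, List.mem_reverse, Set.mem_ofPred_eq] at hwA ⊢
      revert hwA
      clear * -
      tauto
    · rintro w ⟨hw, hwA⟩
      have e1 := hNN w hw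
      have e2 := ha' w
      rw [hL]
      simp only [List.mem_append, List.mem_cons, Set.mem_ofPred_eq, Set.mem_inter_iff] at hwA ⊢
      revert e1 e2 hwA
      clear * -
      tauto
  -- the new path has no neighbour of `C'` in its interior: the old cycle remains
  · have hi : ∀ w ∈ k, w ∉ Nb H C' := hi
    have hiff : ∀ w, w ∈ x :: m ++ y :: (a' ++ y' :: b') ↔
        ((w ∈ a ∨ w = x' ∨ w ∈ b ∨ w ∈ a') ∨ w = y' ∨ w ∈ b') := by
      intro w; rw [hL']; simp only [List.mem_append, List.mem_cons]
    have hsub : Nb H C' ⊆ Nb H C := fun w hw => hNN w hw ((hN' w hw).resolve_left fun h => hi w h hw)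
    exact ⟨g₁, g₂, x, y, m, a' ++ y' :: b', hg, hch₁, hch₂, hL' ▸ hnd,
      fun w hw => hLC' w ((hiff w).1 hw),
      fun w hw => (hiff w).2 ((hN' w hw).resolve_left fun h => hi w h hw),
      h1.mono subset_rfl (Set.inter_subset_inter_left _ hsub),
      h2.mono subset_rfl (Set.inter_subset_inter_left _ hsub)⟩

/-- Shrinking the territory of the robber again and again, three teams of five cops win. -/
theorem states_lose [Finite V] (rep : Rep G H S) (hconn : G.Preconnected) (hK : NoK33 H)
    {C : Set α} (hfin : C.Finite) (hC : ConnSet H C) {c : Fin 3 × Fin 5 → V} {r : V}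
    (hr : S r ⊆ C) (h : PathState G H S C c r ∨ CycleState G H S C c r) : RobberLoses G c r := by
  induction hn : C.ncard using Nat.strong_induction_on generalizing C c r with
  | _ n ih =>
    have ih' : ∀ C', C' ⊂ C → ConnSet H C' → ∀ c r, S r ⊆ C' →
        PathState G H S C' c r ∨ CycleState G H S C' c r → RobberLoses G c r :=
      fun C' hlt hC' c r hr' h' =>
        ih C'.ncard (hn ▸ Set.ncard_lt_ncard hlt hfin) (hfin.subset hlt.1) hC' hr' h' rfl
    rcases h with h | h
    · exact h.loses rep hconn hC ih' hr
    · exact h.loses rep hconn hK hfin hC ih' hr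

/-- At the beginning the territory consists of all points represented, and it has no neighbours. -/
theorem copWin_fifteen [Finite V] (rep : Rep G H S) (hconn : G.Connected) (hK : NoK33 H) :
    CopWin G 15 := by
  obtain ⟨v₀⟩ := hconn.nonempty
  refine copWin_of_robberLoses (finProdFinEquiv (m := 3) (n := 5)).symm (fun _ => v₀) fun r => ?_
  have hN : Nb H (⋃ v, S v) = ∅ := by
    refine Set.eq_empty_of_forall_notMem ?_
    rintro b ⟨hb, a, -, hab⟩
    obtain ⟨v, -, hv⟩ := rep.edge a b hab
    exact hb (Set.mem_iUnion.2 ⟨v, hv⟩)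
  refine states_lose rep hconn.preconnected hK (C := ⋃ v, S v) (Set.finite_iUnion rep.finite) ?_
    (Set.subset_iUnion S r) (Or.inl ⟨0, [], List.nodup_nil, .nil, by simp, by simp [hN], ?_⟩)
  · have hup : ∀ {v x y}, x ∈ S v → y ∈ S v →
        Relation.ReflTransGen (fun a b => H.Adj a b ∧ b ∈ ⋃ v, S v) x y := fun hx hy =>
      rtg_mono (rep.conn _ _ hx _ hy) fun a b h => ⟨h.1, Set.mem_iUnion.2 ⟨_, h.2⟩⟩
    intro x hx y hy
    obtain ⟨u, hu⟩ := Set.mem_iUnion.1 hx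
    obtain ⟨v, hv⟩ := Set.mem_iUnion.1 hy
    obtain ⟨w⟩ := hconn.preconnected u v
    clear hx
    induction w generalizing x with
    | nil => exact hup hu hv
    | cons h w ih =>
      obtain ⟨z, hz, hz'⟩ := (rep.step_iff _ _).1 (Or.inr h)
      exact (hup hu hz).trans (ih z hz' hv)
  · rintro ⟨b, hb⟩
    simp [hN] at hb

end States

/-! ### Strings as connected sets of grid cells -/

/-- The closed square of side length `δ` whose lower left corner is `δ • c`. -/
def cell (δ : ℝ) (c : ℤ × ℤ) : Set (ℝ × ℝ) :=
  Set.Icc (c.1 * δ) ((c.1 + 1) * δ) ×ˢ Set.Icc (c.2 * δ) ((c.2 + 1) * δ)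

/-- The grid squares which meet `s`. -/
def cells (δ : ℝ) (s : Set (ℝ × ℝ)) : Set (ℤ × ℤ) :=
  {c | (cell δ c ∩ s).Nonempty}

variable {δ : ℝ} {s : Set (ℝ × ℝ)}

theorem exists_mem_cell (hδ : 0 < δ) (p : ℝ × ℝ) : ∃ c, p ∈ cell δ c := by
  have h : ∀ t : ℝ, ∃ a : ℤ, t ∈ Set.Icc (a * δ) ((a + 1) * δ) := fun t =>
    ⟨⌊t / δ⌋, (le_div_iff₀ hδ).1 (Int.floor_le _), ((div_lt_iff₀ hδ).1 (Int.lt_floor_add_one _)).le⟩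
  obtain ⟨a, ha⟩ := h p.1
  obtain ⟨b, hb⟩ := h p.2
  exact ⟨(a, b), ha, hb⟩

theorem dist_le_of_mem_cell {c : ℤ × ℤ} {p q : ℝ × ℝ} (hp : p ∈ cell δ c) (hq : q ∈ cell δ c) :
    dist p q ≤ δ := by
  obtain ⟨⟨h1, h2⟩, h3, h4⟩ := hp
  obtain ⟨⟨k1, k2⟩, k3, k4⟩ := hq
  rw [Prod.dist_eq, Real.dist_eq, Real.dist_eq]
  refine max_le (abs_le.2 ⟨?_, ?_⟩) (abs_le.2 ⟨?_, ?_⟩) <;> linarith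

theorem cells_finite (hδ : 0 < δ) (hs : Bornology.IsBounded s) : (cells δ s).Finite := by
  obtain ⟨R, hR⟩ := hs.subset_closedBall (0 : ℝ × ℝ)
  have key : ∀ (a : ℤ) (t : ℝ), |t| ≤ R → t ∈ Set.Icc (a * δ) ((a + 1) * δ) →
      a ∈ Set.Icc (⌊-R / δ⌋ - 1) ⌈R / δ⌉ := by
    rintro a t ht ⟨h1, h2⟩
    obtain ⟨h3, h4⟩ := abs_le.1 ht
    constructor
    · have : (-R / δ) ≤ a + 1 := (div_le_iff₀ hδ).2 (by linarith)
      have h5 : ((⌊-R / δ⌋ : ℤ) : ℝ) ≤ ((a + 1 : ℤ) : ℝ) := by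
        push_cast; exact (Int.floor_le _).trans this
      have := Int.cast_le.1 h5
      omega
    · have : (a : ℝ) ≤ R / δ := (le_div_iff₀ hδ).2 (by linarith)
      exact Int.cast_le.1 (this.trans (Int.le_ceil _))
  refine ((Set.finite_Icc (⌊-R / δ⌋ - 1) ⌈R / δ⌉).prod
    (Set.finite_Icc (⌊-R / δ⌋ - 1) ⌈R / δ⌉)).subset ?_
  rintro c ⟨p, ⟨h1, h2⟩, hp⟩
  have hp' := hR hp
  rw [mem_closedBall_zero_iff, Prod.norm_def, max_le_iff] at hp'
  exact ⟨key _ _ hp'.1 h1, key _ _ hp'.2 h2⟩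

theorem isClosed_cell (c : ℤ × ℤ) : IsClosed (cell δ c) := isClosed_Icc.prod isClosed_Icc

/-- Squares through a common point can be joined in the grid: if `p` lies in the squares `c`
and `d`, then also in the square `(c.1, d.2)`. -/
theorem connSet_cells (hδ : 0 < δ) (hs : Bornology.IsBounded s) (hconn : IsPreconnected s) :
    ConnSet grid (cells δ s) := by
  intro x hx y hy
  by_contra hxy
  let A : Set (ℤ × ℤ) :=
    {z | z ∈ cells δ s ∧ Relation.ReflTransGen (fun a b => grid.Adj a b ∧ b ∈ cells δ s) x z}
  have hfin := cells_finite hδ hs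
  have hcl : ∀ B ⊆ cells δ s, IsClosed (⋃ c ∈ B, cell δ c) := fun B hB =>
    (hfin.subset hB).isClosed_biUnion fun c _ => isClosed_cell c
  have hcov : s ⊆ (⋃ c ∈ A, cell δ c) ∪ ⋃ c ∈ cells δ s \ A, cell δ c := by
    intro p hp
    obtain ⟨c, hc⟩ := exists_mem_cell hδ p
    have hcs : c ∈ cells δ s := ⟨p, hc, hp⟩
    by_cases hcA : c ∈ A
    · exact Or.inl (Set.mem_biUnion hcA hc)
    · exact Or.inr (Set.mem_biUnion (show c ∈ cells δ s \ A from ⟨hcs, hcA⟩) hc)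
  obtain ⟨p, hp, hpA, hpB⟩ := isPreconnected_closed_iff.1 hconn _ _ (hcl A fun z hz => hz.1)
    (hcl (cells δ s \ A) Set.sdiff_subset) hcov
    (by
      obtain ⟨p, hp, hps⟩ := id hx
      exact ⟨p, hps, Set.mem_biUnion (show x ∈ A from ⟨hx, .refl⟩) hp⟩)
    (by
      obtain ⟨p, hp, hps⟩ := id hy
      exact ⟨p, hps, Set.mem_biUnion (show y ∈ cells δ s \ A from ⟨hy, fun h => hxy h.2⟩) hp⟩)
  obtain ⟨c, hcA, hpc⟩ := Set.mem_iUnion₂.1 hpA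
  obtain ⟨d, hdB, hpd⟩ := Set.mem_iUnion₂.1 hpB
  have hnear : ∀ (a b : ℤ) (t : ℝ), t ∈ Set.Icc (a * δ) ((a + 1) * δ) →
      t ∈ Set.Icc (b * δ) ((b + 1) * δ) → b ≤ a + 1 := by
    intro a b t ha hb
    have h : (b : ℝ) ≤ ((a + 1 : ℤ) : ℝ) := by
      push_cast
      exact le_of_mul_le_mul_right (hb.1.trans ha.2) hδ
    exact Int.cast_le.1 h
  have h1 := hnear _ _ _ hpc.1 hpd.1
  have h2 := hnear _ _ _ hpd.1 hpc.1
  have h3 := hnear _ _ _ hpc.2 hpd.2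
  have h4 := hnear _ _ _ hpd.2 hpc.2
  obtain ⟨c₁, c₂⟩ := c
  obtain ⟨d₁, d₂⟩ := d
  have he : (c₁, d₂) ∈ cells δ s := ⟨p, ⟨hpc.1, hpd.2⟩, hp⟩
  simp only at h1 h2 h3 h4
  refine hdB.2 ⟨hdB.1, hcA.2.trans ?_⟩
  have s1 : Relation.ReflTransGen (fun a b => grid.Adj a b ∧ b ∈ cells δ s) (c₁, c₂) (c₁, d₂) := by
    by_cases h : c₂ = d₂
    · rw [h]
    · refine .single ⟨?_, he⟩
      change _ ∨ _ ∨ _ ∨ _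
      simp only [Prod.mk.injEq, true_and]
      omega
  have s2 : Relation.ReflTransGen (fun a b => grid.Adj a b ∧ b ∈ cells δ s) (c₁, d₂) (d₁, d₂) := by
    by_cases h : c₁ = d₁
    · rw [h]
    · refine .single ⟨?_, hdB.1⟩
      change _ ∨ _ ∨ _ ∨ _
      simp only [Prod.mk.injEq, and_true]
      omega
  exact s1.trans s2

theorem isCompact_of_isString (h : IsString s) : IsCompact s := by
  obtain ⟨f, hf, rfl⟩ := h
  exact isCompact_Icc.image_of_continuousOn hf

theorem isPreconnected_of_isString (h : IsString s) : IsPreconnected s := by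
  obtain ⟨f, hf, rfl⟩ := h
  exact isPreconnected_Icc.image f hf

theorem nonempty_of_isString (h : IsString s) : s.Nonempty := by
  obtain ⟨f, -, rfl⟩ := h
  exact ⟨f 0, 0, by simp, rfl⟩

/-- A family of compact sets is determined, as far as its intersections are concerned, by the
squares which it meets, provided that the grid is fine enough. -/
theorem exists_fine_grid {V : Type*} [Finite V] {S : V → Set (ℝ × ℝ)}
    (hS : ∀ v, IsCompact (S v)) :
    ∃ δ > 0, ∀ u v, (cells δ (S u) ∩ cells δ (S v)).Nonempty ↔ (S u ∩ S v).Nonempty := by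
  have h : ∀ u v, ∀ᶠ δ in nhdsWithin (0 : ℝ) (Set.Ioi 0), Disjoint (S u) (S v) →
      ∀ p ∈ S u, ∀ q ∈ S v, δ < dist p q := by
    intro u v
    by_cases hd : Disjoint (S u) (S v)
    · obtain ⟨r, hr, h⟩ := Metric.exists_pos_forall_lt_edist (hS u) (hS v).isClosed hd
      filter_upwards [Ioo_mem_nhdsGT (show (0 : ℝ) < r from hr)] with δ hδ _ p hp q hq
      have h1 := h p hp q hq
      rw [edist_nndist, ENNReal.coe_lt_coe] at h1
      exact hδ.2.trans (NNReal.coe_lt_coe.2 h1)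
    · exact Filter.Eventually.of_forall fun δ h => (hd h).elim
  obtain ⟨δ, hδ, hδ₀⟩ := ((Filter.eventually_all.2 fun u => Filter.eventually_all.2 (h u)).and
    self_mem_nhdsWithin).exists
  refine ⟨δ, hδ₀, fun u v => ⟨?_, ?_⟩⟩
  · rintro ⟨c, ⟨p, hpc, hp⟩, q, hqc, hq⟩
    rw [← Set.not_disjoint_iff_nonempty_inter]
    exact fun hd => (hδ u v hd p hp q hq).not_ge (dist_le_of_mem_cell hpc hqc)
  · rintro ⟨p, hpu, hpv⟩
    obtain ⟨c, hc⟩ := exists_mem_cell hδ₀ p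
    exact ⟨c, ⟨p, hc, hpu⟩, p, hc, hpv⟩

theorem copWin_of_isString {V : Type*} [Finite V] {G : SimpleGraph V} (hconn : G.Connected)
    {S : V → Set (ℝ × ℝ)} (hS : ∀ v, IsString (S v))
    (hadj : ∀ u v, G.Adj u v ↔ u ≠ v ∧ (S u ∩ S v).Nonempty) : CopWin G 15 := by
  obtain ⟨δ, hδ, hcells⟩ := exists_fine_grid fun v => isCompact_of_isString (hS v)
  -- the edges of the grid inside one of the sets of squares
  let H : SimpleGraph (ℤ × ℤ) :=
    { Adj := fun x y => grid.Adj x y ∧ ∃ v, x ∈ cells δ (S v) ∧ y ∈ cells δ (S v)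
      symm := ⟨fun x y h => ⟨h.1.symm, h.2.imp fun _ h => ⟨h.2, h.1⟩⟩⟩
      loopless := ⟨fun x h => grid.loopless.irrefl x h.1⟩ }
  have rep : Rep G H fun v => cells δ (S v) :=
    { step_iff := by
        intro u v
        rw [hcells, Step, hadj]
        by_cases huv : v = u
        · subst huv
          simpa using nonempty_of_isString (hS v)
        · simp [huv, Ne.symm huv]
      conn := by
        intro v x hx y hy
        have h := connSet_cells hδ (isCompact_of_isString (hS v)).isBounded (isPreconnected_of_isString (hS v)) x hx y hy
        have : ∀ z, Relation.ReflTransGen (fun a b => grid.Adj a b ∧ b ∈ cells δ (S v)) x z →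
            z ∈ cells δ (S v) ∧
              Relation.ReflTransGen (fun a b => H.Adj a b ∧ b ∈ cells δ (S v)) x z := by
          intro z hz
          induction hz with
          | refl => exact ⟨hx, .refl⟩
          | tail _ h ih => exact ⟨h.2, ih.2.tail ⟨⟨h.1, v, ih.1, h.2⟩, h.2⟩⟩
        exact (this y h).2
      finite := fun v => cells_finite hδ (isCompact_of_isString (hS v)).isBounded
      edge := fun x y h => h.2 }
  exact copWin_fifteen rep hconn (noK33_grid.mono fun x y h => h.1)

end StringCops

/-- Every finite connected string graph has cop number at most 15. -/
theorem copNumber_string_le_fifteen (V : Type) [Fintype V] (G : SimpleGraph V)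
    (hconn : G.Connected)
    (hrep : ∃ S : V → Set (ℝ × ℝ), (∀ v, IsString (S v)) ∧
      ∀ u v, G.Adj u v ↔ u ≠ v ∧ (S u ∩ S v).Nonempty) :
    copNumber G ≤ 15 := by
  obtain ⟨S, hS, hadj⟩ := hrep
  exact Nat.sInf_le (StringCops.copWin_of_isString hconn hS hadj)
end

section
/- Every finite connected graph with girth at least 5 and minimum degree at least 16 has cop number greater than 15, and consequently is not a string graph. -/
/-! ### Non-planarity of the complete bipartite graph on three and three vertices -/

/-- A nowhere vanishing complex function on a simply connected, locally path connected space has a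
continuous logarithm, because `exp` is a covering map. -/
theorem exists_continuous_log {A : Type*} [TopologicalSpace A] [SimplyConnectedSpace A]
    [LocallyPathConnectedSpace A] {f : A → ℂ} (hf : Continuous f) (h0 : ∀ a, f a ≠ 0) :
    ∃ g : A → ℂ, Continuous g ∧ ∀ a, Complex.exp (g a) = f a := by
  obtain ⟨a₀⟩ : Nonempty A := inferInstance
  obtain ⟨F, ⟨-, hF⟩, -⟩ := Complex.isCoveringMapOn_exp.existsUnique_continuousMap_lifts ⟨f, hf⟩
    (a₀ := a₀) (e₀ := Complex.log (f a₀)) (by simpa using Complex.exp_log (h0 a₀))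
    (fun a => by simpa using h0 a)
  exact ⟨F, F.continuous, fun a => congr_fun hF a⟩

/-- The increment of a continuous logarithm along a path is unchanged by a constant factor. -/
theorem log_increment_eq {f g : ℝ → ℂ} (hf : Continuous f) (hg : Continuous g) (z : ℂ)
    (h : ∀ t, Complex.exp (f t) = z * Complex.exp (g t)) : f 1 - f 0 = g 1 - g 0 := by
  have hz : z ≠ 0 := by
    rintro rfl
    exact Complex.exp_ne_zero (f 0) (by simpa using h 0)
  have hc : ∀ t, ∃ n : ℤ, f t - g t = Complex.log z + n * (2 * Real.pi * Complex.I) := by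
    intro t
    apply Complex.exp_eq_exp_iff_exists_int.1
    rw [Complex.exp_sub, h, Complex.exp_log hz, mul_div_assoc, div_self (Complex.exp_ne_zero _),
      mul_one]
  choose n hn using hc
  have hpi : (Real.pi : ℂ) ≠ 0 := by exact_mod_cast Real.pi_ne_zero
  have hnc : Continuous fun t => ((n t : ℤ) : ℝ) := by
    have : (fun t => ((n t : ℤ) : ℝ)) =
        fun t => ((f t - g t - Complex.log z) / (2 * Real.pi * Complex.I)).re := by
      funext t
      rw [hn t]
      have : (Complex.log z + n t * (2 * Real.pi * Complex.I) - Complex.log z) /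
          (2 * Real.pi * Complex.I) = ((n t : ℝ) : ℂ) := by
        have := Complex.I_ne_zero
        field_simp
        push_cast
        ring
      rw [this, Complex.ofReal_re]
    rw [this]
    exact Complex.continuous_re.comp (((hf.sub hg).sub continuous_const).div_const _)
  have hnc' : Continuous n := Int.isClosedEmbedding_coe_real.isEmbedding.continuous_iff.2 hnc
  have h01 : n 0 = n 1 := PreconnectedSpace.constant inferInstance hnc'
  have h1 := hn 0
  have h2 := hn 1
  rw [h01] at h1
  linear_combination h2 - h1

/-- `K₃,₃` is not planar, for arbitrary continuous edges: some two independent edges meet.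

Otherwise, for independent edges `e = L i j`, `f = L k l` the function `e s - f t` has a continuous
logarithm on the plane of parameters, so its increments around the unit square cancel. The increment
on each side is that of a vertex minus a point of an edge, hence a difference of fixed logarithms of
differences of vertices plus `2πi` times an integer. The `18` pairs of independent edges give integer
relations in which every unknown integer occurs twice, with opposite or equal signs, while the
constants, which come from `log (-z)` against `log z`, have odd sum: a contradiction modulo `2`. -/
theorem k33_planar {p q : Fin 3 → ℂ} (L : ∀ i j, Path (p i) (q j)) :
    ∃ i j k l, i ≠ k ∧ j ≠ l ∧ (Set.range (L i j) ∩ Set.range (L k l)).Nonempty := by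
  by_contra! H
  have hne : ∀ i j k l, i ≠ k → j ≠ l → ∀ s t : ℝ, (L i j).extend s - (L k l).extend t ≠ 0 := by
    intro i j k l hik hjl s t h
    have h := sub_eq_zero.1 h
    have : (L i j).extend s ∈ Set.range (L i j) ∩ Set.range (L k l) := by
      constructor
      · rw [← (L i j).extend_range]; exact ⟨s, rfl⟩
      · rw [← (L k l).extend_range, h]; exact ⟨t, rfl⟩
    rw [H i j k l hik hjl] at this
    exact this
  have hex : ∀ j : Fin 3, ∃ j' : Fin 3, j ≠ j' := by decide
  -- continuous logarithms of the difference of a vertex and a point of an independent edge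
  have hA : ∀ i k l, i ≠ k → ∃ g : ℝ → ℂ, Continuous g ∧
      ∀ t, Complex.exp (g t) = p i - (L k l).extend t := by
    intro i k l hik
    obtain ⟨j, hj⟩ := hex l
    refine exists_continuous_log (continuous_const.sub (L k l).continuous_extend) fun t => ?_
    simpa using hne i j k l hik hj.symm 0 t
  have hB : ∀ j k l, j ≠ l → ∃ g : ℝ → ℂ, Continuous g ∧
      ∀ t, Complex.exp (g t) = q j - (L k l).extend t := by
    intro j k l hjl
    obtain ⟨i, hi⟩ := hex k
    refine exists_continuous_log (continuous_const.sub (L k l).continuous_extend) fun t => ?_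
    simpa using hne i j k l hi.symm hjl 1 t
  choose! A hAc hAe using hA
  choose! B hBc hBe using hB
  -- the increments of the logarithm around the boundary of the square `e × f` cancel
  have hsq : ∀ i j k l, i ≠ k → j ≠ l →
      (A i k l 1 - A i k l 0) + (B l i j 1 - B l i j 0) =
        (A k i j 1 - A k i j 0) + (B j k l 1 - B j k l 0) := by
    intro i j k l hik hjl
    obtain ⟨φ, hφ, hφe⟩ := exists_continuous_log (A := ℝ × ℝ)
      (f := fun x => (L i j).extend x.1 - (L k l).extend x.2)
      (((L i j).continuous_extend.comp continuous_fst).sub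
        ((L k l).continuous_extend.comp continuous_snd))
      (fun x => hne i j k l hik hjl _ _)
    have e1 := log_increment_eq (f := fun t => φ (0, t)) (g := A i k l) (by fun_prop)
      (hAc i k l hik) 1 (fun t => by rw [hφe, hAe i k l hik]; simp)
    have e2 := log_increment_eq (f := fun t => φ (1, t)) (g := B j k l) (by fun_prop)
      (hBc j k l hjl) 1 (fun t => by rw [hφe, hBe j k l hjl]; simp)
    have e3 := log_increment_eq (f := fun t => φ (t, 0)) (g := A k i j) (by fun_prop)
      (hAc k i j hik.symm) (-1) (fun t => by rw [hφe, hAe k i j hik.symm]; simp)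
    have e4 := log_increment_eq (f := fun t => φ (t, 1)) (g := B l i j) (by fun_prop)
      (hBc l i j hjl.symm) (-1) (fun t => by rw [hφe, hBe l i j hjl.symm]; simp)
    linear_combination e2 + e3 - e1 - e4
  have hpp : ∀ i k, i ≠ k → p i - p k ≠ 0 := fun i k hik => by
    simpa using hne i 0 k 1 hik (by decide) 0 0
  have hqq : ∀ j l, j ≠ l → q j - q l ≠ 0 := fun j l hjl => by
    simpa using hne 0 j 1 l (by decide) hjl 1 1
  have hpq : ∀ i l, p i - q l ≠ 0 := fun i l => by
    obtain ⟨k, hk⟩ := hex i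
    obtain ⟨j, hj⟩ := hex l
    simpa using hne i j k l hk hj.symm 0 1
  -- logarithms of the differences of the vertices, antisymmetric up to a fixed choice of `± π i`
  let ab : Fin 3 → Fin 3 → ℂ := fun i l => Complex.log (p i - q l)
  let aa : Fin 3 → Fin 3 → ℂ := fun i k =>
    if i < k then Complex.log (p i - p k) else Complex.log (p k - p i) + Real.pi * Complex.I
  let bb : Fin 3 → Fin 3 → ℂ := fun j l =>
    if j < l then Complex.log (q j - q l) else Complex.log (q l - q j) + Real.pi * Complex.I
  have hab : ∀ i l, Complex.exp (ab i l) = p i - q l := fun i l => Complex.exp_log (hpq i l)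
  have haa : ∀ i k, i ≠ k → Complex.exp (aa i k) = p i - p k := by
    intro i k hik
    simp only [aa]
    split_ifs
    · exact Complex.exp_log (hpp i k hik)
    · rw [Complex.exp_add, Complex.exp_log (hpp k i hik.symm), Complex.exp_pi_mul_I]; ring
  have hbb : ∀ i k, i ≠ k → Complex.exp (bb i k) = q i - q k := by
    intro i k hik
    simp only [bb]
    split_ifs
    · exact Complex.exp_log (hqq i k hik)
    · rw [Complex.exp_add, Complex.exp_log (hqq k i hik.symm), Complex.exp_pi_mul_I]; ring
  have key : ∀ x y u v : ℂ, Complex.exp x = Complex.exp u → Complex.exp y = Complex.exp v →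
      ∃ n : ℤ, x - y = u - v + n * (2 * Real.pi * Complex.I) := by
    intro x y u v h1 h2
    obtain ⟨n, hn⟩ := Complex.exp_eq_exp_iff_exists_int.1 h1
    obtain ⟨m, hm⟩ := Complex.exp_eq_exp_iff_exists_int.1 h2
    refine ⟨n - m, ?_⟩
    push_cast
    linear_combination hn - hm
  have hN : ∀ i k l, i ≠ k → ∃ n : ℤ, A i k l 1 - A i k l 0 =
      ab i l - aa i k + n * (2 * Real.pi * Complex.I) := by
    intro i k l hik
    apply key
    · rw [hAe i k l hik, hab]; simp
    · rw [hAe i k l hik, haa i k hik]; simp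
  have hM : ∀ j k l, j ≠ l → ∃ n : ℤ, B j k l 1 - B j k l 0 =
      bb j l - (ab k j - Real.pi * Complex.I) + n * (2 * Real.pi * Complex.I) := by
    intro j k l hjl
    apply key
    · rw [hBe j k l hjl, hbb j l hjl]; simp
    · rw [hBe j k l hjl, Complex.exp_sub, hab, Complex.exp_pi_mul_I]; simp; ring
  choose! N hN using hN
  choose! M hM using hM
  have rel : ∀ i j k l, i < k → j ≠ l →
      N i k l + M l i j - N k i j - M j k l = if j < l then -1 else 0 := by
    intro i j k l hik hjl
    have h := hsq i j k l hik.ne hjl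
    rw [hN i k l hik.ne, hN k i j hik.ne', hM l i j hjl.symm, hM j k l hjl] at h
    have hpi : (2 * Real.pi * Complex.I : ℂ) ≠ 0 := by
      simp [Real.pi_ne_zero]
    have h1 : aa k i = aa i k + Real.pi * Complex.I := by
      simp only [aa, if_pos hik, if_neg hik.asymm]
    have h2 : bb l j = bb j l + (if j < l then 1 else -1) * (Real.pi * Complex.I) := by
      rcases hjl.lt_or_gt with h | h
      · simp only [bb, if_pos h, if_neg h.asymm]; ring
      · simp only [bb, if_pos h, if_neg h.asymm]; ring
    rw [h1, h2] at h
    have : ((N i k l + M l i j - N k i j - M j k l : ℤ) : ℂ) =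
        ((if j < l then -1 else 0 : ℤ) : ℂ) := by
      apply mul_right_cancel₀ hpi
      split_ifs at h ⊢
      · push_cast; linear_combination h
      · push_cast; linear_combination h
    exact_mod_cast this
  have r := fun i j k l (h : i < k ∧ j ≠ l) => rel i j k l h.1 h.2
  -- each of the 36 integers occurs in exactly two of the 18 relations
  have h1 := r 0 0 1 1 (by decide)
  have h2 := r 0 0 1 2 (by decide)
  have h3 := r 0 1 1 0 (by decide)
  have h4 := r 0 1 1 2 (by decide)
  have h5 := r 0 2 1 0 (by decide)
  have h6 := r 0 2 1 1 (by decide)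
  have h7 := r 0 0 2 1 (by decide)
  have h8 := r 0 0 2 2 (by decide)
  have h9 := r 0 1 2 0 (by decide)
  have h10 := r 0 1 2 2 (by decide)
  have h11 := r 0 2 2 0 (by decide)
  have h12 := r 0 2 2 1 (by decide)
  have h13 := r 1 0 2 1 (by decide)
  have h14 := r 1 0 2 2 (by decide)
  have h15 := r 1 1 2 0 (by decide)
  have h16 := r 1 1 2 2 (by decide)
  have h17 := r 1 2 2 0 (by decide)
  have h18 := r 1 2 2 1 (by decide)
  simp +decide only [if_true, if_false] at h1 h2 h3 h4 h5 h6 h7 h8 h9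
  simp +decide only [if_true, if_false] at h10 h11 h12 h13 h14 h15 h16 h17 h18
  omega

/-! ### The robber escapes fifteen cops -/

theorem no_triangle_of_girth {V : Type*} {G : SimpleGraph V} (h : 5 ≤ G.egirth) (a b c : V)
    (hab : G.Adj a b) (hbc : G.Adj b c) (hca : G.Adj c a) : False := by
  have hc : (SimpleGraph.Walk.cons hab (.cons hbc (.cons hca .nil))).IsCycle := by
    rw [SimpleGraph.Walk.isCycle_def]
    simp [SimpleGraph.Walk.isTrail_def, hab.ne, hab.ne', hbc.ne, hca.ne, hca.ne']
  have := SimpleGraph.le_egirth.1 h _ _ hc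
  simp only [SimpleGraph.Walk.length_cons, SimpleGraph.Walk.length_nil] at this
  exact absurd this (by decide)

theorem eq_of_common_neighbors {V : Type*} {G : SimpleGraph V} (h : 5 ≤ G.egirth) {a b c d : V}
    (hac : a ≠ c) (hab : G.Adj a b) (hcb : G.Adj c b) (had : G.Adj a d) (hcd : G.Adj c d) :
    b = d := by
  by_contra hbd
  have hc : (SimpleGraph.Walk.cons hab
      (.cons hcb.symm (.cons hcd (.cons had.symm .nil)))).IsCycle := by
    rw [SimpleGraph.Walk.isCycle_def]
    simp [SimpleGraph.Walk.isTrail_def, hab.ne, hab.ne', hcb.ne', had.ne, had.ne', hcd.ne, hac,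
      hac.symm, hbd]
  have := SimpleGraph.le_egirth.1 h _ _ hc
  simp only [SimpleGraph.Walk.length_cons, SimpleGraph.Walk.length_nil] at this
  exact absurd this (by decide)

/-- A cop standing at `c` can occupy `v` within one move. -/
def Threatens {V : Type*} (G : SimpleGraph V) (c v : V) : Prop := c = v ∨ G.Adj c v

/-- Each cop threatens at most one neighbour of an uncaught robber, as there are no triangles and no
`4`-cycles; with at least `16` neighbours and at most `15` cops one neighbour is not threatened. -/
theorem exists_safe_neighbor {V : Type*} [Fintype V] {G : SimpleGraph V} [DecidableRel G.Adj]
    (hgirth : 5 ≤ G.egirth) (hdeg : 16 ≤ G.minDegree) {k : ℕ} (hk : k ≤ 15) (c : Fin k → V) (r : V)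
    (hr : ∀ i, c i ≠ r) : ∃ s, G.Adj r s ∧ ∀ i, ¬ Threatens G (c i) s := by
  classical
  by_contra! H
  have H' : ∀ s : G.neighborFinset r, ∃ i, Threatens G (c i) s := fun s =>
    H s ((G.mem_neighborFinset r s).1 s.2)
  choose f hf using H'
  have hinj : Function.Injective f := by
    intro s t hst
    have hs := hf s
    have ht := hf t
    rw [← hst] at ht
    have hs' : G.Adj r s := (G.mem_neighborFinset r s).1 s.2
    have ht' : G.Adj r t := (G.mem_neighborFinset r t).1 t.2
    apply Subtype.ext
    rcases hs with hs | hs <;> rcases ht with ht | ht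
    · rw [← hs, ← ht]
    · exact (no_triangle_of_girth hgirth r s t hs' (hs ▸ ht) ht'.symm).elim
    · exact (no_triangle_of_girth hgirth r t s ht' (ht ▸ hs) hs'.symm).elim
    · exact eq_of_common_neighbors hgirth (hr (f s)).symm hs' hs ht' ht
  have h1 := Fintype.card_le_of_injective f hinj
  have h2 := G.minDegree_le_degree r
  simp only [Fintype.card_coe, SimpleGraph.card_neighborFinset_eq_degree, Fintype.card_fin] at h1
  omega

/-- The robber who always moves to a neighbour threatened by no cop is never caught. -/
theorem not_copWin {V : Type*} [Fintype V] [Nonempty V] {G : SimpleGraph V} [DecidableRel G.Adj]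
    (hgirth : 5 ≤ G.egirth) (hdeg : 16 ≤ G.minDegree) {k : ℕ} (hk : k ≤ 15) : ¬ CopWin G k := by
  classical
  rintro ⟨init, F, hF⟩
  obtain ⟨w, hw⟩ : ∃ w, ∀ i, init i ≠ w := by
    by_contra! H
    have h1 := Fintype.card_le_of_surjective init H
    obtain ⟨v⟩ := ‹Nonempty V›
    have h2 := G.minDegree_le_degree v
    have h3 := G.degree_lt_card_verts v
    simp only [Fintype.card_fin] at h1
    omega
  obtain ⟨r₀, -, hr₀⟩ := exists_safe_neighbor hgirth hdeg hk init w hw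
  let step : (Fin k → V) → V → V := fun c r =>
    if h : ∃ s, G.Adj r s ∧ ∀ i, ¬ Threatens G (c i) s then h.choose else r
  have hstep : ∀ c r, step c r = r ∨ G.Adj r (step c r) := by
    intro c r
    by_cases h : ∃ s, G.Adj r s ∧ ∀ i, ¬ Threatens G (c i) s
    · right; simp only [step, dif_pos h]; exact h.choose_spec.1
    · left; simp only [step, dif_neg h]
  -- the robber's history and position, defined together since the cops see the history
  let st : ℕ → List V × V := fun n =>
    Nat.rec ([r₀], r₀) (fun _ p => (p.1 ++ [step (F p.1) p.2], step (F p.1) p.2)) n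
  let rob : ℕ → V := fun n => (st n).2
  have hhist : ∀ n, (st n).1 = (List.range (n + 1)).map rob := by
    intro n
    induction n with
    | zero => rfl
    | succ n ih =>
      rw [List.range_succ, List.map_append, ← ih]
      rfl
  have hrob : ∀ n, rob (n + 1) = step (copSeq init F rob (n + 1)) (rob n) := by
    intro n
    simp only [copSeq]
    rw [← hhist n]
  obtain ⟨hlegal, hcap⟩ := hF rob fun n => by rw [hrob]; exact hstep _ _
  have hmiss : ∀ n, (∀ i, ¬ Threatens G (copSeq init F rob n i) (rob n)) →
      ∀ i, copSeq init F rob (n + 1) i ≠ rob n := by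
    intro n hn i h
    rcases hlegal n i with h' | h'
    · exact hn i (.inl (by rw [← h', h]))
    · exact hn i (.inr (by rw [← h]; exact h'))
  have hsafe : ∀ n i, ¬ Threatens G (copSeq init F rob n i) (rob n) := by
    intro n
    induction n with
    | zero => exact hr₀
    | succ n ih =>
      have h := exists_safe_neighbor hgirth hdeg hk _ _ (hmiss n ih)
      have : rob (n + 1) = h.choose := by
        rw [hrob]; simp only [step, dif_pos h]
      rw [this]
      exact h.choose_spec.2
  obtain ⟨n, i, h | h⟩ := hcap
  · exact hsafe n i (.inl h)
  · exact hmiss n (hsafe n) i h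

/-- One cop on each vertex wins, so `copNumber` is the infimum of a nonempty set, not a junk value. -/
theorem copWin_card {V : Type*} [Fintype V] (G : SimpleGraph V) : CopWin G (Fintype.card V) := by
  let e := (Fintype.equivFin V).symm
  refine ⟨e, fun _ => e, fun rob _ => ⟨?_, 0, e.symm (rob 0), .inl (by simp [copSeq])⟩⟩
  intro n i
  left
  cases n <;> rfl

theorem fifteen_lt_copNumber {V : Type*} [Fintype V] [Nonempty V] {G : SimpleGraph V}
    [DecidableRel G.Adj] (hgirth : 5 ≤ G.egirth) (hdeg : 16 ≤ G.minDegree) :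
    15 < copNumber G := by
  by_contra! h
  exact not_copWin hgirth hdeg h (Nat.sInf_mem (s := {k | CopWin G k}) ⟨_, copWin_card G⟩)

/-! ### Walks inside vertex sets and geodesic chains of sets -/

section Linked

variable {V W : Type*}

/-- `a` and `b` are joined by a walk of `Γ` all of whose vertices, ends included, lie in `S`. -/
def LinkedIn (Γ : SimpleGraph W) (S : Set W) (a b : W) : Prop :=
  ∃ w : Γ.Walk a b, ∀ u ∈ w.support, u ∈ S

namespace LinkedIn

variable {Γ H : SimpleGraph W} {S T F : Set W} {a b c : W}

theorem refl (ha : a ∈ S) : LinkedIn Γ S a a := ⟨.nil, by simpa using ha⟩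

theorem symm (h : LinkedIn Γ S a b) : LinkedIn Γ S b a := by
  obtain ⟨w, hw⟩ := h
  exact ⟨w.reverse, by simpa using hw⟩

theorem trans (h : LinkedIn Γ S a b) (h' : LinkedIn Γ S b c) : LinkedIn Γ S a c := by
  obtain ⟨w, hw⟩ := h
  obtain ⟨w', hw'⟩ := h'
  refine ⟨w.append w', fun u hu => ?_⟩
  rcases SimpleGraph.Walk.mem_support_append_iff _ _ |>.1 hu with hu | hu
  exacts [hw u hu, hw' u hu]

theorem mono (h : LinkedIn Γ S a b) (hST : S ⊆ T) : LinkedIn Γ T a b := by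
  obtain ⟨w, hw⟩ := h
  exact ⟨w, fun u hu => hST (hw u hu)⟩

theorem left_mem (h : LinkedIn Γ S a b) : a ∈ S := by
  obtain ⟨w, hw⟩ := h
  exact hw a w.start_mem_support

theorem right_mem (h : LinkedIn Γ S a b) : b ∈ S := h.symm.left_mem

theorem of_adj (ha : a ∈ S) (hb : b ∈ S) (h : Γ.Adj a b) : LinkedIn Γ S a b :=
  ⟨.cons h .nil, by simp [ha, hb]⟩

theorem of_mem_support (w : Γ.Walk a b) (hw : ∀ u ∈ w.support, u ∈ S) (hc : c ∈ w.support) :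
    LinkedIn Γ S a c := by
  classical
  exact ⟨w.takeUntil c hc, fun u hu => hw u (w.support_takeUntil_subset_support hc hu)⟩

theorem transfer (h : LinkedIn Γ S a b)
    (hH : ∀ p q, p ∈ S → q ∈ S → Γ.Adj p q → H.Adj p q) : LinkedIn H S a b := by
  obtain ⟨w, hw⟩ := h
  induction w with
  | nil => exact refl (by simpa using hw)
  | cons hadj w ih =>
    simp only [SimpleGraph.Walk.support_cons, List.mem_cons, forall_eq_or_imp] at hw
    have h1 := ih hw.2
    exact (of_adj hw.1 h1.left_mem (hH _ _ hw.1 h1.left_mem hadj)).trans h1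

theorem of_isChain {l : List W} (hl : List.IsChain Γ.Adj (a :: l)) (hS : ∀ u ∈ a :: l, u ∈ S) :
    ∀ b ∈ a :: l, LinkedIn Γ S a b := by
  induction l generalizing a with
  | nil =>
    intro b hb
    obtain rfl : b = a := by simpa using hb
    exact refl (hS _ (by simp))
  | cons c l ih =>
    intro b hb
    rw [List.isChain_cons_cons] at hl
    rcases List.mem_cons.1 hb with rfl | hb
    · exact refl (hS _ (by simp))
    · exact (of_adj (hS a (by simp)) (hS c (by simp)) hl.1).trans
        (ih hl.2 (fun u hu => hS u (List.mem_cons_of_mem _ hu)) b hb)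

/-- The witness is the first point at which the walk leaves `F`. -/
theorem exists_exit (h : LinkedIn Γ S a b) (ha : a ∈ F) (hb : b ∉ F) :
    ∃ q, q ∉ F ∧ (∃ f ∈ F, Γ.Adj f q) ∧ LinkedIn Γ (S ∩ insert q F) a q := by
  obtain ⟨w, hw⟩ := h
  induction w with
  | nil => exact absurd ha hb
  | @cons a c b hadj w ih =>
    simp only [SimpleGraph.Walk.support_cons, List.mem_cons, forall_eq_or_imp] at hw
    by_cases hc : c ∈ F
    · obtain ⟨q, hq, hf, hl⟩ := ih hc hb hw.2
      exact ⟨q, hq, hf,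
        (LinkedIn.of_adj (S := S ∩ insert q F) (And.intro hw.1 (Or.inr ha)) hl.left_mem hadj).trans hl⟩
    · exact ⟨c, hc, ⟨a, ha, hadj⟩,
        LinkedIn.of_adj (S := S ∩ insert c F) (And.intro hw.1 (Or.inr ha))
          (And.intro (hw.2 _ w.start_mem_support) (Or.inl rfl)) hadj⟩

end LinkedIn

/-- `a` and `b` are joined by a concatenation of `k` walks of `H`, each lying in one of the sets
`C v`. -/
def StringChain (H : SimpleGraph W) (C : V → Set W) (k : ℕ) (a b : W) : Prop :=
  ∃ (p : ℕ → W) (v : ℕ → V), p 0 = a ∧ p k = b ∧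
    ∀ i < k, LinkedIn H (C (v i)) (p i) (p (i + 1))

namespace StringChain

variable {H : SimpleGraph W} {C : V → Set W} {a b c : W}

theorem zero [Nonempty V] (a : W) : StringChain H C 0 a a :=
  ⟨fun _ => a, fun _ => Classical.arbitrary V, rfl, rfl, by simp⟩

theorem snoc {k : ℕ} {v : V} (h : StringChain H C k a b) (h' : LinkedIn H (C v) b c) :
    StringChain H C (k + 1) a c := by
  obtain ⟨p, w, h0, hk, hpw⟩ := h
  refine ⟨fun i => if i ≤ k then p i else c, fun i => if i < k then w i else v,
    by simp [h0], by simp, fun i hi => ?_⟩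
  rcases (Nat.lt_succ_iff_lt_or_eq.1 hi) with hi | rfl
  · simpa [hi, hi.le, Nat.succ_le_of_lt hi] using hpw i hi
  · simpa [hk] using h'

theorem trans {k m : ℕ} (h : StringChain H C k a b) (h' : StringChain H C m b c) :
    StringChain H C (k + m) a c := by
  obtain ⟨p, w, h0, hm, hpw⟩ := h'
  have : ∀ n ≤ m, StringChain H C (k + n) a (p n) := by
    intro n
    induction n with
    | zero => intro _; rw [h0]; exact h
    | succ n ih => intro hn; exact (ih (by omega)).snoc (hpw n (by omega))
  simpa [hm] using this m le_rfl

theorem single [Nonempty V] {v : V} (h : LinkedIn H (C v) a b) : StringChain H C 1 a b :=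
  (zero a).snoc h

theorem of_walk [Nonempty V] (hC : ∀ p q, H.Adj p q → ∃ v, p ∈ C v ∧ q ∈ C v) (w : H.Walk a b) :
    ∃ k, StringChain H C k a b := by
  induction w with
  | nil => exact ⟨0, zero _⟩
  | cons hadj w ih =>
    obtain ⟨k, hk⟩ := ih
    obtain ⟨v, h1, h2⟩ := hC _ _ hadj
    exact ⟨_, (single (.of_adj h1 h2 hadj)).trans hk⟩

end StringChain

/-- A chain of walks from `a` to `b`, the `i`-th from `p i` to `p (i + 1)` within `C (v i)`, which
uses the least possible number `k` of sets. Only the values `p i` for `i ≤ k` and `v i` for `i < k`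
are meaningful. -/
structure Geodesic (H : SimpleGraph W) (C : V → Set W) (a b : W) where
  k : ℕ
  p : ℕ → W
  v : ℕ → V
  p_zero : p 0 = a
  p_last : p k = b
  linked : ∀ i < k, LinkedIn H (C (v i)) (p i) (p (i + 1))
  minimal : ∀ m, StringChain H C m a b → k ≤ m

namespace Geodesic

variable {H : SimpleGraph W} {C : V → Set W} {a b : W}

/-- `g.At i u`: the point `u` can be reached from `p i` inside the `i`-th set of the chain. -/
def At (g : Geodesic H C a b) (i : ℕ) (u : W) : Prop := LinkedIn H (C (g.v i)) (g.p i) u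

theorem exists_geodesic [Nonempty V] (hC : ∀ p q, H.Adj p q → ∃ v, p ∈ C v ∧ q ∈ C v)
    (w : H.Walk a b) : Nonempty (Geodesic H C a b) := by
  classical
  have h := StringChain.of_walk hC w
  obtain ⟨p, v, h0, h1, h2⟩ := Nat.find_spec h
  exact ⟨⟨Nat.find h, p, v, h0, h1, h2, fun m hm => Nat.find_min' h hm⟩⟩

theorem chain_before (g : Geodesic H C a b) {i : ℕ} (hi : i ≤ g.k) :
    StringChain H C i a (g.p i) :=
  ⟨g.p, g.v, g.p_zero, rfl, fun j hj => g.linked j (by omega)⟩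

theorem chain_after (g : Geodesic H C a b) {i : ℕ} (hi : i ≤ g.k) :
    StringChain H C (g.k - i) (g.p i) b :=
  ⟨fun j => g.p (i + j), fun j => g.v (i + j), rfl, by
    show g.p (i + (g.k - i)) = b
    rw [Nat.add_sub_cancel' hi]; exact g.p_last, fun j hj => g.linked (i + j) (by omega)⟩

/-- A short cut by `m` sets skips at most `m + 1` indices. -/
theorem index_le (g : Geodesic H C a b) {i j m : ℕ} {u u' : W} (hi : i < g.k) (hj : j < g.k)
    (hu : g.At i u) (hu' : g.At j u') (h : StringChain H C m u u') : j ≤ i + m + 1 := by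
  have h1 := ((g.chain_before hi.le).snoc hu).trans h
  have h2 := (h1.snoc (hu'.symm.trans (g.linked j hj))).trans (g.chain_after hj)
  have := g.minimal _ h2
  omega

/-- A path all of whose points lie in the sets of the geodesic chain. -/
theorem exists_path (g : Geodesic H C a b) (hab : a ≠ b) :
    ∃ w : H.Walk a b, w.IsPath ∧ ∀ u ∈ w.support, ∃ i < g.k, g.At i u := by
  classical
  have hk : 0 < g.k := by
    rcases Nat.eq_zero_or_pos g.k with h | h
    · exact absurd (g.p_zero.symm.trans ((congrArg g.p h).symm.trans g.p_last)) hab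
    · exact h
  have key : ∀ n ≤ g.k, ∃ w : H.Walk (g.p 0) (g.p n), ∀ u ∈ w.support, ∃ i < g.k, g.At i u := by
    intro n
    induction n with
    | zero =>
      intro _
      refine ⟨.nil, fun u hu => ⟨0, hk, ?_⟩⟩
      obtain rfl : u = g.p 0 := by simpa using hu
      exact LinkedIn.refl (g.linked 0 hk).left_mem
    | succ n ih =>
      intro hn
      obtain ⟨w, hw⟩ := ih (by omega)
      obtain ⟨w', hw'⟩ := g.linked n hn
      refine ⟨w.append w', fun u hu => ?_⟩
      rcases SimpleGraph.Walk.mem_support_append_iff _ _ |>.1 hu with hu | hu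
      · exact hw u hu
      · exact ⟨n, hn, .of_mem_support w' hw' hu⟩
  obtain ⟨w, hw⟩ : ∃ w : H.Walk a b, ∀ u ∈ w.support, ∃ i < g.k, g.At i u := by
    have := key g.k le_rfl
    rwa [g.p_zero, g.p_last] at this
  exact ⟨w.bypass, w.bypass_isPath, fun u hu => hw u (w.support_bypass_subset_support hu)⟩

end Geodesic

end Linked

/-! ### Descent on regions -/

section Descent

variable {V W : Type*} {G : SimpleGraph V} {Γ H : SimpleGraph W} {C : V → Set W}

/-- A representation of `G` as the intersection graph of connected vertex sets `C v` of a graph `Γ`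
such that each edge of `Γ` lies in one of these sets, together with the properties of `G` used below: no triangles, no
`4`-cycles, and minimum degree at least `16`. -/
structure ConnRep (G : SimpleGraph V) (Γ : SimpleGraph W) (C : V → Set W) : Prop where
  conn : ∀ v, ∀ a ∈ C v, ∀ b ∈ C v, LinkedIn Γ (C v) a b
  nonempty : ∀ v, (C v).Nonempty
  adj : ∀ u v, G.Adj u v ↔ u ≠ v ∧ (C u ∩ C v).Nonempty
  edge : ∀ p q, Γ.Adj p q → ∃ v, p ∈ C v ∧ q ∈ C v
  no_triangle : ∀ a b c, G.Adj a b → G.Adj b c → G.Adj c a → False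
  no_square : ∀ a b c d, a ≠ c → G.Adj a b → G.Adj c b → G.Adj a d → G.Adj c d → b = d
  degree : ∀ v, 16 ≤ (G.neighborSet v).ncard

/-- The outer vertex boundary of `F`. -/
def bdry (Γ : SimpleGraph W) (F : Set W) : Set W := {q | q ∉ F ∧ ∃ f ∈ F, Γ.Adj f q}

/-- The neighbours `z` of `r` whose set joins `C r` to a point of `S` while staying in `F` before
reaching that point. -/
def touching (G : SimpleGraph V) (Γ : SimpleGraph W) (C : V → Set W) (F S : Set W) (r : V) :
    Set V :=
  {z | G.Adj r z ∧ ∃ c ∈ C r, ∃ q ∈ S, LinkedIn Γ (C z ∩ insert q F) c q}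

/-- `S` is controlled from inside `F`: every vertex represented inside `F` has at most `5`
neighbours touching `S`. -/
def Good (G : SimpleGraph V) (Γ : SimpleGraph W) (C : V → Set W) (F S : Set W) : Prop :=
  ∀ r, C r ⊆ F → (touching G Γ C F S r).ncard ≤ 5

theorem touching_mono {F F' S S' : Set W} (hF : F' ⊆ F) (hS : S' ⊆ S) (r : V) :
    touching G Γ C F' S' r ⊆ touching G Γ C F S r := by
  rintro z ⟨hz, c, hc, q, hq, hl⟩
  exact ⟨hz, c, hc, q, hS hq,
    hl.mono (Set.inter_subset_inter_right _ (Set.insert_subset_insert hF))⟩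

theorem Good.anti [Finite V] {F F' S S' : Set W} (h : Good G Γ C F S) (hF : F' ⊆ F)
    (hS : S' ⊆ S) : Good G Γ C F' S' := fun r hr =>
  (Set.ncard_le_ncard (touching_mono hF hS r)).trans (h r (hr.trans hF))

/-- The edges of `Γ` between vertices of `F ∪ {x, y}` which have at least one end in `F`. In
particular, paths from `x` to `y` in this graph have all their inner vertices in `F`. -/
def windowGraph (Γ : SimpleGraph W) (F : Set W) (x y : W) : SimpleGraph W where
  Adj p q := Γ.Adj p q ∧ p ∈ insert x (insert y F) ∧ q ∈ insert x (insert y F) ∧ (p ∈ F ∨ q ∈ F)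
  symm := ⟨fun _ _ h => ⟨h.1.symm, h.2.2.1, h.2.1, h.2.2.2.symm⟩⟩
  loopless := ⟨fun _ h => h.1.ne rfl⟩

theorem LinkedIn.to_windowGraph {F S : Set W} {x y q a b : W} (h : LinkedIn Γ S a b)
    (hS : S ⊆ insert q F) (hq : q ∈ insert x (insert y F)) :
    LinkedIn (windowGraph Γ F x y) S a b := by
  have hF : F ⊆ insert x (insert y F) := fun u hu => Or.inr (Or.inr hu)
  refine h.transfer fun u v hu hv huv => ⟨huv, ?_, ?_, ?_⟩
  · rcases hS hu with rfl | h
    exacts [hq, hF h]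
  · rcases hS hv with rfl | h
    exacts [hq, hF h]
  · rcases hS hu with rfl | h
    · rcases hS hv with rfl | h
      exacts [absurd rfl huv.ne, Or.inr h]
    · exact Or.inl h

theorem LinkedIn.to_windowGraph_of_subset {F S : Set W} {x y a b : W} (h : LinkedIn Γ S a b)
    (hS : S ⊆ F) : LinkedIn (windowGraph Γ F x y) S a b :=
  h.to_windowGraph (hS.trans (Set.subset_insert x F)) (Or.inl rfl)

theorem ConnRep.eq_or_adj (R : ConnRep G Γ C) {u v : V} {q : W} (hu : q ∈ C u) (hv : q ∈ C v) :
    u = v ∨ G.Adj u v := by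
  by_cases h : u = v
  exacts [Or.inl h, Or.inr ((R.adj u v).2 ⟨h, q, hu, hv⟩)]

/-- At most five neighbours `z` of `r` touch a geodesic: no two of them can touch it in the same set
`C (g.v i)`, because of the girth, and the indices span at most five values, because a longer
stretch would be shortened by `z`, `r`, `z'`. -/
theorem ConnRep.count [Finite V] (R : ConnRep G Γ C) {a b : W} (g : Geodesic H C a b)
    {S : Set W} {r : V}
    (hS : ∀ q ∈ S, ∃ i < g.k, g.At i q) (hr : ∀ i < g.k, ∀ q ∈ S, g.At i q → r ≠ g.v i)
    (hconn : ∀ c ∈ C r, ∀ c' ∈ C r, LinkedIn H (C r) c c') :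
    {z | G.Adj r z ∧ ∃ c ∈ C r, ∃ q ∈ S, LinkedIn H (C z) c q}.ncard ≤ 5 := by
  classical
  have : Nonempty V := ⟨r⟩
  set Z := {z | G.Adj r z ∧ ∃ c ∈ C r, ∃ q ∈ S, LinkedIn H (C z) c q} with hZ
  have key : ∀ z ∈ Z, ∃ i < g.k, ∃ c ∈ C r, ∃ q ∈ S, LinkedIn H (C z) c q ∧ g.At i q := by
    rintro z ⟨_, c, hc, q, hq, hl⟩
    obtain ⟨i, hi, hiq⟩ := hS q hq
    exact ⟨i, hi, c, hc, q, hq, hl, hiq⟩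
  choose! ι hι c hc q hq hl hat using key
  have hinj : Set.InjOn ι Z := by
    intro z hz z' hz' h
    have h1 := R.eq_or_adj (hat z hz).right_mem (hl z hz).right_mem
    have h2 := R.eq_or_adj (hat z' hz').right_mem (hl z' hz').right_mem
    have hne := hr _ (hι z hz) _ (hq z hz) (hat z hz)
    rw [← h] at h2
    rcases h1 with h1 | h1 <;> rcases h2 with h2 | h2
    · exact h1.symm.trans h2
    · rw [h1] at h2; exact (R.no_triangle _ _ _ hz.1 h2 hz'.1.symm).elim
    · rw [h2] at h1; exact (R.no_triangle _ _ _ hz.1 h1.symm hz'.1.symm).elim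
    · exact R.no_square _ _ _ _ hne hz.1 h1 hz'.1 h2
  have hwin : ∀ z ∈ Z, ∀ z' ∈ Z, ι z' ≤ ι z + 4 := by
    intro z hz z' hz'
    refine g.index_le (m := 3) (hι z hz) (hι z' hz') (hat z hz) (hat z' hz') ?_
    exact ((StringChain.single (hl z hz).symm).snoc
      (hconn _ (hc z hz) _ (hc z' hz'))).snoc (hl z' hz')
  rcases Z.eq_empty_or_nonempty with h0 | h0
  · rw [h0]; simp
  · obtain ⟨z₀, hz₀, hmin⟩ := Set.exists_min_image Z ι Z.toFinite h0
    rw [← hinj.ncard_image]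
    have hsub : ι '' Z ⊆ ↑(Finset.Icc (ι z₀) (ι z₀ + 4)) := by
      rintro _ ⟨z, hz, rfl⟩
      exact Finset.mem_coe.2 (Finset.mem_Icc.2 ⟨hmin z hz, hwin z₀ hz₀ z hz⟩)
    refine (Set.ncard_le_ncard hsub (Finset.finite_toSet _)).trans ?_
    rw [Set.ncard_coe_finset, Nat.card_Icc]
    omega

/-- A neighbour of a vertex represented inside `F` either is represented inside `F` too, or has a set
leaving `F` through `A` or through `B`. -/
theorem ConnRep.inner_or_touching (R : ConnRep G Γ C) {F A B : Set W}
    (hAB : bdry Γ F ⊆ A ∪ B) {r z : V}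
    (hr : C r ⊆ F) (hz : G.Adj r z) :
    C z ⊆ F ∨ z ∈ touching G Γ C F A r ∨ z ∈ touching G Γ C F B r := by
  refine or_iff_not_imp_left.2 fun h => ?_
  obtain ⟨b, hb, hbF⟩ := Set.not_subset.1 h
  obtain ⟨c, hcr, hcz⟩ := ((R.adj r z).1 hz).2
  obtain ⟨q, hq, hf, hl⟩ := (R.conn z c hcz b hb).exists_exit (hr hcr) hbF
  rcases hAB ⟨hq, hf⟩ with h | h
  · exact Or.inl ⟨hz, c, hcr, q, h, hl⟩
  · exact Or.inr ⟨hz, c, hcr, q, h, hl⟩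

theorem exists_linked_of_mem_closure {F : Set W} {x : W} (hx : x ∈ F ∪ bdry Γ F) :
    ∃ f ∈ F, LinkedIn Γ (insert x F) x f := by
  rcases hx with hx | ⟨-, f, hf, hadj⟩
  · exact ⟨x, hx, .refl (Or.inl rfl)⟩
  · exact ⟨f, hf, .of_adj (Or.inl rfl) (Or.inr hf) hadj.symm⟩

/-- Not every vertex represented inside `F` meets a set `P` of points of a geodesic: otherwise a
vertex inside `F` and off the geodesic has at most `5 + 5 + 5` neighbours, five for each of `A`, `B`
and `P`. -/
theorem ConnRep.exists_avoiding [Finite V] (R : ConnRep G Γ C) {F A B P : Set W} {x y : W}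
    (hAB : bdry Γ F ⊆ A ∪ B) (hA : Good G Γ C F A) (hB : Good G Γ C F B) {r₀ : V} (hr₀ : C r₀ ⊆ F)
    (g : Geodesic (windowGraph Γ F x y) C x y) (hP : ∀ q ∈ P, ∃ i < g.k, g.At i q) :
    ∃ r, C r ⊆ F ∧ Disjoint (C r) P := by
  have hconn : ∀ r, C r ⊆ F → ∀ c ∈ C r, ∀ c' ∈ C r,
      LinkedIn (windowGraph Γ F x y) (C r) c c' := fun r hr c hc c' hc' =>
    (R.conn r c hc c' hc').to_windowGraph_of_subset hr
  -- if `r₀` is on the geodesic, at least `6` of its neighbours lie inside `F`, and by minimality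
  -- only its predecessor and its successor among them can be on the geodesic
  obtain ⟨r, hr, hrv⟩ : ∃ r, C r ⊆ F ∧ ∀ i < g.k, r ≠ g.v i := by
    by_contra! hno
    obtain ⟨i, hi, rfl⟩ := hno r₀ hr₀
    have hsub : G.neighborSet (g.v i) ⊆ touching G Γ C F A (g.v i) ∪ touching G Γ C F B (g.v i) ∪
        {g.v (i - 1), g.v (i + 1)} := by
      intro z hz
      rcases R.inner_or_touching hAB hr₀ hz with h | h | h
      · right
        obtain ⟨j, hj, rfl⟩ := hno z h
        obtain ⟨hne, c, hci, hcj⟩ := (R.adj _ _).1 hz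
        have h1 : g.At i c := hconn _ hr₀ _ (g.linked i hi).left_mem _ hci
        have h2 : g.At j c := hconn _ h _ (g.linked j hj).left_mem _ hcj
        have : Nonempty V := ⟨g.v i⟩
        have h3 := g.index_le hi hj h1 h2 (.zero c)
        have h4 := g.index_le hj hi h2 h1 (.zero c)
        have h5 : j ≠ i := fun h => hne (by rw [h])
        have h6 : j = i - 1 ∨ j = i + 1 := by omega
        rcases h6 with rfl | rfl
        exacts [Or.inl rfl, Or.inr rfl]
      · exact Or.inl (Or.inl h)
      · exact Or.inl (Or.inr h)
    have h1 := (R.degree (g.v i)).trans (Set.ncard_le_ncard hsub)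
    have h2 := Set.ncard_union_le (touching G Γ C F A (g.v i) ∪ touching G Γ C F B (g.v i))
      {g.v (i - 1), g.v (i + 1)}
    have h3 := Set.ncard_union_le (touching G Γ C F A (g.v i)) (touching G Γ C F B (g.v i))
    have h4 := Set.ncard_insert_le (g.v (i - 1)) {g.v (i + 1)}
    rw [Set.ncard_singleton] at h4
    have h5 := hA _ hr₀
    have h6 := hB _ hr₀
    omega
  by_contra! hno
  have hsub : G.neighborSet r ⊆ touching G Γ C F A r ∪ touching G Γ C F B r ∪
      {z | G.Adj r z ∧ ∃ c ∈ C r, ∃ q ∈ P, LinkedIn (windowGraph Γ F x y) (C z) c q} := by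
    intro z hz
    rcases R.inner_or_touching hAB hr hz with h | h | h
    · right
      obtain ⟨q, hq, hqP⟩ := Set.not_disjoint_iff.1 (hno z h)
      obtain ⟨-, c, hcr, hcz⟩ := (R.adj _ _).1 hz
      exact ⟨hz, c, hcr, q, hqP, hconn z h c hcz q hq⟩
    · exact Or.inl (Or.inl h)
    · exact Or.inl (Or.inr h)
  have h1 := (R.degree r).trans (Set.ncard_le_ncard hsub)
  have h2 := Set.ncard_union_le (touching G Γ C F A r ∪ touching G Γ C F B r)
      {z | G.Adj r z ∧ ∃ c ∈ C r, ∃ q ∈ P, LinkedIn (windowGraph Γ F x y) (C z) c q}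
  have h3 := Set.ncard_union_le (touching G Γ C F A r) (touching G Γ C F B r)
  have h4 := R.count g hP (fun i hi _ _ _ => hrv i hi) (hconn r hr)
  have h5 := hA _ hr
  have h6 := hB _ hr
  omega

/-- A region `F` with controlled boundary can be cut along a path with inner vertices `l`, joining
two points `x`, `y` of its closure, so that a component `F'` of what remains still represents a
vertex and the path is controlled from inside `F'`. -/
theorem ConnRep.split [Finite V] (R : ConnRep G Γ C) {F A B : Set W} {x y : W}
    (hF : ∀ a ∈ F, ∀ b ∈ F, LinkedIn Γ F a b)
    (hAB : bdry Γ F ⊆ A ∪ B) (hA : Good G Γ C F A) (hB : Good G Γ C F B) {r₀ : V} (hr₀ : C r₀ ⊆ F)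
    (hxy : x ≠ y) (hx : x ∈ F ∪ bdry Γ F) (hy : y ∈ F ∪ bdry Γ F) :
    ∃ l : List W, (x :: (l ++ [y])).Nodup ∧ List.IsChain Γ.Adj (x :: (l ++ [y])) ∧
      (∀ u ∈ l, u ∈ F) ∧ (x ∈ F ∨ y ∈ F ∨ l ≠ []) ∧
      ∃ F' ⊆ F, (∀ u ∈ x :: (l ++ [y]), u ∉ F') ∧ (∀ a ∈ F', ∀ b ∈ F', LinkedIn Γ F' a b) ∧
        (∃ r, C r ⊆ F') ∧ (∀ u ∈ bdry Γ F', u ∈ bdry Γ F ∨ u ∈ x :: (l ++ [y])) ∧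
        Good G Γ C F' {u | u ∈ x :: (l ++ [y])} := by
  classical
  have : Nonempty V := ⟨r₀⟩
  obtain ⟨f, hf, hxf⟩ := exists_linked_of_mem_closure hx
  obtain ⟨f', hf', hyf⟩ := exists_linked_of_mem_closure hy
  obtain ⟨w₁, -⟩ := hxf.to_windowGraph (x := x) (y := y) subset_rfl (Or.inl rfl)
  obtain ⟨w₂, -⟩ := hyf.to_windowGraph (x := x) (y := y) subset_rfl (Or.inr (Or.inl rfl))
  obtain ⟨w₃, -⟩ := (hF f hf f' hf').to_windowGraph_of_subset (x := x) (y := y) subset_rfl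
  obtain ⟨g⟩ := Geodesic.exists_geodesic
    (fun p q (h : (windowGraph Γ F x y).Adj p q) => R.edge p q h.1)
    ((w₁.append w₃).append w₂.reverse)
  obtain ⟨w, hw, hwg⟩ := g.exists_path hxy
  obtain ⟨l, hl⟩ : ∃ l : List W, w.support = x :: (l ++ [y]) := by
    cases w with
    | nil => exact absurd rfl hxy
    | cons h w =>
      have h1 := List.dropLast_append_getLast w.support_ne_nil
      rw [w.getLast_support] at h1
      exact ⟨w.support.dropLast, by rw [SimpleGraph.Walk.support_cons, h1]⟩
  have hnd : (x :: (l ++ [y])).Nodup := hl ▸ hw.support_nodup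
  have hch : List.IsChain (windowGraph Γ F x y).Adj (x :: (l ++ [y])) :=
    hl ▸ w.isChain_adj_support
  have hX : ∀ u ∈ x :: (l ++ [y]), u ∈ insert x (insert y F) := by
    have : ∀ {a b : W} (w : (windowGraph Γ F x y).Walk a b), a ∈ insert x (insert y F) →
        ∀ u ∈ w.support, u ∈ insert x (insert y F) := by
      intro a b w
      induction w with
      | nil => intro ha u hu; rw [SimpleGraph.Walk.support_nil, List.mem_singleton] at hu; rwa [hu]
      | cons h w ih =>
        intro ha u hu
        rw [SimpleGraph.Walk.support_cons, List.mem_cons] at hu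
        rcases hu with rfl | hu
        exacts [ha, ih h.2.2.1 u hu]
    exact fun u hu => this w (Or.inl rfl) u (hl ▸ hu)
  have hlF : ∀ u ∈ l, u ∈ F := by
    intro u hu
    rcases hX u (by simp [hu]) with rfl | rfl | h
    · simp [hu] at hnd
    · have := (List.nodup_cons.1 hnd).2
      rw [List.nodup_append] at this
      exact absurd rfl (this.2.2 u hu u (by simp))
    · exact h
  obtain ⟨r, hr, hrP⟩ := R.exists_avoiding (P := {u | u ∈ x :: (l ++ [y])}) hAB hA hB hr₀ g
    (fun q hq => hwg q (hl ▸ hq))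
  obtain ⟨u₀, hu₀⟩ := R.nonempty r
  set P : Set W := {u | u ∈ x :: (l ++ [y])} with hPdef
  have hrFP : C r ⊆ F \ P := fun u hu => ⟨hr hu, Set.disjoint_left.1 hrP hu⟩
  let F' : Set W := {u | LinkedIn Γ (F \ P) u₀ u}
  have hF'F : F' ⊆ F := fun u hu => (LinkedIn.right_mem hu).1
  have hF'P : ∀ u ∈ x :: (l ++ [y]), u ∉ F' := fun u hu hu' => (LinkedIn.right_mem hu').2 hu
  have hstep : ∀ u ∈ F', LinkedIn Γ F' u₀ u := by
    rintro u ⟨w, hw⟩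
    exact ⟨w, fun v hv => LinkedIn.of_mem_support w hw hv⟩
  refine ⟨l, hnd, hch.imp fun _ _ h => h.1, hlF, ?_, F', hF'F, hF'P,
    fun a ha b hb => (hstep a ha).symm.trans (hstep b hb),
    ⟨r, fun u hu => (R.conn r u₀ hu₀ u hu).mono hrFP⟩, ?_, ?_⟩
  · by_cases hl0 : l = []
    · subst hl0
      have : (windowGraph Γ F x y).Adj x y := by simpa using hch
      exact this.2.2.2.elim Or.inl (Or.inr ∘ Or.inl)
    · exact Or.inr (Or.inr hl0)
  · rintro q ⟨hq, v, hv, hadj⟩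
    by_cases hqP : q ∈ P
    · exact Or.inr hqP
    · refine Or.inl ⟨fun hqF => hq ?_, v, hF'F hv, hadj⟩
      exact LinkedIn.trans hv (.of_adj (LinkedIn.right_mem hv) ⟨hqF, hqP⟩ hadj)
  · intro s hs
    refine (Set.ncard_le_ncard ?_).trans (R.count g (S := P) (r := s)
      (fun q hq => hwg q (hl ▸ hq)) ?_ ?_)
    · rintro z ⟨hz, c, hc, q, hq, hlk⟩
      refine ⟨hz, c, hc, q, hq, ?_⟩
      exact (hlk.to_windowGraph (Set.inter_subset_right.trans (Set.insert_subset_insert hF'F))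
        (hX q hq)).mono Set.inter_subset_left
    · rintro i hi q hq hat rfl
      exact hF'P q hq (hs hat.right_mem)
    · exact fun c hc c' hc' =>
        (R.conn s c hc c' hc').to_windowGraph_of_subset (hs.trans hF'F)

/-- A combinatorial form of planarity: in a copy of `K₃,₃` whose edges are connected vertex sets of
`Γ`, two independent edges meet. -/
def K33Free (Γ : SimpleGraph W) : Prop :=
  ∀ (p q : Fin 3 → W) (L : Fin 3 → Fin 3 → Set W), (∀ i j, LinkedIn Γ (L i j) (p i) (q j)) →
    ∃ i j k l, i ≠ k ∧ j ≠ l ∧ (L i j ∩ L k l).Nonempty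

/-- Three disjoint arcs `I j` joining `x` to `y`, and a connected set disjoint from them but adjacent
to all three, form a `K₃,₃` with hubs `x`, `y`, `f` and spokes `b j`. -/
theorem K33Free.no_theta (hK : K33Free Γ) {F : Set W} {x y f : W} (hxy : x ≠ y)
    (hF : ∀ a ∈ F, ∀ b ∈ F, LinkedIn Γ F a b) (hf : f ∈ F) (I : Fin 3 → Set W) (b : Fin 3 → W)
    (hb : ∀ j, b j ∈ I j) (hI : ∀ j l, j ≠ l → Disjoint (I j) (I l)) (hxI : ∀ j, x ∉ I j)
    (hyI : ∀ j, y ∉ I j) (hFI : ∀ j, Disjoint (I j) F) (hxF : x ∉ F) (hyF : y ∉ F)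
    (hx : ∀ j, LinkedIn Γ (insert x (I j)) x (b j)) (hy : ∀ j, LinkedIn Γ (insert y (I j)) y (b j))
    (hbF : ∀ j, b j ∈ bdry Γ F) : False := by
  have hfb : ∀ j, LinkedIn Γ (insert (b j) F) f (b j) := by
    intro j
    obtain ⟨-, u, hu, hadj⟩ := hbF j
    exact ((hF f hf u hu).mono (Set.subset_insert _ _)).trans
      (.of_adj (Or.inr hu) (Or.inl rfl) hadj)
  have e1 : ∀ j l, j ≠ l → Disjoint (insert x (I j)) (insert y (I l)) := by
    intro j l hjl
    rw [Set.disjoint_insert_left, Set.disjoint_insert_right]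
    exact ⟨by simp [hxy, hxI], hyI j, hI j l hjl⟩
  have e2 : ∀ z, z ∉ F → (∀ j, z ∉ I j) → ∀ j l, j ≠ l →
      Disjoint (insert z (I j)) (insert (b l) F) := by
    intro z hz hzI j l hjl
    rw [Set.disjoint_insert_left, Set.disjoint_insert_right]
    refine ⟨?_, Set.disjoint_right.1 (hI j l hjl) (hb l), hFI j⟩
    rintro (rfl | h)
    exacts [hzI l (hb l), hz h]
  obtain ⟨i, j, k, l, hik, hjl, hne⟩ := hK ![x, y, f] b
    (fun i j => ![insert x (I j), insert y (I j), insert (b j) F] i) (by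
      intro i j
      fin_cases i
      exacts [hx j, hy j, hfb j])
  apply Set.not_disjoint_iff_nonempty_inter.2 hne
  fin_cases i <;> fin_cases k
  · exact absurd rfl hik
  · exact e1 j l hjl
  · exact e2 x hxF hxI j l hjl
  · exact (e1 l j hjl.symm).symm
  · exact absurd rfl hik
  · exact e2 y hyF hyI j l hjl
  · exact (e2 x hxF hxI l j hjl.symm).symm
  · exact (e2 y hyF hyI l j hjl.symm).symm
  · exact absurd rfl hik

theorem LinkedIn.of_isChain_left {x y b : W} {l : List W}
    (hl : List.IsChain Γ.Adj (x :: (l ++ [y]))) (hb : b ∈ l) :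
    LinkedIn Γ (insert x {u | u ∈ l}) x b := by
  refine LinkedIn.of_isChain (l := l) (List.IsChain.left_of_append (l₁ := x :: l) hl) ?_ b (List.mem_cons_of_mem _ hb)
  intro u hu
  exact List.mem_cons.1 hu

theorem isChain_reverse_adj {l : List W} (hl : List.IsChain Γ.Adj l) :
    List.IsChain Γ.Adj l.reverse := by
  rw [List.isChain_reverse]
  exact hl.imp fun _ _ h => h.symm

theorem LinkedIn.of_isChain_right {x y b : W} {l : List W}
    (hl : List.IsChain Γ.Adj (x :: (l ++ [y]))) (hb : b ∈ l) :
    LinkedIn Γ (insert y {u | u ∈ l}) y b := by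
  have h := isChain_reverse_adj hl
  have := LinkedIn.of_isChain_left (x := y) (y := x) (l := l.reverse) (b := b)
    (by simpa using h) (by simpa using hb)
  simpa using this

theorem exists_first {P : W → Prop} {l : List W} (h : ∃ a ∈ l, P a) :
    ∃ m x t, l = m ++ x :: t ∧ P x ∧ ∀ u ∈ m, ¬ P u := by
  induction l with
  | nil => simp at h
  | cons a l ih =>
    by_cases ha : P a
    · exact ⟨[], a, l, rfl, ha, by simp⟩
    · obtain ⟨b, hb, hPb⟩ := h
      rcases List.mem_cons.1 hb with rfl | hb
      · exact absurd hPb ha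
      · obtain ⟨m, x, t, rfl, hx, hm⟩ := ih ⟨b, hb, hPb⟩
        refine ⟨a :: m, x, t, rfl, hx, ?_⟩
        rintro u hu
        rcases List.mem_cons.1 hu with rfl | hu
        exacts [ha, hm u hu]

theorem exists_first_last {P : W → Prop} {l : List W} {a b : W} (ha : a ∈ l) (hb : b ∈ l)
    (hPa : P a) (hPb : P b) (hab : a ≠ b) :
    ∃ m x t y n, l = m ++ x :: (t ++ y :: n) ∧ P x ∧ P y ∧ (∀ u ∈ m, ¬ P u) ∧ ∀ u ∈ n, ¬ P u := by
  obtain ⟨m, x, s, rfl, hx, hm⟩ := exists_first ⟨a, ha, hPa⟩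
  have hs : ∃ c ∈ s.reverse, P c := by
    have key : ∀ c, c ∈ m ++ x :: s → P c → c ≠ x → c ∈ s := by
      intro c hc hPc hcx
      rcases List.mem_append.1 hc with h | h
      · exact absurd hPc (hm c h)
      · exact (List.mem_cons.1 h).resolve_left hcx
    by_cases h : a = x
    · exact ⟨b, List.mem_reverse.2 (key b hb hPb fun h' => hab (h.trans h'.symm)), hPb⟩
    · exact ⟨a, List.mem_reverse.2 (key a ha hPa h), hPa⟩
  obtain ⟨n, y, t, hst, hy, hn⟩ := exists_first hs
  refine ⟨m, x, t.reverse, y, n.reverse, ?_, hx, hy, hm, by simpa using hn⟩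
  have := congrArg List.reverse hst
  rw [List.reverse_reverse] at this
  simp [this]

/-- A connected region `F` representing at least one vertex, whose boundary lies on a closed curve
composed of two arcs `c₁` and `c₂`, the boundary points on each arc being controlled from inside `F`.
The last and the first point of the whole sequence are required to be adjacent only if both arcs are
nonempty. -/
structure Frame (G : SimpleGraph V) (Γ : SimpleGraph W) (C : V → Set W) (F : Set W)
    (c₁ c₂ : List W) : Prop where
  conn : ∀ a ∈ F, ∀ b ∈ F, LinkedIn Γ F a b
  inner : ∃ r, C r ⊆ F
  nodup : (c₁ ++ c₂).Nodup
  chain₁ : List.IsChain Γ.Adj (c₁ ++ c₂)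
  chain₂ : List.IsChain Γ.Adj (c₂ ++ c₁)
  notMem : ∀ u ∈ c₁ ++ c₂, u ∉ F
  bdry_mem : ∀ u ∈ bdry Γ F, u ∈ c₁ ∨ u ∈ c₂
  good₁ : Good G Γ C F {u | u ∈ bdry Γ F ∧ u ∈ c₁}
  good₂ : Good G Γ C F {u | u ∈ bdry Γ F ∧ u ∈ c₂}

theorem Frame.swap {F : Set W} {c₁ c₂ : List W} (h : Frame G Γ C F c₁ c₂) :
    Frame G Γ C F c₂ c₁ where
  conn := h.conn
  inner := h.inner
  nodup := List.nodup_append_comm.1 h.nodup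
  chain₁ := h.chain₂
  chain₂ := h.chain₁
  notMem u hu := h.notMem u (by simpa [or_comm] using hu)
  bdry_mem u hu := (h.bdry_mem u hu).symm
  good₁ := h.good₂
  good₂ := h.good₁

theorem Frame.bdry_subset {F : Set W} {c₁ c₂ : List W} (h : Frame G Γ C F c₁ c₂) :
    bdry Γ F ⊆ {u | u ∈ bdry Γ F ∧ u ∈ c₁} ∪ {u | u ∈ bdry Γ F ∧ u ∈ c₂} := fun u hu =>
  (h.bdry_mem u hu).imp (And.intro hu) (And.intro hu)

/-- Even `C r` has at least two points: otherwise any two neighbours of `r` would share its only point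
and form a triangle with `r`. -/
theorem ConnRep.nontrivial (R : ConnRep G Γ C) {F : Set W} {r : V} (hr : C r ⊆ F) :
    ∃ a ∈ F, ∃ b ∈ F, a ≠ b := by
  by_contra! h
  have hN : 1 < (G.neighborSet r).ncard := lt_of_lt_of_le (by norm_num) (R.degree r)
  obtain ⟨z, hz, z', hz', hne⟩ := (Set.one_lt_ncard (Set.finite_of_ncard_pos (by omega))).1 hN
  obtain ⟨-, a, ha, haz⟩ := (R.adj _ _).1 hz
  obtain ⟨-, b, hb, hbz⟩ := (R.adj _ _).1 hz'
  obtain rfl := h a (hr ha) b (hr hb)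
  exact R.no_triangle r z z' hz ((R.adj z z').2 ⟨hne, a, haz, hbz⟩) (G.adj_symm hz')

theorem ssubset_of_split {F F' : Set W} {x y : W} {l : List W} (hF : F' ⊆ F)
    (hlF : ∀ u ∈ l, u ∈ F) (h : x ∈ F ∨ y ∈ F ∨ l ≠ []) (hF' : ∀ u ∈ x :: (l ++ [y]), u ∉ F') :
    F' ⊂ F := by
  refine hF.ssubset_of_ne ?_
  rintro rfl
  rcases h with h | h | h
  · exact hF' x (by simp) h
  · exact hF' y (by simp) h
  · obtain ⟨u, hu⟩ := List.exists_mem_of_ne_nil l h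
    exact hF' u (by simp [hu]) (hlF u hu)

/-- When the boundary consists of at most two points, the cutting path alone separates the smaller
region. -/
theorem Frame.descend_of_two [Finite V] (R : ConnRep G Γ C) {F : Set W} {c₁ c₂ : List W}
    (h : Frame G Γ C F c₁ c₂) {x y : W} (hxy : x ≠ y) (hx : x ∈ F ∪ bdry Γ F)
    (hy : y ∈ F ∪ bdry Γ F) (hb : ∀ u ∈ bdry Γ F, u = x ∨ u = y) :
    ∃ F' ⊂ F, ∃ c₁' c₂', Frame G Γ C F' c₁' c₂' := by
  obtain ⟨r₀, hr₀⟩ := h.inner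
  obtain ⟨l, hnd, hch, hlF, hne, F', hF'F, hF'l, hconn, hr, hbd, hgood⟩ :=
    R.split h.conn h.bdry_subset h.good₁ h.good₂ hr₀ hxy hx hy
  refine ⟨F', ssubset_of_split hF'F hlF hne hF'l, x :: (l ++ [y]), [], hconn, hr,
    by simpa using hnd, by simpa using hch, by simpa using hch, by simpa using hF'l, ?_,
    hgood.anti subset_rfl fun u hu => hu.2, hgood.anti subset_rfl fun u hu => by simp at hu⟩
  intro u hu
  rcases hbd u hu with h | h
  · rcases hb u h with rfl | rfl <;> simp
  · exact Or.inl h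

/-- When `c₁` carries two boundary points, cut `F` between its extreme ones `x` and `y`. Of the three
arcs from `x` to `y`, namely the part `p` of `c₁`, the rest of the curve, and the new path `g`, the
new region misses at least one by planarity; the two others bound it. -/
theorem Frame.descend_of_pair [Finite V] (R : ConnRep G Γ C) (hK : K33Free Γ) {F : Set W}
    {c₁ c₂ : List W} (h : Frame G Γ C F c₁ c₂) {a b : W} (ha : a ∈ c₁) (hb : b ∈ c₁)
    (haF : a ∈ bdry Γ F) (hbF : b ∈ bdry Γ F) (hab : a ≠ b) :
    ∃ F' ⊂ F, ∃ c₁' c₂', Frame G Γ C F' c₁' c₂' := by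
  obtain ⟨r₀, hr₀⟩ := h.inner
  obtain ⟨m, x, p, y, n, rfl, hx, hy, hm, hn⟩ :=
    exists_first_last (P := (· ∈ bdry Γ F)) ha hb haF hbF hab
  have hnd := h.nodup
  have hxy : x ≠ y := by
    rintro rfl
    simp [List.nodup_append, List.nodup_cons] at hnd
  obtain ⟨g, hgnd, hgch, hgF, hne, F', hF'F, hF'g, hconn, hr, hbd, hgood⟩ :=
    R.split h.conn h.bdry_subset h.good₁ h.good₂ hr₀ hxy (Or.inr hx) (Or.inr hy)
  refine ⟨F', ssubset_of_split hF'F hgF hne hF'g, ?_⟩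
  have hch := h.chain₁
  have hch₂ := h.chain₂
  have hnF := h.notMem
  have hpch : List.IsChain Γ.Adj (x :: (p ++ [y])) := by
    have : List.IsChain Γ.Adj (m ++ ((x :: (p ++ [y])) ++ (n ++ c₂))) := by simpa using hch
    exact this.right_of_append.left_of_append
  have hgnF : ∀ u ∈ g, u ∉ m ++ x :: (p ++ y :: n) ++ c₂ := fun u hu hu' => hnF u hu' (hgF u hu)
  have hgr : List.IsChain Γ.Adj (y :: (g.reverse ++ [x])) := by
    simpa using isChain_reverse_adj hgch
  have hgy : List.IsChain Γ.Adj ([y] ++ g.reverse) :=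
    List.IsChain.left_of_append (l₂ := [x]) hgr
  have hgx : List.IsChain Γ.Adj (g.reverse ++ [x]) :=
    List.IsChain.right_of_append (l₁ := [y]) hgr
  -- the points of the new boundary which lie on the old closed curve are old boundary points
  have hbd' : ∀ u ∈ bdry Γ F', u ∈ bdry Γ F ∨ u ∈ g := by
    intro u hu
    rcases hbd u hu with h | h
    · exact Or.inl h
    · simp only [List.mem_cons, List.mem_append, List.not_mem_nil, or_false] at h
      rcases h with rfl | h | rfl
      exacts [Or.inl hx, Or.inr h, Or.inl hy]
  by_cases hcase₂ : ∀ u ∈ bdry Γ F', u ∉ c₂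
  · refine ⟨x :: (p ++ [y]), g.reverse, hconn, hr, ?_, ?_, ?_, ?_, ?_, ?_, ?_⟩
    · clear * - hnd hgnd hgnF
      simp only [List.nodup_append, List.nodup_cons, List.nodup_reverse] at *
      grind
    · simpa using List.IsChain.append_overlap (l₁ := x :: p) (l₂ := [y]) (by simpa using hpch) hgy
        (by simp)
    · simpa using List.IsChain.append_overlap (l₂ := [x]) hgx
        (by simpa using hpch : List.IsChain Γ.Adj ([x] ++ (p ++ [y]))) (by simp)
    · intro u hu
      by_cases hug : u ∈ g
      · exact hF'g u (by simp [hug])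
      · exact fun huF => hnF u (by grind) (hF'F huF)
    · intro u hu
      have := hcase₂ u hu
      rcases hbd' u hu with h' | h'
      · have := h.bdry_mem u h'
        grind
      · exact Or.inr (by simpa using h')
    · refine h.good₁.anti hF'F fun u hu => ?_
      have := hbd' u hu.1
      have := hu.2
      grind
    · exact hgood.anti subset_rfl fun u hu => by
        have := hu.2
        grind
  push Not at hcase₂
  obtain ⟨b₂, hb₂, hbc₂⟩ := hcase₂
  have hqch : List.IsChain Γ.Adj (y :: ((n ++ c₂ ++ m) ++ [x])) := by
    have h1 : List.IsChain Γ.Adj (y :: n ++ c₂) :=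
      List.IsChain.right_of_append (l₁ := m ++ x :: p) (by simpa using hch)
    have h2 : List.IsChain Γ.Adj (c₂ ++ (m ++ [x])) :=
      List.IsChain.left_of_append (l₂ := p ++ y :: n) (by simpa using hch₂)
    simpa using h1.append_overlap h2 (List.ne_nil_of_mem hbc₂)
  by_cases hcase₁ : ∀ u ∈ bdry Γ F', u ∉ p
  · refine ⟨x :: (g ++ [y]), n ++ c₂ ++ m, hconn, hr, ?_, ?_, ?_, ?_, ?_, ?_, ?_⟩
    · clear * - hnd hgnd hgnF
      simp only [List.nodup_append, List.nodup_cons] at *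
      grind
    · simpa using List.IsChain.append_overlap (l₁ := x :: g) (l₂ := [y]) (by simpa using hgch)
        (List.IsChain.left_of_append (l₁ := [y] ++ (n ++ c₂ ++ m)) (l₂ := [x]) hqch) (by simp)
    · simpa using List.IsChain.append_overlap (l₁ := n ++ c₂ ++ m) (l₂ := [x])
        (List.IsChain.right_of_append (l₁ := [y]) hqch)
        (by simpa using hgch : List.IsChain Γ.Adj ([x] ++ (g ++ [y]))) (by simp)
    · intro u hu
      by_cases hug : u ∈ g
      · exact hF'g u (by simp [hug])
      · exact fun huF => hnF u (by grind) (hF'F huF)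
    · intro u hu
      have := hcase₁ u hu
      rcases hbd' u hu with h' | h'
      · have := h.bdry_mem u h'
        grind
      · exact Or.inl (by simp [h'])
    · exact hgood.anti subset_rfl fun u hu => hu.2
    · refine h.good₂.anti hF'F fun u hu => ?_
      have h1 := hbd' u hu.1
      have h2 := hu.2
      have h3 := hm u
      have h4 := hn u
      grind
  push Not at hcase₁
  obtain ⟨b₁, hb₁, hbp⟩ := hcase₁
  by_cases hcase₃ : ∀ u ∈ bdry Γ F', u ∉ g
  · have hsub : ∀ u ∈ bdry Γ F', u ∈ bdry Γ F := fun u hu =>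
      (hbd' u hu).resolve_right (hcase₃ u hu)
    exact ⟨m ++ x :: (p ++ y :: n), c₂, hconn, hr, hnd, hch, hch₂,
      fun u hu huF => hnF u hu (hF'F huF), fun u hu => h.bdry_mem u (hsub u hu),
      h.good₁.anti hF'F fun u hu => ⟨hsub u hu.1, hu.2⟩,
      h.good₂.anti hF'F fun u hu => ⟨hsub u hu.1, hu.2⟩⟩
  push Not at hcase₃
  obtain ⟨b₃, hb₃, hbg⟩ := hcase₃
  exfalso
  obtain ⟨r, hr⟩ := hr
  obtain ⟨f, hf⟩ := R.nonempty r
  have hbq : b₂ ∈ n ++ c₂ ++ m := by simp [hbc₂]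
  have hpF : ∀ u ∈ p, u ∉ F := fun u hu => hnF u (by simp [hu])
  have hqF : ∀ u ∈ n ++ c₂ ++ m, u ∉ F := fun u hu => hnF u (by grind)
  have hxF := hnF x (by simp)
  have hyF := hnF y (by simp)
  have hpq : Disjoint {u | u ∈ p} {u | u ∈ n ++ c₂ ++ m} := by
    refine Set.disjoint_left.2 fun u (hu : u ∈ p) (hu' : u ∈ n ++ c₂ ++ m) => ?_
    clear * - hnd hu hu'
    simp only [List.nodup_append, List.nodup_cons] at *
    grind
  have hpg : Disjoint {u | u ∈ p} {u | u ∈ g} :=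
    Set.disjoint_left.2 fun u hu hu' => hpF u hu (hgF u hu')
  have hqg : Disjoint {u | u ∈ n ++ c₂ ++ m} {u | u ∈ g} :=
    Set.disjoint_left.2 fun u hu hu' => hqF u hu (hgF u hu')
  have hxpq : x ∉ p ∧ x ∉ n ++ c₂ ++ m ∧ y ∉ p ∧ y ∉ n ++ c₂ ++ m := by
    clear * - hnd
    simp only [List.nodup_append, List.nodup_cons] at *
    grind
  refine hK.no_theta hxy hconn (hr hf) ![{u | u ∈ p}, {u | u ∈ n ++ c₂ ++ m}, {u | u ∈ g}]
    ![b₁, b₂, b₃] ?_ ?_ ?_ ?_ ?_ (hF'g x (by simp)) (hF'g y (by simp)) ?_ ?_ ?_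
  · intro j
    fin_cases j
    exacts [hbp, hbq, hbg]
  · intro j l hjl
    fin_cases j <;> fin_cases l
    exacts [absurd rfl hjl, hpq, hpg, hpq.symm, absurd rfl hjl, hqg, hpg.symm, hqg.symm,
      absurd rfl hjl]
  · intro j
    fin_cases j
    exacts [hxpq.1, hxpq.2.1, fun hxg => hxF (hgF x hxg)]
  · intro j
    fin_cases j
    exacts [hxpq.2.2.1, hxpq.2.2.2, fun hyg => hyF (hgF y hyg)]
  · intro j
    refine Set.disjoint_left.2 fun u hu huF => ?_
    fin_cases j
    exacts [hpF u hu (hF'F huF), hqF u hu (hF'F huF),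
      hF'g u (by simpa using Or.inr (Or.inl hu)) huF]
  · intro j
    fin_cases j
    exacts [.of_isChain_left hpch hbp, .of_isChain_right hqch hbq, .of_isChain_left hgch hbg]
  · intro j
    fin_cases j
    exacts [.of_isChain_right hpch hbp, .of_isChain_left hqch hbq, .of_isChain_right hgch hbg]
  · intro j
    fin_cases j
    exacts [hb₁, hb₂, hb₃]

theorem Frame.descend [Finite V] (R : ConnRep G Γ C) (hK : K33Free Γ) {F : Set W}
    {c₁ c₂ : List W} (h : Frame G Γ C F c₁ c₂) :
    ∃ F' ⊂ F, ∃ c₁' c₂', Frame G Γ C F' c₁' c₂' := by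
  by_cases h₁ : ∃ a ∈ c₁, ∃ b ∈ c₁, a ∈ bdry Γ F ∧ b ∈ bdry Γ F ∧ a ≠ b
  · obtain ⟨a, ha, b, hb, haF, hbF, hab⟩ := h₁
    exact h.descend_of_pair R hK ha hb haF hbF hab
  by_cases h₂ : ∃ a ∈ c₂, ∃ b ∈ c₂, a ∈ bdry Γ F ∧ b ∈ bdry Γ F ∧ a ≠ b
  · obtain ⟨a, ha, b, hb, haF, hbF, hab⟩ := h₂
    exact h.swap.descend_of_pair R hK ha hb haF hbF hab
  push Not at h₁ h₂
  obtain ⟨r₀, hr₀⟩ := h.inner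
  obtain ⟨s, hs, t, ht, hst⟩ := R.nontrivial hr₀
  by_cases h0 : ∃ x, x ∈ bdry Γ F
  · obtain ⟨x, hx⟩ := h0
    by_cases h1 : ∃ y ∈ bdry Γ F, y ≠ x
    · obtain ⟨y, hy, hyx⟩ := h1
      refine h.descend_of_two R hyx.symm (Or.inr hx) (Or.inr hy) fun u hu => ?_
      have e1 := h.bdry_mem x hx
      have e2 := h.bdry_mem y hy
      have e3 := h.bdry_mem u hu
      grind
    · push Not at h1
      exact h.descend_of_two R (y := s) (by rintro rfl; exact hx.1 hs) (Or.inr hx) (Or.inl hs)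
        fun u hu => Or.inl (h1 u hu)
  · push Not at h0
    exact h.descend_of_two R hst (Or.inl hs) (Or.inl ht) fun u hu => absurd hu (h0 u)

/-- Starting with a component of `Γ`, whose boundary is empty, the regions would shrink forever. -/
theorem ConnRep.false [Finite V] [Nonempty V] (R : ConnRep G Γ C) (hC : ∀ v, (C v).Finite)
    (hK : K33Free Γ) : False := by
  have key : ∀ n, ∀ F : Set W, F.Finite → F.ncard = n → ∀ c₁ c₂, ¬ Frame G Γ C F c₁ c₂ := by
    intro n
    induction n using Nat.strong_induction_on with
    | _ n ih =>
      rintro F hfin rfl c₁ c₂ h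
      obtain ⟨F', hF', c₁', c₂', h'⟩ := h.descend R hK
      exact ih _ (Set.ncard_lt_ncard hF' hfin) F' (hfin.subset hF'.subset) rfl _ _ h'
  obtain ⟨r⟩ := ‹Nonempty V›
  obtain ⟨u₀, hu₀⟩ := R.nonempty r
  have hb : bdry Γ {u | LinkedIn Γ Set.univ u₀ u} = ∅ := by
    refine Set.eq_empty_iff_forall_notMem.2 ?_
    rintro q ⟨hq, f, hf, hadj⟩
    exact hq (LinkedIn.trans hf (.of_adj trivial trivial hadj))
  have hstep : ∀ u, LinkedIn Γ Set.univ u₀ u →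
      LinkedIn Γ {u | LinkedIn Γ Set.univ u₀ u} u₀ u := by
    rintro u ⟨w, hw⟩
    exact ⟨w, fun v hv => LinkedIn.of_mem_support w hw hv⟩
  have hfin : {u | LinkedIn Γ Set.univ u₀ u}.Finite := by
    refine (Set.finite_iUnion hC).subset ?_
    rintro u ⟨w, -⟩
    rw [Set.mem_iUnion]
    cases h : w.reverse with
    | nil => exact ⟨r, hu₀⟩
    | cons hadj _ => exact (R.edge _ _ hadj).imp fun _ hv => hv.1
  refine key _ {u | LinkedIn Γ Set.univ u₀ u} hfin rfl [] [] ⟨fun a ha b hb =>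
    (hstep a ha).symm.trans (hstep b hb), ⟨r, fun u hu => (R.conn r u₀ hu₀ u hu).mono
      (Set.subset_univ _)⟩, by simp, by simp, by simp, by simp, by simp [hb], ?_, ?_⟩
  · intro s hs
    simp [touching]
  · intro s hs
    simp [touching]

end Descent

/-! ### Discretization of strings -/

section Discretization

/-- Adjacency in the infinite square grid. -/
def gridAdj (m n : ℤ × ℤ) : Prop :=
  (m.1 = n.1 ∧ |m.2 - n.2| = 1) ∨ (m.2 = n.2 ∧ |m.1 - n.1| = 1)

theorem gridAdj.symm {m n : ℤ × ℤ} (h : gridAdj m n) : gridAdj n m := by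
  unfold gridAdj at *
  rwa [abs_sub_comm n.2, abs_sub_comm n.1, @eq_comm _ n.1, @eq_comm _ n.2]

/-- The grid point `m` as a point of the complex plane. -/
noncomputable def toPlane (m : ℤ × ℤ) : ℂ := ⟨m.1, m.2⟩

/-- The grid point at the lower left of `z`. A point of a unit grid segment is always mapped to an end
of this segment, so a walk in a set `S` of grid points is drawn within `floorPt ⁻¹' S`. -/
noncomputable def floorPt (z : ℂ) : ℤ × ℤ := (⌊z.re⌋, ⌊z.im⌋)

theorem floorPt_toPlane (m : ℤ × ℤ) : floorPt (toPlane m) = m := by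
  simp [floorPt, toPlane]

theorem floor_mem_of_between {a b : ℤ} (h : |a - b| = 1) {s t : ℝ} (hs : 0 ≤ s) (ht : 0 ≤ t)
    (hst : s + t = 1) : ⌊s * a + t * b⌋ = a ∨ ⌊s * a + t * b⌋ = b := by
  rcases (abs_eq (by norm_num)).1 h with h | h
  · obtain rfl : a = b + 1 := by omega
    push_cast
    rcases eq_or_lt_of_le ht with rfl | ht
    · left
      obtain rfl : s = 1 := by linarith
      rw [Int.floor_eq_iff]; push_cast; constructor <;> linarith
    · right
      have : s * (b + 1) + t * b = b + s := by linear_combination (b : ℝ) * hst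
      rw [this, Int.floor_eq_iff]; constructor <;> linarith
  · obtain rfl : b = a + 1 := by omega
    push_cast
    rcases eq_or_lt_of_le hs with rfl | hs
    · right
      obtain rfl : t = 1 := by linarith
      rw [Int.floor_eq_iff]; push_cast; constructor <;> linarith
    · left
      have : s * a + t * (a + 1) = a + t := by linear_combination (a : ℝ) * hst
      rw [this, Int.floor_eq_iff]; constructor <;> linarith

theorem floorPt_segment {m n : ℤ × ℤ} (h : gridAdj m n) {z : ℂ}
    (hz : z ∈ segment ℝ (toPlane m) (toPlane n)) : floorPt z = m ∨ floorPt z = n := by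
  obtain ⟨s, t, hs, ht, hst, rfl⟩ := hz
  obtain ⟨m₁, m₂⟩ := m
  obtain ⟨n₁, n₂⟩ := n
  have hc : ∀ a : ℤ, ⌊s * a + t * a⌋ = a := fun a => by rw [← add_mul, hst, one_mul]; simp
  rcases h with ⟨h1, h2⟩ | ⟨h1, h2⟩
  · obtain rfl : m₁ = n₁ := h1
    simpa [floorPt, toPlane, hc] using floor_mem_of_between h2 hs ht hst
  · obtain rfl : m₂ = n₂ := h1
    simpa [floorPt, toPlane, hc] using floor_mem_of_between h2 hs ht hst

/-- A grid walk in `S` is drawn in the plane along the grid segments. -/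
theorem LinkedIn.joinedIn {Γ : SimpleGraph (ℤ × ℤ)} (hΓ : ∀ m n, Γ.Adj m n → gridAdj m n)
    {S : Set (ℤ × ℤ)} {a b : ℤ × ℤ} (h : LinkedIn Γ S a b) :
    JoinedIn (floorPt ⁻¹' S) (toPlane a) (toPlane b) := by
  obtain ⟨w, hw⟩ := h
  induction w with
  | nil =>
    refine JoinedIn.refl ?_
    rw [Set.mem_preimage, floorPt_toPlane]
    exact hw _ (by simp)
  | @cons a c b hadj w ih =>
    simp only [SimpleGraph.Walk.support_cons, List.mem_cons, forall_eq_or_imp] at hw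
    refine (JoinedIn.of_segment_subset fun z hz => ?_).trans (ih hw.2)
    rcases floorPt_segment (hΓ _ _ hadj) hz with h | h
    · rw [Set.mem_preimage, h]; exact hw.1
    · rw [Set.mem_preimage, h]; exact hw.2 _ w.start_mem_support

theorem k33Free_of_gridAdj {Γ : SimpleGraph (ℤ × ℤ)} (hΓ : ∀ m n, Γ.Adj m n → gridAdj m n) :
    K33Free Γ := by
  intro p q L hL
  have hJ := fun i j => (hL i j).joinedIn hΓ
  obtain ⟨i, j, k, l, hik, hjl, z, ⟨s, hs⟩, ⟨t, ht⟩⟩ :=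
    k33_planar (p := fun i => toPlane (p i)) (q := fun j => toPlane (q j))
      (fun i j => (hJ i j).somePath)
  refine ⟨i, j, k, l, hik, hjl, floorPt z, ?_, ?_⟩
  · have := (hJ i j).somePath_mem s
    rwa [hs] at this
  · have := (hJ k l).somePath_mem t
    rwa [ht] at this

/-- The closed unit square centred at the grid point `m`. -/
def cell (m : ℤ × ℤ) : Set (ℝ × ℝ) := {a | |a.1 - m.1| ≤ 1 / 2 ∧ |a.2 - m.2| ≤ 1 / 2}

/-- The grid points whose unit square meets `T`. -/
def cells (T : Set (ℝ × ℝ)) : Set (ℤ × ℤ) := {m | (T ∩ cell m).Nonempty}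

theorem isClosed_cell (m : ℤ × ℤ) : IsClosed (cell m) :=
  IsClosed.inter
    (isClosed_le (f := fun a : ℝ × ℝ => |a.1 - m.1|) (by fun_prop) continuous_const)
    (isClosed_le (f := fun a : ℝ × ℝ => |a.2 - m.2|) (by fun_prop) continuous_const)

theorem mem_cell_round (a : ℝ × ℝ) : a ∈ cell (round a.1, round a.2) :=
  ⟨abs_sub_round _, abs_sub_round _⟩

theorem dist_le_of_mem_cell {m : ℤ × ℤ} {a b : ℝ × ℝ} (ha : a ∈ cell m) (hb : b ∈ cell m) :
    dist a b ≤ 1 := by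
  obtain ⟨h1, h2⟩ := ha
  obtain ⟨h3, h4⟩ := hb
  rw [Prod.dist_eq, Real.dist_eq, Real.dist_eq]
  rw [abs_le] at *
  refine max_le ?_ ?_ <;> rw [abs_le] <;> constructor <;> linarith

theorem int_close {x : ℝ} {m n : ℤ} (hm : |x - m| ≤ 1 / 2) (hn : |x - n| ≤ 1 / 2) :
    m = n ∨ |m - n| = 1 := by
  rw [abs_le] at hm hn
  have h1 : ((m - n : ℤ) : ℝ) ≤ (1 : ℤ) := by push_cast; linarith
  have h2 : ((-1 : ℤ) : ℝ) ≤ ((m - n : ℤ) : ℝ) := by push_cast; linarith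
  rw [Int.cast_le] at h1 h2
  rw [abs_eq (by norm_num)]
  omega

theorem finite_cells {T : Set (ℝ × ℝ)} (hT : Bornology.IsBounded T) : (cells T).Finite := by
  obtain ⟨R, hR⟩ := hT.subset_closedBall 0
  refine (Set.finite_Icc ((-⌈R + 1⌉, -⌈R + 1⌉) : ℤ × ℤ) (⌈R + 1⌉, ⌈R + 1⌉)).subset ?_
  rintro ⟨m, n⟩ ⟨a, ha, h1, h2⟩
  have := hR ha
  rw [mem_closedBall_zero_iff, Prod.norm_def, max_le_iff, Real.norm_eq_abs, Real.norm_eq_abs] at this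
  obtain ⟨h3, h4⟩ := this
  have h5 := Int.le_ceil (R + 1)
  rw [abs_le] at h1 h2 h3 h4
  simp only at h1 h2
  have e1 : ((-⌈R + 1⌉ : ℤ) : ℝ) ≤ m := by push_cast; linarith
  have e2 : ((-⌈R + 1⌉ : ℤ) : ℝ) ≤ n := by push_cast; linarith
  have e3 : (m : ℝ) ≤ (⌈R + 1⌉ : ℤ) := by linarith
  have e4 : (n : ℝ) ≤ (⌈R + 1⌉ : ℤ) := by linarith
  rw [Int.cast_le] at e1 e2 e3 e4
  exact ⟨⟨e1, e2⟩, ⟨e3, e4⟩⟩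

/-- The squares met by a connected set are connected in the grid, diagonal contacts being resolved
through a third square containing the contact point. -/
theorem cells_linked {Γ : SimpleGraph (ℤ × ℤ)} {T : Set (ℝ × ℝ)} (hT : IsPreconnected T)
    (hfin : (cells T).Finite)
    (hΓ : ∀ m ∈ cells T, ∀ n ∈ cells T, gridAdj m n → Γ.Adj m n) :
    ∀ m ∈ cells T, ∀ n ∈ cells T, LinkedIn Γ (cells T) m n := by
  intro m hm
  by_contra! hno
  obtain ⟨n, hn, hmn⟩ := hno
  let A : Set (ℤ × ℤ) := {u | LinkedIn Γ (cells T) m u}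
  let B : Set (ℤ × ℤ) := cells T \ A
  have hA : A ⊆ cells T := fun u hu => LinkedIn.right_mem hu
  have hcl : ∀ D ⊆ cells T, IsClosed (⋃ u ∈ D, cell u) := fun D hD =>
    (hfin.subset hD).isClosed_biUnion fun u _ => isClosed_cell u
  have hne : ∀ D : Set (ℤ × ℤ), ∀ u ∈ D, u ∈ cells T → (T ∩ ⋃ u ∈ D, cell u).Nonempty := by
    rintro D u hu ⟨a, ha, hau⟩
    exact ⟨a, ha, Set.mem_biUnion hu hau⟩
  obtain ⟨a, haT, haA, haB⟩ := isPreconnected_closed_iff.1 hT _ _ (hcl A hA)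
    (hcl B Set.sdiff_subset) (by
      intro a ha
      have hc : (round a.1, round a.2) ∈ cells T := ⟨a, ha, mem_cell_round a⟩
      by_cases h : (round a.1, round a.2) ∈ A
      · exact Or.inl (Set.mem_biUnion h (mem_cell_round a))
      · exact Or.inr (Set.mem_biUnion (show _ ∈ B from ⟨hc, h⟩) (mem_cell_round a)))
    (hne A m (LinkedIn.refl hm) hm) (hne B n ⟨hn, hmn⟩ hn)
  simp only [Set.mem_iUnion, exists_prop] at haA haB
  obtain ⟨u, hu, hau⟩ := haA
  obtain ⟨v, ⟨hv, hvA⟩, hav⟩ := haB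
  -- the point `a` lies in both squares, hence also in the corner square between them
  have hc : (u.1, v.2) ∈ cells T := ⟨a, haT, hau.1, hav.2⟩
  apply hvA
  have h1 : LinkedIn Γ (cells T) u (u.1, v.2) := by
    rcases int_close hau.2 hav.2 with h | h
    · rw [← h]; exact .refl (hA hu)
    · exact .of_adj (hA hu) hc (hΓ _ (hA hu) _ hc (Or.inl ⟨rfl, h⟩))
  have h2 : LinkedIn Γ (cells T) (u.1, v.2) v := by
    rcases int_close hau.1 hav.1 with h | h
    · rw [h]; exact .refl hv
    · exact .of_adj hc hv (hΓ _ hc _ hv (Or.inr ⟨rfl, h⟩))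
  exact (LinkedIn.trans hu h1).trans h2

theorem exists_separation {ι : Type*} [Finite ι] {S : ι → Set (ℝ × ℝ)}
    (hS : ∀ i, IsCompact (S i)) : ∃ δ : ℝ, 0 < δ ∧ ∀ i j, ¬ (S i ∩ S j).Nonempty →
      ∀ a ∈ S i, ∀ b ∈ S j, δ < dist a b := by
  have key : ∀ ij : ι × ι, ∃ δ : ℝ, 0 < δ ∧ (¬ (S ij.1 ∩ S ij.2).Nonempty →
      ∀ a ∈ S ij.1, ∀ b ∈ S ij.2, δ < dist a b) := by
    rintro ⟨i, j⟩
    by_cases h : (S i ∩ S j).Nonempty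
    · exact ⟨1, one_pos, fun h' => absurd h h'⟩
    · obtain ⟨r, hr, hlt⟩ := Metric.exists_pos_forall_lt_edist (hS i) (hS j).isClosed
        (Set.disjoint_iff_inter_eq_empty.2 (Set.not_nonempty_iff_eq_empty.1 h))
      refine ⟨r, hr, fun _ a ha b hb => ?_⟩
      have := hlt a ha b hb
      rw [edist_nndist, ENNReal.coe_lt_coe] at this
      exact_mod_cast this
  choose δ hδ hlt using key
  rcases isEmpty_or_nonempty ι with h | h
  · exact ⟨1, one_pos, fun i => (h.false i).elim⟩
  · obtain ⟨ij, hij⟩ := Finite.exists_min δ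
    exact ⟨δ ij, hδ ij, fun i j h a ha b hb => (hij (i, j)).trans_lt (hlt (i, j) h a ha b hb)⟩

/-- Replacing strings by the squares of a fine grid which they meet turns a string representation
into a `ConnRep` over a subgraph of the grid. -/
theorem not_isString_rep {V : Type*} [Fintype V] [Nonempty V] {G : SimpleGraph V}
    [DecidableRel G.Adj] (hgirth : 5 ≤ G.egirth) (hdeg : 16 ≤ G.minDegree)
    {S : V → Set (ℝ × ℝ)} (hS : ∀ v, IsString (S v))
    (hadj : ∀ u v, G.Adj u v ↔ u ≠ v ∧ (S u ∩ S v).Nonempty) : False := by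
  have hcomp : ∀ v, IsCompact (S v) := by
    intro v
    obtain ⟨f, hf, h⟩ := hS v
    rw [h]; exact isCompact_Icc.image_of_continuousOn hf
  have hpre : ∀ v, IsPreconnected (S v) := by
    intro v
    obtain ⟨f, hf, h⟩ := hS v
    rw [h]; exact isPreconnected_Icc.image f hf
  have hne : ∀ v, (S v).Nonempty := by
    intro v
    obtain ⟨f, hf, h⟩ := hS v
    rw [h]; exact ⟨f 0, 0, by simp, rfl⟩
  obtain ⟨δ, hδ, hsep⟩ := exists_separation hcomp
  -- rescale so that disjoint strings are at distance more than `1`, the diameter of a cell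
  let T : V → Set (ℝ × ℝ) := fun v => (fun a => δ⁻¹ • a) '' S v
  have hcont : Continuous fun a : ℝ × ℝ => δ⁻¹ • a := continuous_const_smul _
  have hTcomp : ∀ v, IsCompact (T v) := fun v => (hcomp v).image hcont
  have hfin : ∀ v, (cells (T v)).Finite := fun v => finite_cells (hTcomp v).isBounded
  let Γ : SimpleGraph (ℤ × ℤ) :=
    { Adj := fun m n => gridAdj m n ∧ ∃ v, m ∈ cells (T v) ∧ n ∈ cells (T v)
      symm := ⟨fun _ _ h => ⟨h.1.symm, h.2.imp fun _ h => h.symm⟩⟩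
      loopless := ⟨fun _ h => by simp [gridAdj] at h⟩ }
  have hinter : ∀ u v, (S u ∩ S v).Nonempty ↔ (cells (T u) ∩ cells (T v)).Nonempty := by
    intro u v
    constructor
    · rintro ⟨a, hau, hav⟩
      exact ⟨_, ⟨_, ⟨a, hau, rfl⟩, mem_cell_round _⟩, ⟨_, ⟨a, hav, rfl⟩, mem_cell_round _⟩⟩
    · rintro ⟨m, ⟨_, ⟨a, ha, rfl⟩, ham⟩, ⟨_, ⟨b, hb, rfl⟩, hbm⟩⟩
      by_contra h
      have h1 := hsep u v h a ha b hb
      have h2 := dist_le_of_mem_cell ham hbm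
      simp only at h2
      rw [dist_smul₀, Real.norm_eq_abs, abs_of_pos (inv_pos.2 hδ), inv_mul_le_iff₀ hδ] at h2
      linarith
  have R : ConnRep G Γ fun v => cells (T v) :=
    { conn := fun v => cells_linked ((hpre v).image _ hcont.continuousOn) (hfin v)
        fun m hm n hn h => ⟨h, v, hm, hn⟩
      nonempty := fun v => by
        obtain ⟨a, ha⟩ := hne v
        exact ⟨_, _, ⟨a, ha, rfl⟩, mem_cell_round _⟩
      adj := fun u v => by rw [hadj, hinter]
      edge := fun _ _ h => h.2
      no_triangle := no_triangle_of_girth hgirth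
      no_square := fun _ _ _ _ => eq_of_common_neighbors hgirth
      degree := fun v => by
        rw [← Nat.card_coe_set_eq, Nat.card_eq_fintype_card, G.card_neighborSet_eq_degree]
        exact hdeg.trans (G.minDegree_le_degree v) }
  exact R.false hfin (k33Free_of_gridAdj fun _ _ h => h.1)

end Discretization

/-- Every finite connected graph of girth at least 5 and minimum degree at least 16 has
cop number greater than 15, and consequently is not a string graph. -/
theorem copNumber_gt_fifteen_of_girth_minDegree (V : Type) [Fintype V]
    (G : SimpleGraph V) [DecidableRel G.Adj] (hconn : G.Connected)
    (hgirth : 5 ≤ G.egirth) (hdeg : 16 ≤ G.minDegree) :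
    15 < copNumber G ∧
      ¬ ∃ S : V → Set (ℝ × ℝ), (∀ v, IsString (S v)) ∧
        ∀ u v, G.Adj u v ↔ u ≠ v ∧ (S u ∩ S v).Nonempty := by
  have := hconn.nonempty
  exact ⟨fifteen_lt_copNumber hgirth hdeg, fun ⟨_, hS, hadj⟩ =>
    not_isString_rep hgirth hdeg hS hadj⟩
end
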